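/- arXiv:0708.1711 — 7 statements merged into one kernel-verified Lean document; each statement's English description precedes it below -/
import Mathlib

section
/- Let F be an algebraically closed field of characteristic 0, let g be a finite-dimensional simple Lie algebra over F, let x ∈ g be a nonzero element, and let f_1, …, f_n be finitely many nonzero linear forms on g. Then there exists an automorphism σ of the Lie algebra g (an F-linear Lie algebra isomorphism g → g) such that f_i(σ(x)) ≠ 0 for all i ∈ {1, …, n}. -/
/-!
The automorphisms `exp (t • ad n)`, with `ad n` nilpotent, generate a large enough group. Along a
line `t ↦ exp (t • ad n) v` a linear form is polynomial in `t`, so finitely many forms, none of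
which vanishes on the whole line, are nonzero at a common point of it. Walking through a word of
exponentials one letter at a time, one sees that orbits are irreducible: if none of finitely many
forms vanishes on a whole orbit, then some point of the orbit avoids all their kernels.

For a linear form `f ≠ 0`, the vectors whose orbit lies in `ker f` form a proper subspace, which by
differentiation at `t = 0` is stable under the ad-nilpotent elements. If these generate `g`, it is
an ideal, hence zero. They do generate `g`, because already the root vectors do: the subalgebra
they generate is normalized by the Cartan subalgebra and by itself, hence is an ideal, and it is
nonzero since `g` is not nilpotent.
-/

open Polynomial

section PolynomialLines

theorem exists_forall_eval_ne_zero {R ι : Type*} [CommRing R] [IsDomain R] [Infinite R]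
    {s : Set ι} (hs : s.Finite) {p : ι → R[X]} (hp : ∀ i ∈ s, p i ≠ 0) :
    ∃ t, ∀ i ∈ s, (p i).eval t ≠ 0 := by
  have hprod : ∏ i ∈ hs.toFinset, p i ≠ 0 := by simpa [Finset.prod_ne_zero_iff] using hp
  obtain ⟨t, ht⟩ : ∃ t, (∏ i ∈ hs.toFinset, p i).eval t ≠ 0 := by
    by_contra! h
    exact hprod (Polynomial.funext fun t => by simpa using h t)
  exact ⟨t, by simpa [eval_prod, Finset.prod_ne_zero_iff] using ht⟩

variable {R V : Type*} [CommRing R] [AddCommGroup V] [Module R V] [Module ℚ V]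

theorem exists_polynomial_eval_eq_apply_exp_smul {n : Module.End R V} (hn : IsNilpotent n)
    (f : Module.Dual R V) (v : V) :
    ∃ p : R[X], (∀ t, p.eval t = f (IsNilpotent.exp (t • n) v)) ∧ p.coeff 1 = f (n v) := by
  obtain ⟨m, hm⟩ := hn
  -- `m + 2` rather than `m`: the sum must reach the term linear in `t`.
  have hm' : n ^ (m + 2) = 0 := pow_eq_zero_of_le (by omega) hm
  refine ⟨∑ i ∈ Finset.range (m + 2), C (f ((i.factorial : ℚ)⁻¹ • (n ^ i) v)) * X ^ i,
    fun t => ?_, by simp [finsetSum_coeff, coeff_X_pow]⟩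
  have hexp : IsNilpotent.exp (t • n) =
      ∑ i ∈ Finset.range (m + 2), (i.factorial : ℚ)⁻¹ • (t • n) ^ i :=
    IsNilpotent.exp_eq_sum (by rw [_root_.smul_pow, hm', smul_zero])
  simp only [hexp, eval_finsetSum, LinearMap.sum_apply, map_sum]
  refine Finset.sum_congr rfl fun i _ => ?_
  rw [eval_C_mul, eval_X_pow, _root_.smul_pow, LinearMap.smul_apply, LinearMap.smul_apply,
    smul_comm, map_smul f (t ^ i), smul_eq_mul, mul_comm]

theorem exists_forall_apply_exp_smul_ne_zero [IsDomain R] [Infinite R]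
    {n : Module.End R V} (hn : IsNilpotent n) {S : Set (Module.Dual R V)} (hS : S.Finite) {v : V}
    (h : ∀ f ∈ S, ∃ t : R, f (IsNilpotent.exp (t • n) v) ≠ 0) :
    ∃ t : R, ∀ f ∈ S, f (IsNilpotent.exp (t • n) v) ≠ 0 := by
  choose p hp _ using fun f => exists_polynomial_eval_eq_apply_exp_smul hn f v
  have hp_ne : ∀ f ∈ S, p f ≠ 0 := fun f hf hpf => by
    obtain ⟨t, ht⟩ := h f hf
    exact ht (by rw [← hp, hpf, eval_zero])
  simpa only [hp] using exists_forall_eval_ne_zero hS hp_ne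

end PolynomialLines

section ExpMonoid

variable {R V : Type*} [CommRing R] [AddCommGroup V] [Module R V] [Module ℚ V]

/-- The monoid generated by the one-parameter families `exp (t • n)`, `t ∈ R`, `n ∈ N`.
It is meant for sets `N` of nilpotent endomorphisms, since `IsNilpotent.exp` takes the junk value
`0` elsewhere; it is then closed under inverses, so that it stands for the group generated by these
unipotent endomorphisms. -/
def expMonoid (N : Set (Module.End R V)) : Submonoid (Module.End R V) :=
  Submonoid.closure {u | ∃ n ∈ N, ∃ t : R, IsNilpotent.exp (t • n) = u}

variable {N : Set (Module.End R V)}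

theorem exp_smul_mem_expMonoid {n : Module.End R V} (hn : n ∈ N) (t : R) :
    IsNilpotent.exp (t • n) ∈ expMonoid N :=
  Submonoid.subset_closure ⟨n, hn, t, rfl⟩

theorem exists_mul_eq_one_of_mem_expMonoid (hN : ∀ n ∈ N, IsNilpotent n) {u : Module.End R V}
    (hu : u ∈ expMonoid N) : ∃ w ∈ expMonoid N, w * u = 1 := by
  induction hu using Submonoid.closure_induction with
  | mem u hu =>
    obtain ⟨n, hn, t, rfl⟩ := hu
    refine ⟨_, exp_smul_mem_expMonoid hn (-t), ?_⟩
    rw [neg_smul, IsNilpotent.exp_neg_mul_exp_self ((hN n hn).smul t)]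
  | one => exact ⟨1, one_mem _, one_mul 1⟩
  | mul u₁ u₂ _ _ ih₁ ih₂ =>
    obtain ⟨w₁, hw₁, hwu₁⟩ := ih₁
    obtain ⟨w₂, hw₂, hwu₂⟩ := ih₂
    exact ⟨w₂ * w₁, mul_mem hw₂ hw₁, by rw [mul_assoc, ← mul_assoc w₁, hwu₁, one_mul, hwu₂]⟩

variable [IsDomain R] [Infinite R]

theorem exists_mem_expMonoid_forall_mem_insert_apply_ne_zero (hN : ∀ n ∈ N, IsNilpotent n)
    {S : Set (Module.Dual R V)} (hS : S.Finite) {f₀ : Module.Dual R V} {u : Module.End R V}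
    (hu : u ∈ expMonoid N) {v : V} (hv : ∀ f ∈ S, f v ≠ 0) (huv : f₀ (u v) ≠ 0) :
    ∃ w ∈ expMonoid N, ∀ f ∈ insert f₀ S, f (w v) ≠ 0 := by
  induction hu using Submonoid.closure_induction_right generalizing v with
  | one => exact ⟨1, one_mem _, Set.forall_mem_insert.2 ⟨huv, hv⟩⟩
  | mul_right u _ e he ih =>
    obtain ⟨n, hn, t₀, rfl⟩ := he
    obtain ⟨t, ht⟩ : ∃ t : R, ∀ f ∈ insert (f₀ ∘ₗ u) S, f (IsNilpotent.exp (t • n) v) ≠ 0 := by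
      refine exists_forall_apply_exp_smul_ne_zero (hN n hn) (hS.insert _) ?_
      exact Set.forall_mem_insert.2 ⟨⟨t₀, huv⟩, fun f hf => ⟨0, by simpa using hv f hf⟩⟩
    obtain ⟨hut, hSt⟩ := Set.forall_mem_insert.1 ht
    obtain ⟨w, hw, hwt⟩ := ih hSt hut
    exact ⟨w * IsNilpotent.exp (t • n), mul_mem hw (exp_smul_mem_expMonoid hn t), hwt⟩

theorem exists_mem_expMonoid_forall_apply_ne_zero (hN : ∀ n ∈ N, IsNilpotent n)
    {S : Set (Module.Dual R V)} (hS : S.Finite) {v : V}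
    (h : ∀ f ∈ S, ∃ u ∈ expMonoid N, f (u v) ≠ 0) :
    ∃ u ∈ expMonoid N, ∀ f ∈ S, f (u v) ≠ 0 := by
  induction S, hS using Set.Finite.induction_on with
  | empty => exact ⟨1, one_mem _, by simp⟩
  | @insert f₀ S _ hS ih =>
    obtain ⟨⟨u₀, hu₀, hu₀v⟩, hrest⟩ := Set.forall_mem_insert.1 h
    obtain ⟨u, hu, huv⟩ := ih hrest
    obtain ⟨u', hu', hinv⟩ := exists_mul_eq_one_of_mem_expMonoid hN hu
    have hback : (u₀ * u') (u v) = u₀ v := by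
      rw [← Module.End.mul_apply, mul_assoc, hinv, mul_one]
    obtain ⟨w, hw, hwv⟩ := exists_mem_expMonoid_forall_mem_insert_apply_ne_zero hN hS
      (mul_mem hu₀ hu') huv (by rwa [hback])
    exact ⟨w * u, mul_mem hw hu, hwv⟩

theorem exists_mem_expMonoid_apply_ne_zero (hN : ∀ n ∈ N, IsNilpotent n)
    (hirr : ∀ W : Submodule R V, (∀ n ∈ N, W ∈ n.invtSubmodule) → W = ⊥ ∨ W = ⊤)
    {f : Module.Dual R V} (hf : f ≠ 0) {v : V} (hv : v ≠ 0) :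
    ∃ u ∈ expMonoid N, f (u v) ≠ 0 := by
  let W : Submodule R V := ⨅ u ∈ expMonoid N, LinearMap.ker (f ∘ₗ u)
  have mem_W {w : V} : w ∈ W ↔ ∀ u ∈ expMonoid N, f (u w) = 0 := by simp [W]
  have hW : ∀ n ∈ N, W ∈ n.invtSubmodule := fun n hn w hw => mem_W.2 fun u hu => by
    obtain ⟨p, hp, hp₁⟩ := exists_polynomial_eval_eq_apply_exp_smul (hN n hn) (f ∘ₗ u) w
    have hp₀ : p = 0 := Polynomial.funext fun t => by
      rw [hp, eval_zero]
      exact mem_W.1 hw _ (mul_mem hu (exp_smul_mem_expMonoid hn t))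
    simpa [hp₀] using hp₁.symm
  by_contra! h
  rcases hirr W hW with hbot | htop
  · exact hv ((Submodule.mem_bot R).1 (hbot ▸ mem_W.2 h))
  · exact hf (LinearMap.ext fun w => mem_W.1 (htop ▸ Submodule.mem_top) 1 (one_mem _))

end ExpMonoid

section LieSpan

variable {R L M : Type*} [CommRing R] [LieRing L] [LieAlgebra R L] [AddCommGroup M] [Module R M]
  [LieRingModule L M] [LieModule R L M]

theorem lie_mem_of_mem_lieSpan {s : Set L} {W : Submodule R M}
    (hs : ∀ x ∈ s, ∀ w ∈ W, ⁅x, w⁆ ∈ W) {x : L} (hx : x ∈ LieSubalgebra.lieSpan R L s) :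
    ∀ w ∈ W, ⁅x, w⁆ ∈ W := by
  induction hx using LieSubalgebra.lieSpan_induction with
  | mem x hx => exact hs x hx
  | zero => simp
  | add x y _ _ hx hy => exact fun w hw => add_lie x y w ▸ W.add_mem (hx w hw) (hy w hw)
  | smul c x _ hx => exact fun w hw => smul_lie c x w ▸ W.smul_mem c (hx w hw)
  | lie x y _ _ hx hy =>
    exact fun w hw => lie_lie x y w ▸ W.sub_mem (hx _ (hy w hw)) (hy _ (hx w hw))

theorem mem_normalizer_lieSpan {s : Set L} {x : L} :
    x ∈ (LieSubalgebra.lieSpan R L s).normalizer ↔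
      ∀ y ∈ s, ⁅x, y⁆ ∈ LieSubalgebra.lieSpan R L s := by
  rw [LieSubalgebra.mem_normalizer_iff]
  refine ⟨fun h y hy => h y (LieSubalgebra.subset_lieSpan hy), fun h y hy => ?_⟩
  induction hy using LieSubalgebra.lieSpan_induction with
  | mem y hy => exact h y hy
  | zero => simp
  | add y z _ _ hy hz => exact lie_add x y z ▸ add_mem hy hz
  | smul c y _ hy => exact lie_smul c x y ▸ LieSubalgebra.smul_mem _ c hy
  | lie y z hy' hz' hy hz =>
    exact leibniz_lie x y z ▸
      add_mem (LieSubalgebra.lie_mem _ hy hz') (LieSubalgebra.lie_mem _ hy' hz)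

end LieSpan

section RootSubalgebra

open LieAlgebra

theorem not_isNilpotent_of_isSimple (R : Type*) {g : Type*} [CommRing R] [LieRing g]
    [LieAlgebra R g] [IsSimple R g] : ¬ LieRing.IsNilpotent g := fun _ =>
  top_ne_bot (HasTrivialRadical.eq_bot_of_isSolvable (R := R) (⊤ : LieIdeal R g))

variable {R g : Type*} [CommRing R] [LieRing g] [LieAlgebra R g]

/-- The subalgebra generated by the generalized root spaces of `H` for nonzero roots. -/
def rootSubalgebra (H : LieSubalgebra R g) [LieRing.IsNilpotent H] : LieSubalgebra R g :=
  LieSubalgebra.lieSpan R g {y | ∃ χ : H → R, χ ≠ 0 ∧ y ∈ rootSpace H χ}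

variable {H : LieSubalgebra R g}

theorem rootSpace_le_rootSubalgebra [LieRing.IsNilpotent H] {χ : H → R} (hχ : χ ≠ 0) :
    (rootSpace H χ).toSubmodule ≤ (rootSubalgebra H).toSubmodule := fun _ hy =>
  LieSubalgebra.subset_lieSpan ⟨χ, hχ, hy⟩

theorem le_normalizer_rootSubalgebra [LieRing.IsNilpotent H] :
    H ≤ (rootSubalgebra H).normalizer := fun h hh =>
  mem_normalizer_lieSpan.2 fun _ ⟨χ, hχ, hy⟩ =>
    rootSpace_le_rootSubalgebra hχ ((rootSpace H χ).lie_mem (x := (⟨h, hh⟩ : H)) hy)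

end RootSubalgebra

section TriangularizableCartan

open LieAlgebra

variable {F g : Type*} [Field F] [LieRing g] [LieAlgebra F g] {H : LieSubalgebra F g}
  [FiniteDimensional F g] [H.IsCartanSubalgebra] [LieModule.IsTriangularizable F H g]

theorem eq_top_of_le_of_forall_rootSpace_le {W : Submodule F g} (hH : H.toSubmodule ≤ W)
    (hW : ∀ χ : H → F, χ ≠ 0 → (rootSpace H χ).toSubmodule ≤ W) : W = ⊤ := by
  rw [eq_top_iff, ← LieSubmodule.top_toSubmodule (R := F) (L := H),
    ← LieModule.iSup_genWeightSpace_eq_top F H g, LieSubmodule.iSup_toSubmodule]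
  refine iSup_le fun χ => ?_
  rcases eq_or_ne χ 0 with rfl | hχ
  · exact (congrArg LieSubmodule.toSubmodule (rootSpace_zero_eq F g H)).trans_le hH
  · exact hW χ hχ

theorem normalizer_rootSubalgebra : (rootSubalgebra H).normalizer = ⊤ := by
  rw [← LieSubalgebra.toSubmodule_inj, LieSubalgebra.top_toSubmodule]
  exact eq_top_of_le_of_forall_rootSpace_le (H := H) le_normalizer_rootSubalgebra fun χ hχ =>
    (rootSpace_le_rootSubalgebra hχ).trans (rootSubalgebra H).le_normalizer

theorem rootSubalgebra_ne_bot [IsSimple F g] : rootSubalgebra H ≠ ⊥ := by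
  intro hbot
  have hHtop : H = ⊤ := by
    rw [← LieSubalgebra.toSubmodule_inj, LieSubalgebra.top_toSubmodule]
    refine eq_top_of_le_of_forall_rootSpace_le le_rfl fun χ hχ => ?_
    exact (rootSpace_le_rootSubalgebra hχ).trans (by simp [hbot])
  have hnil : LieRing.IsNilpotent H := inferInstance
  rw [hHtop, LieEquiv.nilpotent_iff_equiv_nilpotent LieSubalgebra.topEquiv] at hnil
  exact not_isNilpotent_of_isSimple F hnil

theorem rootSubalgebra_eq_top [IsSimple F g] : rootSubalgebra H = ⊤ := by
  let I : LieIdeal F g :=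
    { (rootSubalgebra H).toSubmodule with
      lie_mem := fun {x y} =>
        (LieSubalgebra.mem_normalizer_iff _ x).1 (normalizer_rootSubalgebra (H := H) ▸ trivial) y }
  have hI : I.toSubmodule = (rootSubalgebra H).toSubmodule := rfl
  rcases eq_bot_or_eq_top I with h | h
  · exact absurd (by simpa [h] using hI.symm) (rootSubalgebra_ne_bot (H := H))
  · simpa [h] using hI.symm

end TriangularizableCartan

section Automorphisms

open LieAlgebra

variable {R g : Type*} [CommRing R] [LieRing g] [LieAlgebra R g]

theorem exists_lieEquiv_of_mem_expMonoid [LieAlgebra ℚ g] {u : Module.End R g}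
    (hu : u ∈ expMonoid (ad R g '' {n | IsNilpotent (ad R g n)})) :
    ∃ σ : g ≃ₗ⁅R⁆ g, ∀ y, σ y = u y := by
  induction hu using Submonoid.closure_induction with
  | mem u hu =>
    obtain ⟨_, ⟨n, hn, rfl⟩, t, rfl⟩ := hu
    have had : (t • LieDerivation.ad R g n).toLinearMap = t • ad R g n := by ext; simp
    refine ⟨LieDerivation.exp (t • LieDerivation.ad R g n) (had ▸ hn.smul t), fun y => ?_⟩
    rw [LieDerivation.exp_map_apply, had]
  | one => exact ⟨LieEquiv.refl, fun _ => rfl⟩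
  | mul u₁ u₂ _ _ ih₁ ih₂ =>
    obtain ⟨σ₁, hσ₁⟩ := ih₁
    obtain ⟨σ₂, hσ₂⟩ := ih₂
    exact ⟨σ₂.trans σ₁, fun y => by rw [LieEquiv.trans_apply, hσ₂, hσ₁, Module.End.mul_apply]⟩

theorem eq_bot_or_eq_top_of_forall_ad_invt [LieModule.IsIrreducible R g g] {s : Set g}
    (hs : LieSubalgebra.lieSpan R g s = ⊤) {W : Submodule R g}
    (hW : ∀ u ∈ ad R g '' s, W ∈ u.invtSubmodule) : W = ⊥ ∨ W = ⊤ := by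
  let I : LieIdeal R g :=
    { W with
      lie_mem := fun {x y} hy =>
        lie_mem_of_mem_lieSpan (fun z hz => hW _ ⟨z, hz, rfl⟩) (hs ▸ LieSubalgebra.mem_top x) y hy }
  have hI : I.toSubmodule = W := rfl
  exact (eq_bot_or_eq_top I).imp (fun h => by simp [← hI, h]) (fun h => by simp [← hI, h])

end Automorphisms

section AdNilpotentGeneration

open LieAlgebra

variable {F g : Type*} [Field F] [LieRing g] [LieAlgebra F g]

theorem lieSpan_isNilpotent_ad_eq_top [CharZero F] [FiniteDimensional F g] [IsSimple F g]
    (H : LieSubalgebra F g) [H.IsCartanSubalgebra] [LieModule.IsTriangularizable F H g] :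
    LieSubalgebra.lieSpan F g {n | IsNilpotent (ad F g n)} = ⊤ :=
  top_le_iff.1 <| rootSubalgebra_eq_top (H := H) ▸
    LieSubalgebra.lieSpan_mono fun _ ⟨_, hχ, hn⟩ => isNilpotent_ad_of_mem_rootSpace H hχ hn

theorem exists_automorphism_moving_off_kernels_general [CharZero F] [LieModule.IsIrreducible F g g]
    (hgen : LieSubalgebra.lieSpan F g {n | IsNilpotent (ad F g n)} = ⊤)
    {x : g} (hx : x ≠ 0) {ι : Type*} [Finite ι] {f : ι → Module.Dual F g} (hf : ∀ i, f i ≠ 0) :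
    ∃ σ : g ≃ₗ⁅F⁆ g, ∀ i, f i (σ x) ≠ 0 := by
  let _ : LieAlgebra ℚ g := LieAlgebra.RestrictScalars.lieAlgebra ℚ F g
  have hnil : ∀ u ∈ ad F g '' {n | IsNilpotent (ad F g n)}, IsNilpotent u :=
    Set.forall_mem_image.2 fun _ => id
  obtain ⟨u, hu, hux⟩ := exists_mem_expMonoid_forall_apply_ne_zero hnil (Set.finite_range f)
    (Set.forall_mem_range.2 fun i => exists_mem_expMonoid_apply_ne_zero hnil
      (fun _ => eq_bot_or_eq_top_of_forall_ad_invt hgen) (hf i) hx)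
  obtain ⟨σ, hσ⟩ := exists_lieEquiv_of_mem_expMonoid hu
  exact ⟨σ, fun i => hσ x ▸ hux (f i) (Set.mem_range_self i)⟩

end AdNilpotentGeneration

/-- Let `g` be a finite-dimensional simple Lie algebra over an algebraically
closed field of characteristic 0, `x ≠ 0`, and `f₁, …, fₙ` nonzero linear forms on `g`.
Then some automorphism `σ` of `g` satisfies `fᵢ(σ x) ≠ 0` for all `i`. -/
theorem exists_automorphism_moving_off_kernels
    (F : Type) [Field F] [IsAlgClosed F] [CharZero F]
    (g : Type) [LieRing g] [LieAlgebra F g] [FiniteDimensional F g] [LieAlgebra.IsSimple F g]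
    (x : g) (hx : x ≠ 0) (n : ℕ) (f : Fin n → (g →ₗ[F] F)) (hf : ∀ i, f i ≠ 0) :
    ∃ σ : g ≃ₗ⁅F⁆ g, ∀ i, f i (σ x) ≠ 0 := by
  obtain ⟨y, _⟩ := LieAlgebra.exists_isCartanSubalgebra_engel F g
  exact exists_automorphism_moving_off_kernels_general
    (lieSpan_isNilpotent_ad_eq_top (LieSubalgebra.engel F y)) hx hf
end

section
/- Let F be an algebraically closed field of characteristic 0 and let g be a finite-dimensional simple Lie algebra over F. Then g is generated by one and a half elements: for every nonzero x ∈ g there exists y ∈ g such that the smallest Lie subalgebra of g containing x and y is g itself. -/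
/-!
Let `Int g` be the group generated by the automorphisms `exp (ad e)` with `ad e` nilpotent, and let
`H` be a splitting Cartan subalgebra of `g`.

* A regular element `h` of `H` together with any element having a nonzero component in every root
  space generates `g`: polynomials in `ad h` isolate the components, these span the
  one-dimensional root spaces, and the root spaces generate `g`.
* Every `x ≠ 0` has a conjugate under `Int g` of this kind. A subspace stable under `Int g` is
  stable under every nilpotent `ad e`, the linear coefficient of the curve `exp (t • ad e)`, hence
  is an ideal. So the orbit of `x` spans `g`, and no single component vanishes on the whole orbit.
  Any two elements of `Int g` are joined by a polynomial curve inside `Int g`, along which a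
  component that is not identically zero has only finitely many zeros; so finitely many components
  can be made nonzero simultaneously.
-/

namespace OneAndHalf

open LieAlgebra LieModule Module Polynomial

section PolynomialCurves

variable {F V : Type*} [Field F] [AddCommGroup V] [Module F V]

lemma exists_polynomial_apply_eval (P : (End F V)[X]) (f : Dual F V) (x : V) :
    ∃ p : F[X], (∀ i, p.coeff i = f (P.coeff i x)) ∧
      ∀ t : F, p.eval t = f (P.eval (algebraMap F (End F V) t) x) := by
  refine ⟨∑ i ∈ P.support, monomial i (f (P.coeff i x)), fun i ↦ ?_, fun t ↦ ?_⟩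
  · rw [finsetSum_coeff]
    simp only [coeff_monomial, Finset.sum_ite_eq', ite_eq_left_iff,
      Polynomial.notMem_support_iff]
    intro h
    rw [h, LinearMap.zero_apply, map_zero]
  · rw [eval_finsetSum, eval_eq_sum, Polynomial.sum, LinearMap.sum_apply, map_sum]
    refine Finset.sum_congr rfl fun i _ ↦ ?_
    rw [eval_monomial, ← map_pow, Module.End.mul_apply, Module.algebraMap_end_apply, map_smul,
      map_smul, smul_eq_mul, mul_comm]

lemma coeff_apply_mem_of_forall_eval_apply_mem [Infinite F] {P : (End F V)[X]} {x : V}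
    {W : Submodule F V} (h : ∀ t : F, P.eval (algebraMap F (End F V) t) x ∈ W) (i : ℕ) :
    P.coeff i x ∈ W := by
  by_contra hi
  obtain ⟨f, hf, hWf⟩ := Submodule.exists_le_ker_of_notMem hi
  obtain ⟨p, hp_coeff, hp_eval⟩ := exists_polynomial_apply_eval P f x
  have hp : p = 0 := Polynomial.funext fun t ↦ by
    rw [hp_eval, eval_zero]
    exact hWf (h t)
  exact hf (by rw [← hp_coeff, hp, coeff_zero])

/-- Two linear automorphisms are joined in a group `G` if a polynomial curve `F → End V` with
values in `G` takes them as values at `0` and `1`. The curve is a polynomial with coefficients in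
the noncommutative ring `End V`, evaluated at scalars only. -/
def PolynomiallyJoined (G : Subgroup (V ≃ₗ[F] V)) (σ τ : V ≃ₗ[F] V) : Prop :=
  ∃ P : (End F V)[X],
    (∀ t : F, ∃ ρ ∈ G, P.eval (algebraMap F (End F V) t) = (ρ : V →ₗ[F] V)) ∧
      P.eval 0 = (σ : V →ₗ[F] V) ∧ P.eval 1 = (τ : V →ₗ[F] V)

/-- A group of linear automorphisms is polynomially connected if any two of its elements are
joined by a polynomial curve inside it. This plays the role of irreducibility in the Zariski
topology. -/
def IsPolynomiallyConnected (G : Subgroup (V ≃ₗ[F] V)) : Prop :=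
  ∀ σ ∈ G, ∀ τ ∈ G, PolynomiallyJoined G σ τ

variable {G : Subgroup (V ≃ₗ[F] V)} {σ τ σ' τ' : V ≃ₗ[F] V}

lemma PolynomiallyJoined.refl (hσ : σ ∈ G) : PolynomiallyJoined G σ σ :=
  ⟨C (σ : V →ₗ[F] V), fun _ ↦ ⟨σ, hσ, eval_C⟩, eval_C, eval_C⟩

lemma PolynomiallyJoined.mul (h : PolynomiallyJoined G σ τ) (h' : PolynomiallyJoined G σ' τ') :
    PolynomiallyJoined G (σ * σ') (τ * τ') := by
  obtain ⟨P, hP, hP₀, hP₁⟩ := h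
  obtain ⟨Q, hQ, hQ₀, hQ₁⟩ := h'
  have eval_mul (t : F) : (P * Q).eval (algebraMap F (End F V) t) =
      P.eval (algebraMap F (End F V) t) * Q.eval (algebraMap F (End F V) t) :=
    eval₂_mul_noncomm _ _ fun k ↦ Algebra.commute_algebraMap_right t (Q.coeff k)
  refine ⟨P * Q, fun t ↦ ?_, ?_, ?_⟩
  · obtain ⟨ρ, hρ, hPρ⟩ := hP t
    obtain ⟨ρ', hρ', hQρ'⟩ := hQ t
    exact ⟨ρ * ρ', mul_mem hρ hρ', by rw [eval_mul, hPρ, hQρ']; rfl⟩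
  · rw [← map_zero (algebraMap F (End F V)), eval_mul, map_zero, hP₀, hQ₀]
    rfl
  · rw [← map_one (algebraMap F (End F V)), eval_mul, map_one, hP₁, hQ₁]
    rfl

lemma isPolynomiallyConnected_closure {S : Set (V ≃ₗ[F] V)}
    (hS : ∀ σ ∈ S, PolynomiallyJoined (Subgroup.closure S) 1 σ ∧
      PolynomiallyJoined (Subgroup.closure S) 1 σ⁻¹) :
    IsPolynomiallyConnected (Subgroup.closure S) := by
  have joined_one : ∀ σ ∈ Subgroup.closure S, PolynomiallyJoined (Subgroup.closure S) 1 σ := by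
    intro σ hσ
    induction hσ using Subgroup.closure_induction'' with
    | mem σ hσ => exact (hS σ hσ).1
    | inv_mem σ hσ => exact (hS σ hσ).2
    | one => exact .refl (one_mem _)
    | mul σ τ _ _ hσ hτ => simpa only [mul_one] using hσ.mul hτ
  intro σ hσ τ hτ
  simpa only [one_mul, inv_mul_cancel_right] using
    (joined_one _ (mul_mem hτ (inv_mem hσ))).mul (.refl hσ)

lemma IsPolynomiallyConnected.exists_forall_apply_ne_zero [Infinite F]
    (hG : IsPolynomiallyConnected G) {ι : Type*} (f : ι → Dual F V) (x : V)
    (hf : ∀ i, ∃ σ ∈ G, f i (σ x) ≠ 0) (s : Finset ι) :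
    ∃ σ ∈ G, ∀ i ∈ s, f i (σ x) ≠ 0 := by
  classical
  induction s using Finset.induction_on with
  | empty => exact ⟨1, one_mem G, by simp⟩
  | insert j s _ ih =>
    obtain ⟨σ, hσG, hσ⟩ := ih
    obtain ⟨τ, hτG, hτ⟩ := hf j
    obtain ⟨P, hPG, hP₀, hP₁⟩ := hG σ hσG τ hτG
    choose p _ hp using fun i ↦ exists_polynomial_apply_eval P (f i) x
    have hp_ne_zero : ∀ i ∈ insert j s, p i ≠ 0 := by
      intro i hi hpi
      rcases Finset.mem_insert.1 hi with rfl | hi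
      · apply hτ
        simpa [hpi, hP₁] using (hp i 1).symm
      · apply hσ i hi
        simpa [hpi, hP₀] using (hp i 0).symm
    obtain ⟨t, ht⟩ : ∃ t, (∏ i ∈ insert j s, p i).eval t ≠ 0 := by
      by_contra! hzero
      exact Finset.prod_ne_zero_iff.2 hp_ne_zero
        (Polynomial.funext fun t ↦ (hzero t).trans eval_zero.symm)
    rw [eval_prod, Finset.prod_ne_zero_iff] at ht
    obtain ⟨ρ, hρG, hρ⟩ := hPG t
    exact ⟨ρ, hρG, fun i hi ↦ by simpa only [hp, hρ, LinearEquiv.coe_coe] using ht i hi⟩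

lemma exists_polynomial_eval_eq_exp {A : Type*} [Ring A] [Algebra F A] [CharZero F] [Module ℚ A]
    {a : A} (ha : IsNilpotent a) :
    ∃ P : A[X], P.coeff 1 = a ∧
      ∀ t : F, P.eval (algebraMap F A t) = IsNilpotent.exp (t • a) := by
  obtain ⟨k, hk⟩ := ha
  have hk' : a ^ (k + 2) = 0 := pow_eq_zero_of_le (Nat.le_add_right k 2) hk
  refine ⟨∑ i ∈ Finset.range (k + 2), monomial i ((i.factorial : ℚ)⁻¹ • a ^ i), ?_, fun t ↦ ?_⟩
  · simp [coeff_monomial]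
  · rw [IsNilpotent.exp_eq_sum (k := k + 2) (by rw [_root_.smul_pow, hk', smul_zero]),
      eval_finsetSum]
    refine Finset.sum_congr rfl fun i _ ↦ ?_
    rw [eval_monomial, ← map_pow, ← Algebra.commutes, ← Algebra.smul_def, _root_.smul_pow,
      smul_comm]

end PolynomialCurves

section LieSubalgebras

variable {R L : Type*} [CommRing R] [LieRing L] [LieAlgebra R L]

/-- The subalgebra of the elements of a Lie algebra whose action maps a given submodule `W` of a
representation into itself. -/
def lieStabilizer {M : Type*} [AddCommGroup M] [Module R M] [LieRingModule L M] [LieModule R L M]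
    (W : Submodule R M) : LieSubalgebra R L where
  carrier := {z | ∀ w ∈ W, ⁅z, w⁆ ∈ W}
  zero_mem' w _ := by
    rw [zero_lie]
    exact zero_mem W
  add_mem' ha hb w hw := by
    rw [add_lie]
    exact add_mem (ha w hw) (hb w hw)
  smul_mem' c _ ha w hw := by
    rw [smul_lie]
    exact W.smul_mem c (ha w hw)
  lie_mem' ha hb w hw := by
    rw [lie_lie]
    exact sub_mem (ha _ (hb w hw)) (hb _ (ha w hw))

lemma lieSpan_pair_symm_apply_eq_top {L' : Type*} [LieRing L'] [LieAlgebra R L'] (φ : L ≃ₗ⁅R⁆ L')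
    {x : L} {y : L'} (h : LieSubalgebra.lieSpan R L' {φ x, y} = ⊤) :
    LieSubalgebra.lieSpan R L {x, φ.symm y} = ⊤ := by
  have hle : LieSubalgebra.lieSpan R L' {φ x, y} ≤
      (LieSubalgebra.lieSpan R L {x, φ.symm y}).comap φ.symm.toLieHom := by
    rw [LieSubalgebra.lieSpan_le]
    rintro _ (rfl | rfl)
    · exact LieSubalgebra.subset_lieSpan (Or.inl (φ.symm_apply_apply x))
    · exact LieSubalgebra.subset_lieSpan (Or.inr rfl)
  refine eq_top_iff.2 fun z _ ↦ ?_
  have hz : φ.symm (φ z) ∈ LieSubalgebra.lieSpan R L {x, φ.symm y} :=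
    hle (h ▸ LieSubalgebra.mem_top (φ z))
  rwa [φ.symm_apply_apply] at hz

end LieSubalgebras

section InnerAutomorphisms

variable (F g : Type*) [Field F] [LieRing g] [LieAlgebra F g] [LieAlgebra ℚ g]

/-- The group `Int g` of inner automorphisms of a Lie algebra in characteristic zero, generated by
the exponentials `exp (ad e)` with `ad e` nilpotent. It is encoded as a group of linear
automorphisms. -/
def innerAut : Subgroup (g ≃ₗ[F] g) :=
  Subgroup.closure
    {σ | ∃ e : g, IsNilpotent (ad F g e) ∧ (σ : g →ₗ[F] g) = IsNilpotent.exp (ad F g e)}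

variable {F g}

lemma exists_lieEquiv_eq_exp_ad {e : g} (he : IsNilpotent (ad F g e)) :
    ∃ φ : g ≃ₗ⁅F⁆ g, (φ.toLinearEquiv : g →ₗ[F] g) = IsNilpotent.exp (ad F g e) := by
  have had : (LieDerivation.ad F g e).toLinearMap = ad F g e := by
    ext
    simp
  refine ⟨LieDerivation.exp (LieDerivation.ad F g e) (had ▸ he), ?_⟩
  exact congrArg IsNilpotent.exp had

lemma exists_mem_innerAut_eq_exp_ad {e : g} (he : IsNilpotent (ad F g e)) :
    ∃ σ ∈ innerAut F g, (σ : g →ₗ[F] g) = IsNilpotent.exp (ad F g e) := by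
  obtain ⟨φ, hφ⟩ := exists_lieEquiv_eq_exp_ad he
  exact ⟨φ.toLinearEquiv, Subgroup.subset_closure ⟨e, he, hφ⟩, hφ⟩

lemma map_lie_of_mem_innerAut {σ : g ≃ₗ[F] g} (hσ : σ ∈ innerAut F g) (x y : g) :
    σ ⁅x, y⁆ = ⁅σ x, σ y⁆ := by
  induction hσ using Subgroup.closure_induction generalizing x y with
  | mem σ hσ =>
    obtain ⟨e, he, hσe⟩ := hσ
    obtain ⟨φ, hφ⟩ := exists_lieEquiv_eq_exp_ad he
    obtain rfl : σ = φ.toLinearEquiv := LinearEquiv.toLinearMap_injective (hσe.trans hφ.symm)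
    exact LieEquiv.map_lie φ x y
  | one => rfl
  | mul σ τ _ _ hσ hτ => simp only [LinearEquiv.mul_apply, hτ, hσ]
  | inv σ _ hσ =>
    apply σ.injective
    rw [hσ]
    simp only [← LinearEquiv.mul_apply, mul_inv_cancel]
    rfl

lemma exists_lieEquiv_of_mem_innerAut {σ : g ≃ₗ[F] g} (hσ : σ ∈ innerAut F g) :
    ∃ φ : g ≃ₗ⁅F⁆ g, ∀ x, φ x = σ x :=
  ⟨{ σ with map_lie' := map_lie_of_mem_innerAut hσ _ _ }, fun _ ↦ rfl⟩

variable [CharZero F]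

lemma exists_polynomial_curve_innerAut {e : g} (he : IsNilpotent (ad F g e)) :
    ∃ P : (End F g)[X], P.coeff 1 = ad F g e ∧
      (∀ t : F, P.eval (algebraMap F (End F g) t) = IsNilpotent.exp (ad F g (t • e))) ∧
      ∀ t : F, ∃ ρ ∈ innerAut F g,
        P.eval (algebraMap F (End F g) t) = (ρ : g →ₗ[F] g) := by
  obtain ⟨P, hP_coeff, hP⟩ := exists_polynomial_eval_eq_exp (F := F) he
  have hP_eval (t : F) :
      P.eval (algebraMap F (End F g) t) = IsNilpotent.exp (ad F g (t • e)) := by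
    rw [hP, map_smul]
  refine ⟨P, hP_coeff, hP_eval, fun t ↦ ?_⟩
  obtain ⟨ρ, hρ, hρe⟩ := exists_mem_innerAut_eq_exp_ad
    (e := t • e) (by rw [map_smul]; exact he.smul t)
  exact ⟨ρ, hρ, (hP_eval t).trans hρe.symm⟩

lemma polynomiallyJoined_one_exp_ad {e : g} (he : IsNilpotent (ad F g e)) {σ : g ≃ₗ[F] g}
    (hσ : (σ : g →ₗ[F] g) = IsNilpotent.exp (ad F g e)) :
    PolynomiallyJoined (innerAut F g) 1 σ := by
  obtain ⟨P, -, hP, hP_mem⟩ := exists_polynomial_curve_innerAut he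
  refine ⟨P, hP_mem, ?_, ?_⟩
  · rw [← map_zero (algebraMap F (End F g)), hP, zero_smul, map_zero, IsNilpotent.exp_zero]
    rfl
  · rw [← map_one (algebraMap F (End F g)), hP, one_smul, hσ]

lemma isPolynomiallyConnected_innerAut : IsPolynomiallyConnected (innerAut F g) := by
  refine isPolynomiallyConnected_closure ?_
  rintro σ ⟨e, he, hσ⟩
  have he_neg : IsNilpotent (ad F g (-e)) := by rw [map_neg]; exact he.neg
  have hσ_inv : ((σ⁻¹ : g ≃ₗ[F] g) : g →ₗ[F] g) = IsNilpotent.exp (ad F g (-e)) := by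
    have hinv : IsNilpotent.exp (ad F g e) * ((σ⁻¹ : g ≃ₗ[F] g) : g →ₗ[F] g) = 1 := by
      rw [← hσ]
      ext x
      exact σ.apply_symm_apply x
    rw [map_neg]
    exact (left_inv_eq_right_inv he.exp_neg_mul_exp_self hinv).symm
  exact ⟨polynomiallyJoined_one_exp_ad he hσ, polynomiallyJoined_one_exp_ad he_neg hσ_inv⟩

lemma lie_mem_of_innerAut_invariant {W : Submodule F g}
    (hW : ∀ σ ∈ innerAut F g, ∀ w ∈ W, σ w ∈ W) {e : g} (he : IsNilpotent (ad F g e)) {w : g}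
    (hw : w ∈ W) : ⁅e, w⁆ ∈ W := by
  obtain ⟨P, hP_coeff, -, hP_mem⟩ := exists_polynomial_curve_innerAut he
  have hcurve (t : F) : P.eval (algebraMap F (End F g) t) w ∈ W := by
    obtain ⟨ρ, hρ, hPρ⟩ := hP_mem t
    rw [hPρ]
    exact hW ρ hρ w hw
  rw [← ad_apply F, ← hP_coeff]
  exact coeff_apply_mem_of_forall_eval_apply_mem hcurve 1

variable [IsSimple F g]

lemma eq_top_of_innerAut_invariant
    (hg : LieSubalgebra.lieSpan F g {e : g | IsNilpotent (ad F g e)} = ⊤)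
    {W : Submodule F g} (hW : W ≠ ⊥) (hW_inv : ∀ σ ∈ innerAut F g, ∀ w ∈ W, σ w ∈ W) :
    W = ⊤ := by
  have hstab : lieStabilizer W = (⊤ : LieSubalgebra F g) := by
    rw [eq_top_iff, ← hg, LieSubalgebra.lieSpan_le]
    exact fun e he w hw ↦ lie_mem_of_innerAut_invariant hW_inv he hw
  let I : LieIdeal F g :=
    { W with
      lie_mem := fun {z w} hw ↦
        (hstab ▸ LieSubalgebra.mem_top z : z ∈ lieStabilizer W) w hw }
  rcases IsSimple.eq_bot_or_eq_top (R := F) I with hI | hI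
  · exact absurd (congrArg LieSubmodule.toSubmodule hI) hW
  · exact congrArg LieSubmodule.toSubmodule hI

lemma span_innerAut_orbit_eq_top
    (hg : LieSubalgebra.lieSpan F g {e : g | IsNilpotent (ad F g e)} = ⊤) {x : g} (hx : x ≠ 0) :
    Submodule.span F {y | ∃ σ ∈ innerAut F g, σ x = y} = ⊤ := by
  refine eq_top_of_innerAut_invariant hg ?_ fun σ hσ w hw ↦ ?_
  · exact (Submodule.ne_bot_iff _).2 ⟨x, Submodule.subset_span ⟨1, one_mem _, rfl⟩, hx⟩
  · refine (Submodule.map_span_le (σ : g →ₗ[F] g) _ _).2 ?_ (Submodule.mem_map_of_mem hw)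
    rintro _ ⟨τ, hτ, rfl⟩
    exact Submodule.subset_span ⟨σ * τ, mul_mem hσ hτ, rfl⟩

end InnerAutomorphisms

lemma eigenvector_mem_of_sum_mem {F V ι : Type*} [Field F] [AddCommGroup V] [Module F V]
    [Fintype ι] {T : End F V} {W : Submodule F V} (hW : W ∈ T.invtSubmodule) {μ : ι → F}
    (hμ : Function.Injective μ) {v : ι → V} (hv : ∀ i, T (v i) = μ i • v i) (hsum : ∑ i, v i ∈ W)
    (i : ι) : v i ∈ W := by
  classical
  let p := Lagrange.basis Finset.univ μ i
  have isolate : aeval T p (∑ j, v j) = v i := by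
    rw [map_sum, Finset.sum_eq_single_of_mem i (Finset.mem_univ i),
      Module.End.aeval_apply_of_mem_apply_eq_smul (hv i),
      Lagrange.eval_basis_self hμ.injOn (Finset.mem_univ i), one_smul]
    intro j _ hj
    rw [Module.End.aeval_apply_of_mem_apply_eq_smul (hv j),
      Lagrange.eval_basis_of_ne hj.symm (Finset.mem_univ j), zero_smul]
  rw [← isolate]
  exact aeval_apply_smul_mem_of_le_comap' hsum p T hW

section Weights

variable {F L M : Type*} [Field F] [LieRing L] [LieRing.IsNilpotent L] [LieAlgebra F L]
  [AddCommGroup M] [Module F M] [LieRingModule L M] [LieModule F L M] [FiniteDimensional F M]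

lemma exists_injective_weight_apply [Infinite F] [FiniteDimensional F L] [LinearWeights F L M] :
    ∃ h : L, Function.Injective fun χ : Weight F L M ↦ χ h := by
  let ι := {p : Weight F L M × Weight F L M // p.1 ≠ p.2}
  obtain ⟨h, hh⟩ := Module.Dual.exists_forall_ne_zero_of_forall_exists
    (fun p : ι ↦ p.1.1.toLinear - p.1.2.toLinear) (by
      rintro ⟨⟨χ, ψ⟩, hne⟩
      by_contra! hχψ
      exact hne (Weight.ext fun y ↦ sub_eq_zero.1 (hχψ y)))
  refine ⟨h, fun χ ψ hχψ ↦ ?_⟩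
  by_contra hne
  exact hh ⟨(χ, ψ), hne⟩ (sub_eq_zero.2 hχψ)

lemma exists_sum_genWeightSpace_eq [IsTriangularizable F L M] (m : M) :
    ∃ v : Weight F L M → M, (∀ χ : Weight F L M, v χ ∈ genWeightSpace M χ) ∧ ∑ χ, v χ = m := by
  have hm : m ∈ ⨆ χ : Weight F L M, (genWeightSpace M χ).toSubmodule := by
    rw [← LieSubmodule.iSup_toSubmodule, iSup_genWeightSpace_eq_top', LieSubmodule.top_toSubmodule]
    exact Submodule.mem_top
  obtain ⟨v, hv, rfl⟩ := (Submodule.mem_iSup_iff_exists_finsupp _ _).1 hm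
  exact ⟨v, hv, (v.sum_fintype (fun _ ↦ id) fun _ ↦ rfl).symm⟩

end Weights

section Roots

variable {F g : Type*} [Field F] [CharZero F] [LieRing g] [LieAlgebra F g] [FiniteDimensional F g]
  (H : LieSubalgebra F g) [H.IsCartanSubalgebra] [IsTriangularizable F H g]

section IsKilling

variable [IsKilling F g]

lemma eq_top_of_rootSpace_le {K : LieSubalgebra F g}
    (hK : ∀ α : Weight F H g, α.IsNonZero → (rootSpace H α).toSubmodule ≤ K.toSubmodule) :
    K = ⊤ := by
  have hcoroot (α : Weight F H g) (hα : α.IsNonZero) :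
      (IsKilling.corootSubmodule α).toSubmodule ≤ K.toSubmodule := by
    rintro _ ⟨x, hx, rfl⟩
    refine Submodule.span_le.2 ?_ ((mem_corootSpace (α : H → F)).1 hx)
    rintro _ ⟨y, hy, z, hz, rfl⟩
    exact K.lie_mem (hK α hα hy) (hK (-α) (by simpa using hα) (by simpa using hz))
  have htop := congrArg LieSubmodule.toSubmodule (cartan_sup_iSup_rootSpace_eq_top (K := F) H)
  rw [← IsKilling.biSup_corootSubmodule_eq_cartan H] at htop
  simp only [LieSubmodule.sup_toSubmodule, LieSubmodule.iSup_toSubmodule,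
    LieSubmodule.top_toSubmodule] at htop
  rw [← LieSubalgebra.toSubmodule_inj, LieSubalgebra.top_toSubmodule, eq_top_iff, ← htop]
  exact sup_le (iSup₂_le hcoroot) (iSup₂_le hK)

include H in
lemma lieSpan_isNilpotent_ad_eq_top :
    LieSubalgebra.lieSpan F g {e : g | IsNilpotent (ad F g e)} = ⊤ :=
  eq_top_of_rootSpace_le H fun _ hα _ he ↦
    LieSubalgebra.subset_lieSpan (isNilpotent_ad_of_mem_rootSpace H hα he)

lemma lieSpan_pair_eq_top {h : H} (hh : Function.Injective fun α : Weight F H g ↦ α h) {x : g}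
    (hx : ∀ α : Weight F H g, α.IsNonZero →
      ∃ e ∈ rootSpace H (-α), killingForm F g e x ≠ 0) :
    LieSubalgebra.lieSpan F g {x, (h : g)} = ⊤ := by
  set K := LieSubalgebra.lieSpan F g {x, (h : g)}
  have hxK : x ∈ K := LieSubalgebra.subset_lieSpan (Or.inl rfl)
  have hhK : (h : g) ∈ K := LieSubalgebra.subset_lieSpan (Or.inr rfl)
  obtain ⟨v, hv, rfl⟩ := exists_sum_genWeightSpace_eq (F := F) (L := H) x
  have hv_mem (α : Weight F H g) : v α ∈ K :=
    eigenvector_mem_of_sum_mem (T := ad F g h) (W := K.toSubmodule) (fun _ hy ↦ K.lie_mem hhK hy)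
      hh (fun β ↦ IsKilling.lie_eq_smul_of_mem_rootSpace (hv β) h) hxK α
  have hv_ne_zero (α : Weight F H g) (hα : α.IsNonZero) : v α ≠ 0 := by
    intro hvα
    obtain ⟨e, he, hex⟩ := hx α hα
    refine hex ((map_sum _ _ _).trans (Finset.sum_eq_zero fun β _ ↦ ?_))
    by_cases hβ : β = α
    · rw [hβ, hvα, map_zero]
    · have hαβ : (-α : H → F) + β ≠ 0 := fun h0 ↦
        hβ (DFunLike.coe_injective (neg_add_eq_zero.1 h0).symm)
      exact killingForm_apply_eq_zero_of_mem_rootSpace_of_add_ne_zero F g H he (hv β) hαβ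
  refine eq_top_of_rootSpace_le H fun α hα z hz ↦ ?_
  obtain ⟨c, hc⟩ := (finrank_eq_one_iff_of_nonzero' (⟨v α, hv α⟩ : rootSpace H α)
    (fun h0 ↦ hv_ne_zero α hα (congrArg Subtype.val h0))).1
    (IsKilling.finrank_rootSpace_eq_one α hα) ⟨z, hz⟩
  obtain rfl : c • v α = z := congrArg Subtype.val hc
  exact K.smul_mem c (hv_mem α)

end IsKilling

lemma exists_mem_innerAut_forall_killingForm_ne_zero [IsSimple F g] [LieAlgebra ℚ g]
    {x : g} (hx : x ≠ 0) :
    ∃ σ ∈ innerAut F g, ∀ α : Weight F H g,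
      ∃ e ∈ rootSpace H (-α), killingForm F g e (σ x) ≠ 0 := by
  choose e he he_ne_zero using fun α : Weight F H g ↦ (-α).exists_ne_zero
  have hsingle (α : Weight F H g) : ∃ σ ∈ innerAut F g, killingForm F g (e α) (σ x) ≠ 0 := by
    by_contra! hα
    have hker : killingForm F g (e α) = 0 := by
      rw [← LinearMap.ker_eq_top, eq_top_iff,
        ← span_innerAut_orbit_eq_top (lieSpan_isNilpotent_ad_eq_top H) hx, Submodule.span_le]
      rintro _ ⟨σ, hσ, rfl⟩
      exact hα σ hσ
    apply he_ne_zero α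
    rwa [← LinearMap.mem_ker, IsKilling.ker_killingForm_eq_bot, Submodule.mem_bot] at hker
  obtain ⟨σ, hσ, hσx⟩ := isPolynomiallyConnected_innerAut.exists_forall_apply_ne_zero
    (fun α ↦ killingForm F g (e α)) x hsingle Finset.univ
  exact ⟨σ, hσ, fun α ↦ ⟨e α, by simpa using he α, hσx α (Finset.mem_univ α)⟩⟩

end Roots

end OneAndHalf

open OneAndHalf LieAlgebra LieModule

theorem simple_lieAlgebra_generated_by_one_and_a_half_elements_general
    {F g : Type*} [Field F] [CharZero F] [LieRing g] [LieAlgebra F g] [FiniteDimensional F g]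
    [IsSimple F g] (H : LieSubalgebra F g) [H.IsCartanSubalgebra] [IsTriangularizable F H g]
    {x : g} (hx : x ≠ 0) : ∃ y : g, LieSubalgebra.lieSpan F g {x, y} = ⊤ := by
  let : LieAlgebra ℚ g := inferInstanceAs (LieAlgebra ℚ (RestrictScalars ℚ F g))
  obtain ⟨h, hh⟩ := exists_injective_weight_apply (F := F) (L := H) (M := g)
  obtain ⟨σ, hσ, hσx⟩ := exists_mem_innerAut_forall_killingForm_ne_zero H hx
  obtain ⟨φ, hφ⟩ := exists_lieEquiv_of_mem_innerAut hσ
  refine ⟨φ.symm h, lieSpan_pair_symm_apply_eq_top φ ?_⟩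
  rw [hφ]
  exact lieSpan_pair_eq_top H hh fun α _ ↦ hσx α

/-- A finite-dimensional simple Lie algebra over an algebraically closed field of
characteristic 0 is generated by one and a half elements. -/
theorem simple_lieAlgebra_generated_by_one_and_a_half_elements
    (F : Type) [Field F] [IsAlgClosed F] [CharZero F]
    (g : Type) [LieRing g] [LieAlgebra F g] [FiniteDimensional F g] [LieAlgebra.IsSimple F g] :
    ∀ x : g, x ≠ 0 → ∃ y : g, LieSubalgebra.lieSpan F g {x, y} = ⊤ := by
  intro x hx
  obtain ⟨r, hr⟩ := exists_isCartanSubalgebra_engel F g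
  exact simple_lieAlgebra_generated_by_one_and_a_half_elements_general
    (LieSubalgebra.engel F r) hx
end

section
/- Let F be an algebraically closed field of characteristic 0, let ι be a finite (nonempty) index type, and let (g_k)_{k ∈ ι} be a family of finite-dimensional simple Lie algebras over F. Let g = Π_{k ∈ ι} g_k be their direct product with componentwise bracket, and let π_k : g → g_k denote the projections. Then for every x ∈ g such that π_k(x) ≠ 0 for all k ∈ ι, there exists y ∈ g such that the smallest Lie subalgebra of g containing x and y is g itself. -/
/-- The componentwise Lie ring structure on a direct product of Lie rings. -/
instance Pi.instLieRing {ι : Type} {g : ι → Type} [∀ i, LieRing (g i)] :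
    LieRing (∀ i, g i) :=
  { (inferInstance : AddCommGroup (∀ i, g i)) with
    bracket := fun x y i => ⁅x i, y i⁆
    add_lie := fun x y z => funext fun i => add_lie (x i) (y i) (z i)
    lie_add := fun x y z => funext fun i => lie_add (x i) (y i) (z i)
    lie_self := fun x => funext fun i => lie_self (x i)
    leibniz_lie := fun x y z => funext fun i => leibniz_lie (x i) (y i) (z i) }

/-- The componentwise Lie algebra structure on a direct product of Lie algebras. -/
instance Pi.instLieAlgebra {F : Type} [CommRing F] {ι : Type} {g : ι → Type}
    [∀ i, LieRing (g i)] [∀ i, LieAlgebra F (g i)] : LieAlgebra F (∀ i, g i) where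
  lie_smul c x y := funext fun i => lie_smul c (x i) (y i)

/-!
An element with no zero component generates `Π k, g k` as an ideal, and `Π k, g k` is semisimple.
So let `x` generate, as an ideal, a semisimple Lie algebra `L` with splitting Cartan subalgebra `H`.
The root vectors generate `L` and are ad-nilpotent, so the span of the orbit of `x` under the
elementary automorphisms, the products of maps `exp (ad e)` with `ad e` nilpotent, is an ideal; it
contains `x`, hence is `L`. So each root component is nonzero at some point of the orbit, and, the
orbit being irreducible, all of them are nonzero at some `φ x`, with `φ` an elementary automorphism.
If `h ∈ H` separates the weights, polynomials in `ad h` extract these components from `φ x`; they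
span the one-dimensional root spaces, so `φ x` and `h` generate `L`, and so do `x` and `φ⁻¹ h`.
-/

open LieAlgebra LieModule Polynomial

section ElementaryAutomorphisms

variable {F L : Type*} [Field F] [CharZero F] [LieRing L] [LieAlgebra F L] {e : L}

/-- The one-parameter group `s ↦ exp (s • ad e)` of automorphisms of a Lie algebra attached to an
ad-nilpotent element `e`. Since `LieDerivation.exp` wants a Lie algebra over `ℚ`, scalars are
restricted along `ℚ → F`. -/
noncomputable def expAd (he : _root_.IsNilpotent (ad F L e)) (s : F) : L ≃ₗ⁅F⁆ L :=
  letI : Module ℚ L := Module.compHom L (algebraMap ℚ F)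
  letI : LieAlgebra ℚ L := { lie_smul := fun c => lie_smul (algebraMap ℚ F c) }
  LieDerivation.exp (LieDerivation.ad F L (s • e)) <| by
    rw [LieDerivation.coe_ad_apply_eq_ad_apply, map_smul]
    exact he.smul s

lemma expAd_apply_eq_sum (he : _root_.IsNilpotent (ad F L e)) (s : F) (w : L) {n : ℕ}
    (hn : ad F L e ^ n = 0) :
    expAd he s w = ∑ i ∈ Finset.range n, ((i.factorial : F)⁻¹ * s ^ i) • (ad F L e ^ i) w := by
  let _ : Module ℚ L := Module.compHom L (algebraMap ℚ F)
  let _ : LieAlgebra ℚ L := { lie_smul := fun c => lie_smul (algebraMap ℚ F c) }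
  have rat_smul (q : ℚ) (v : L) : q • v = (q : F) • v := rfl
  have coe_ad : (LieDerivation.ad F L (s • e)).toLinearMap = s • ad F L e := by
    rw [LieDerivation.coe_ad_apply_eq_ad_apply, map_smul]
  have hpow : (s • ad F L e) ^ n = 0 := by rw [_root_.smul_pow, hn, smul_zero]
  change IsNilpotent.exp (LieDerivation.ad F L (s • e)).toLinearMap w = _
  rw [coe_ad, IsNilpotent.exp_eq_sum hpow, LinearMap.sum_apply]
  refine Finset.sum_congr rfl fun i _ => ?_
  rw [LinearMap.smul_apply, rat_smul, _root_.smul_pow, LinearMap.smul_apply, smul_smul]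
  simp only [Rat.cast_inv, Rat.cast_natCast]

lemma expAd_zero_apply (he : _root_.IsNilpotent (ad F L e)) (w : L) : expAd he 0 w = w := by
  obtain ⟨n, hn⟩ := id he
  rw [expAd_apply_eq_sum _ _ _ (pow_eq_zero_of_le n.le_succ hn), Finset.sum_range_succ']
  simp

lemma exists_polynomial_eval_eq_dual_expAd (he : _root_.IsNilpotent (ad F L e))
    (f : Module.Dual F L) (w : L) :
    ∃ p : F[X], (∀ s, p.eval s = f (expAd he s w)) ∧ p.coeff 1 = f ⁅e, w⁆ := by
  obtain ⟨n, hn⟩ := id he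
  have hn' : ad F L e ^ (n + 2) = 0 := pow_eq_zero_of_le (n.le_add_right 2) hn
  refine ⟨∑ i ∈ Finset.range (n + 2), C ((i.factorial : F)⁻¹ * f ((ad F L e ^ i) w)) * X ^ i,
    fun s => ?_, ?_⟩
  · rw [expAd_apply_eq_sum _ s w hn', map_sum, eval_finsetSum]
    refine Finset.sum_congr rfl fun i _ => ?_
    simp only [eval_C_mul, eval_pow, eval_X, map_smul, smul_eq_mul]
    ring
  · rw [finsetSum_coeff, Finset.sum_eq_single 1 (fun i _ hi => by
      rw [coeff_C_mul, coeff_X_pow, if_neg hi.symm, mul_zero]) (by simp)]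
    simp

lemma lie_mem_of_forall_expAd_mem (he : _root_.IsNilpotent (ad F L e)) {W : Submodule F L} {w : L}
    (hw : ∀ s, expAd he s w ∈ W) : ⁅e, w⁆ ∈ W := by
  by_contra hew
  obtain ⟨f, hf, hfW⟩ := W.exists_dual_map_eq_bot_of_notMem hew inferInstance
  obtain ⟨p, hp, hp1⟩ := exists_polynomial_eval_eq_dual_expAd he f w
  have hp0 : p = 0 := Polynomial.funext fun s => by
    rw [hp, eval_zero]
    exact LinearMap.le_ker_iff_map.2 hfW (hw s)
  exact hf (by rw [← hp1, hp0, coeff_zero])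

lemma eventually_cofinite_dual_expAd_ne_zero (he : _root_.IsNilpotent (ad F L e))
    {f : Module.Dual F L} {w : L} {s : F} (hs : f (expAd he s w) ≠ 0) :
    ∀ᶠ r in Filter.cofinite, f (expAd he r w) ≠ 0 := by
  obtain ⟨p, hp, -⟩ := exists_polynomial_eval_eq_dual_expAd he f w
  have hp0 : p ≠ 0 := by
    rintro rfl
    exact hs (by rw [← hp, eval_zero])
  simpa only [Filter.eventually_cofinite, not_not, ← hp, ← IsRoot.def] using
    finite_setOfPred_isRoot hp0

/-- The elementary automorphisms of a Lie algebra: the finite products of exponentials of nilpotent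
inner derivations. -/
inductive IsElementary : (L ≃ₗ⁅F⁆ L) → Prop
  | refl : IsElementary LieEquiv.refl
  | trans_expAd {φ : L ≃ₗ⁅F⁆ L} (hφ : IsElementary φ) {e : L}
      (he : _root_.IsNilpotent (ad F L e)) (s : F) : IsElementary (φ.trans (expAd he s))

-- The values of a linear form along `s ↦ exp (s • ad e)` are polynomial in `s`, so finitely many
-- non-vanishing conditions, each satisfiable by some `s`, hold together for almost all `s`. Peeling
-- off the factors of `φ` and then those of `ψ` one at a time thus meets both conditions.
lemma IsElementary.exists_forall_ne_zero_and_ne_zero {φ ψ : L ≃ₗ⁅F⁆ L} (hφ : IsElementary φ)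
    (hψ : IsElementary ψ) {t : Set (Module.Dual F L)} (ht : t.Finite) {g : Module.Dual F L} {x : L}
    (hφt : ∀ f ∈ t, f (φ x) ≠ 0) (hψg : g (ψ x) ≠ 0) :
    ∃ θ : L ≃ₗ⁅F⁆ L, IsElementary θ ∧ (∀ f ∈ t, f (θ x) ≠ 0) ∧ g (θ x) ≠ 0 := by
  induction hφ generalizing t g with
  | refl =>
    induction hψ generalizing g with
    | refl => exact ⟨_, .refl, hφt, hψg⟩
    | @trans_expAd ψ _ e he s ih =>
      obtain ⟨θ, hθ, hθt, hθg⟩ := ih (g := g ∘ₗ (expAd he s : L →ₗ[F] L)) hψg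
      have hθt' : ∀ f ∈ t, f (expAd he 0 (θ x)) ≠ 0 := by simpa only [expAd_zero_apply] using hθt
      obtain ⟨r, hrt, hrg⟩ := ((ht.eventually_all.2 fun f hf =>
        eventually_cofinite_dual_expAd_ne_zero he (hθt' f hf)).and
        (eventually_cofinite_dual_expAd_ne_zero he hθg)).exists
      exact ⟨_, hθ.trans_expAd he r, hrt, hrg⟩
  | @trans_expAd φ _ e he s ih =>
    obtain ⟨θ, hθ, hθt, hθg⟩ := ih (ht.image fun f => f ∘ₗ (expAd he s : L →ₗ[F] L))
      (Set.forall_mem_image.2 hφt) hψg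
    have hθg' : g (expAd he 0 (θ x)) ≠ 0 := by rwa [expAd_zero_apply]
    obtain ⟨r, hrt, hrg⟩ := ((ht.eventually_all.2 fun f hf =>
      eventually_cofinite_dual_expAd_ne_zero he (Set.forall_mem_image.1 hθt hf)).and
      (eventually_cofinite_dual_expAd_ne_zero he hθg')).exists
    exact ⟨_, hθ.trans_expAd he r, hrt, hrg⟩

lemma exists_isElementary_forall_ne_zero {t : Set (Module.Dual F L)} (ht : t.Finite) {x : L}
    (h : ∀ f ∈ t, ∃ φ : L ≃ₗ⁅F⁆ L, IsElementary φ ∧ f (φ x) ≠ 0) :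
    ∃ φ : L ≃ₗ⁅F⁆ L, IsElementary φ ∧ ∀ f ∈ t, f (φ x) ≠ 0 := by
  induction t, ht using Set.Finite.induction_on with
  | empty => exact ⟨_, .refl, by simp⟩
  | @insert g t _ ht ih =>
    rw [Set.forall_mem_insert] at h
    obtain ⟨⟨ψ, hψ, hψg⟩, h⟩ := h
    obtain ⟨φ, hφ, hφt⟩ := ih h
    obtain ⟨θ, hθ, hθt, hθg⟩ := hφ.exists_forall_ne_zero_and_ne_zero hψ ht hφt hψg
    exact ⟨θ, hθ, Set.forall_mem_insert.2 ⟨hθg, hθt⟩⟩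

end ElementaryAutomorphisms

section AdNilpotentGenerators

lemma lie_mem_of_lieSpan_eq_top {R L M : Type*} [CommRing R] [LieRing L] [LieAlgebra R L]
    [AddCommGroup M] [Module R M] [LieRingModule L M] [LieModule R L M] {s : Set L}
    (hs : LieSubalgebra.lieSpan R L s = ⊤) {W : Submodule R M}
    (hW : ∀ a ∈ s, ∀ w ∈ W, ⁅a, w⁆ ∈ W) (a : L) {w : M} (hw : w ∈ W) : ⁅a, w⁆ ∈ W := by
  have ha : a ∈ LieSubalgebra.lieSpan R L s := hs ▸ LieSubalgebra.mem_top a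
  induction ha using LieSubalgebra.lieSpan_induction generalizing w with
  | mem a ha => exact hW a ha w hw
  | zero => simp
  | add a b _ _ iha ihb => rw [add_lie]; exact W.add_mem (iha hw) (ihb hw)
  | smul c a _ iha => rw [smul_lie]; exact W.smul_mem c (iha hw)
  | lie a b _ _ iha ihb => rw [lie_lie]; exact W.sub_mem (iha (ihb hw)) (ihb (iha hw))

variable {F L : Type*} [Field F] [CharZero F] [LieRing L] [LieAlgebra F L]

lemma span_isElementary_orbit_eq_top
    (hL : LieSubalgebra.lieSpan F L {e | _root_.IsNilpotent (ad F L e)} = ⊤) {x : L}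
    (hx : LieSubmodule.lieSpan F L {x} = ⊤) :
    Submodule.span F {w | ∃ φ : L ≃ₗ⁅F⁆ L, IsElementary φ ∧ φ x = w} = ⊤ := by
  set W := Submodule.span F {w | ∃ φ : L ≃ₗ⁅F⁆ L, IsElementary φ ∧ φ x = w}
  have lie_mem_of_nilpotent : ∀ e, _root_.IsNilpotent (ad F L e) → ∀ w ∈ W, ⁅e, w⁆ ∈ W := by
    intro e he w hw
    have hle : W ≤ W.comap (ad F L e) := by
      refine Submodule.span_le.2 ?_
      rintro _ ⟨φ, hφ, rfl⟩
      have expAd_mem (s : F) : expAd he s (φ x) ∈ W :=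
        Submodule.subset_span ⟨φ.trans (expAd he s), hφ.trans_expAd he s, rfl⟩
      exact lie_mem_of_forall_expAd_mem he expAd_mem
    exact hle hw
  let I : LieIdeal F L :=
    { W with lie_mem := lie_mem_of_lieSpan_eq_top hL lie_mem_of_nilpotent _ }
  have hxI : x ∈ I := Submodule.subset_span ⟨_, .refl, rfl⟩
  have hI : I = ⊤ := top_le_iff.1 (hx ▸ LieSubmodule.lieSpan_le.2 (Set.singleton_subset_iff.2 hxI))
  exact congrArg LieSubmodule.toSubmodule hI

lemma exists_lieEquiv_forall_ne_zero
    (hL : LieSubalgebra.lieSpan F L {e | _root_.IsNilpotent (ad F L e)} = ⊤) {x : L}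
    (hx : LieSubmodule.lieSpan F L {x} = ⊤) {t : Set (Module.Dual F L)} (ht : t.Finite)
    (ht0 : 0 ∉ t) : ∃ φ : L ≃ₗ⁅F⁆ L, ∀ f ∈ t, f (φ x) ≠ 0 := by
  have exists_ne_zero (f) (hf : f ∈ t) : ∃ φ : L ≃ₗ⁅F⁆ L, IsElementary φ ∧ f (φ x) ≠ 0 := by
    by_contra! hvanish
    refine ne_of_mem_of_not_mem hf ht0 (LinearMap.ext_on (span_isElementary_orbit_eq_top hL hx) ?_)
    rintro _ ⟨φ, hφ, rfl⟩
    exact hvanish φ hφ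
  obtain ⟨φ, -, hφ⟩ := exists_isElementary_forall_ne_zero ht exists_ne_zero
  exact ⟨φ, hφ⟩

end AdNilpotentGenerators

lemma exists_injective_dual_apply {K V ι : Type*} [Field K] [Infinite K] [AddCommGroup V]
    [Module K V] [Finite ι] {f : ι → Module.Dual K V} (hf : Function.Injective f) :
    ∃ v, Function.Injective fun i => f i v := by
  obtain ⟨v, hv⟩ := Module.Dual.exists_forall_ne_zero_of_forall_exists
    (fun p : {p : ι × ι // p.1 ≠ p.2} => f p.1.1 - f p.1.2) fun p =>
      DFunLike.ne_iff.1 (sub_ne_zero.2 (hf.ne p.2))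
  refine ⟨v, fun i j hij => ?_⟩
  by_contra hne
  exact hv ⟨(i, j), hne⟩ (sub_eq_zero.2 hij)

section Killing

variable {F L : Type*} [Field F] [CharZero F] [LieRing L] [LieAlgebra F L]
  [FiniteDimensional F L] [IsKilling F L]

section RootSpaces

variable (H : LieSubalgebra F L) [H.IsCartanSubalgebra] [IsTriangularizable F H L]

lemma cartan_le_of_rootSpace_le {S : LieSubalgebra F L}
    (hS : ∀ α : Weight F H L, α.IsNonZero → ∀ e ∈ rootSpace H α, e ∈ S) : H ≤ S := by
  have coroot_le : (⨆ α : Weight F H L, ⨆ _ : α.IsNonZero, corootSpace α).toSubmodule ≤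
      S.toSubmodule.comap H.toSubmodule.subtype := by
    simp only [LieSubmodule.iSup_toSubmodule, iSup_le_iff]
    intro α hα z hz
    rw [LieSubmodule.mem_toSubmodule, mem_corootSpace] at hz
    change (z : L) ∈ S.toSubmodule
    refine Submodule.span_le.2 ?_ hz
    rintro _ ⟨y, hy, w, hw, rfl⟩
    exact S.lie_mem (hS α hα y hy) (hS (-α) hα.neg w hw)
  rw [IsKilling.biSup_corootSpace_eq_top] at coroot_le
  exact fun h hh => coroot_le (x := ⟨h, hh⟩) trivial

lemma eq_top_of_rootSpace_le {S : LieSubalgebra F L}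
    (hS : ∀ α : Weight F H L, α.IsNonZero → ∀ e ∈ rootSpace H α, e ∈ S) : S = ⊤ := by
  have hle : (H.toLieSubmodule ⊔
      ⨆ α : Weight F H L, ⨆ _ : α.IsNonZero, rootSpace H α).toSubmodule ≤ S.toSubmodule := by
    simp only [LieSubmodule.sup_toSubmodule, LieSubmodule.iSup_toSubmodule, sup_le_iff,
      iSup_le_iff]
    exact ⟨cartan_le_of_rootSpace_le H hS, hS⟩
  rw [cartan_sup_iSup_rootSpace_eq_top] at hle
  exact top_le_iff.1 hle

lemma exists_polynomial_aeval_ad_rootSpace {h : H}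
    (hh : Function.Injective fun α : Weight F H L => α h) (α : Weight F H L) :
    ∃ q : F[X], (∀ w ∈ rootSpace H α, aeval (ad F L h) q w = w) ∧
      ∀ β : Weight F H L, β ≠ α → ∀ w ∈ rootSpace H β, aeval (ad F L h) q w = 0 := by
  classical
  have aeval_apply (q : F[X]) (β : Weight F H L) (w) (hw : w ∈ rootSpace H β) :
      aeval (ad F L h) q w = q.eval (β h) • w :=
    Module.End.aeval_apply_of_mem_apply_eq_smul (IsKilling.lie_eq_smul_of_mem_rootSpace hw h)
  refine ⟨Lagrange.basis Finset.univ (fun β : Weight F H L => β h) α, fun w hw => ?_,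
    fun β hβ w hw => ?_⟩
  · rw [aeval_apply _ α w hw, Lagrange.eval_basis_self hh.injOn (Finset.mem_univ α), one_smul]
  · rw [aeval_apply _ β w hw, Lagrange.eval_basis_of_ne (v := fun β : Weight F H L => β h) hβ.symm
      (Finset.mem_univ β), zero_smul]

lemma exists_mem_rootSpace_of_killingForm_ne_zero {h : H}
    (hh : Function.Injective fun α : Weight F H L => α h) {S : LieSubalgebra F L}
    (hhS : (h : L) ∈ S) {x : L} (hxS : x ∈ S) {α : Weight F H L} {e : L}
    (he : e ∈ rootSpace H (-α)) (hex : killingForm F L e x ≠ 0) :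
    ∃ v ∈ rootSpace H α, v ∈ S ∧ v ≠ 0 := by
  obtain ⟨q, hqα, hqβ⟩ := exists_polynomial_aeval_ad_rootSpace H hh α
  have proj (w : L) : aeval (ad F L h) q w ∈ rootSpace H α ∧
      killingForm F L e (aeval (ad F L h) q w) = killingForm F L e w := by
    have hw : w ∈ ⨆ β : Weight F H L, rootSpace H β := by
      rw [iSup_genWeightSpace_eq_top' F H L]
      trivial
    induction hw using LieSubmodule.iSup_induction' with
    | mem β w hw =>
      by_cases hβ : β = α
      · subst hβ
        rw [hqα w hw]
        exact ⟨hw, rfl⟩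
      · have hne : -(α : H → F) + β ≠ 0 := fun h0 =>
          hβ (DFunLike.coe_injective (neg_add_eq_zero.1 h0).symm)
        rw [hqβ β hβ w hw, map_zero,
          killingForm_apply_eq_zero_of_mem_rootSpace_of_add_ne_zero F L H he hw hne]
        exact ⟨zero_mem _, rfl⟩
    | zero => simp
    | add w z _ _ ihw ihz =>
      simp only [map_add, ihw.2, ihz.2, and_true]
      exact add_mem ihw.1 ihz.1
  refine ⟨aeval (ad F L h) q x, (proj x).1, ?_, fun h0 => hex ?_⟩
  · exact aeval_apply_smul_mem_of_le_comap (q := S.toSubmodule) hxS q (ad F L h)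
      fun w hw => S.lie_mem hhS hw
  · rw [← (proj x).2, h0, map_zero]

lemma lieSpan_pair_eq_top_of_killingForm_ne_zero {h : H}
    (hh : Function.Injective fun α : Weight F H L => α h) {x : L}
    (hx : ∀ α : Weight F H L, α.IsNonZero → ∃ e ∈ rootSpace H (-α), killingForm F L e x ≠ 0) :
    LieSubalgebra.lieSpan F L {x, (h : L)} = ⊤ := by
  refine eq_top_of_rootSpace_le H fun α hα y hy => ?_
  obtain ⟨e, he, hex⟩ := hx α hα
  obtain ⟨v, hv, hvS, hv0⟩ := exists_mem_rootSpace_of_killingForm_ne_zero H hh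
    (LieSubalgebra.subset_lieSpan (Set.mem_insert_of_mem x (Set.mem_singleton (h : L))))
    (LieSubalgebra.subset_lieSpan (Set.mem_insert x {(h : L)})) he hex
  obtain ⟨c, hc⟩ := (finrank_eq_one_iff_of_nonzero' (⟨v, hv⟩ : rootSpace H α)
    (by simpa using hv0)).1 (IsKilling.finrank_rootSpace_eq_one α hα) ⟨y, hy⟩
  have hcv : c • v = y := congrArg Subtype.val hc
  exact hcv ▸ LieSubalgebra.smul_mem _ c hvS

end RootSpaces

lemma lieSpan_isNilpotent_ad_eq_top_s5 (H : LieSubalgebra F L) [H.IsCartanSubalgebra]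
    [IsTriangularizable F H L] :
    LieSubalgebra.lieSpan F L {e | _root_.IsNilpotent (ad F L e)} = ⊤ :=
  eq_top_of_rootSpace_le H fun _ hα _ he =>
    LieSubalgebra.subset_lieSpan (isNilpotent_ad_of_mem_rootSpace H hα he)

theorem pi_simple_generated_by_one_and_a_half_general (H : LieSubalgebra F L)
    [H.IsCartanSubalgebra] [IsTriangularizable F H L] {x : L}
    (hx : LieSubmodule.lieSpan F L {x} = ⊤) :
    ∃ y : L, LieSubalgebra.lieSpan F L {x, y} = ⊤ := by
  obtain ⟨h, hh⟩ := exists_injective_dual_apply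
    (f := fun α : Weight F H L => Weight.toLinear F H L α) fun α β hαβ =>
      DFunLike.ext α β fun h => LinearMap.congr_fun hαβ h
  choose e he he0 using fun α : Weight F H L => (-α).exists_ne_zero
  obtain ⟨φ, hφ⟩ := exists_lieEquiv_forall_ne_zero (lieSpan_isNilpotent_ad_eq_top_s5 H) hx
    (Set.finite_range fun α => killingForm F L (e α)) (by
      rintro ⟨α, hα⟩
      exact he0 α ((IsKilling.killingForm_nondegenerate F L).1 _ (DFunLike.congr_fun hα)))
  have htop : LieSubalgebra.lieSpan F L {φ x, (h : L)} = ⊤ :=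
    lieSpan_pair_eq_top_of_killingForm_ne_zero H hh fun α _ =>
      ⟨e α, he α, hφ _ (Set.mem_range_self α)⟩
  have himage : {x, φ.symm h} = (φ.symm : L →ₗ⁅F⁆ L) '' {φ x, (h : L)} := by
    simp [Set.image_pair]
  refine ⟨φ.symm h, ?_⟩
  rw [himage, ← LieSubalgebra.map_lieSpan, htop, ← LieHom.range_eq_map, LieHom.range_eq_top]
  exact φ.symm.surjective

end Killing

section PiSimple

variable {R ι : Type} [CommRing R] {g : ι → Type} [∀ k, LieRing (g k)]
  [∀ k, LieAlgebra R (g k)]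

lemma lie_pi_single [DecidableEq ι] (k : ι) (a : g k) (x : ∀ k, g k) :
    ⁅(Pi.single k a : ∀ k, g k), x⁆ = Pi.single k ⁅a, x k⁆ := by
  ext j
  change ⁅(Pi.single k a : ∀ k, g k) j, x j⁆ = _
  obtain rfl | hj := eq_or_ne j k <;> simp [*]

variable [∀ k, LieAlgebra.IsSimple R (g k)]

lemma pi_single_mem_lieIdeal [DecidableEq ι] {I : LieIdeal R (∀ k, g k)} {x : ∀ k, g k}
    (hx : x ∈ I) {k : ι} (hk : x k ≠ 0) (a : g k) : (Pi.single k a : ∀ k, g k) ∈ I := by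
  let J : LieIdeal R (g k) :=
    { I.toSubmodule.comap (LinearMap.single R g k) with
      lie_mem := fun {b c} hc => by
        have hbc := I.lie_mem (x := Pi.single k b) hc
        rwa [LinearMap.single_apply, lie_pi_single, Pi.single_eq_same] at hbc }
  obtain ⟨b, hb⟩ : ∃ b : g k, ⁅b, x k⁆ ≠ 0 := by
    by_contra! hcentral
    have : x k ∈ center R (g k) := hcentral
    rw [center_eq_bot] at this
    exact hk this
  have hbJ : ⁅b, x k⁆ ∈ J := by
    have := I.lie_mem (x := Pi.single k b) hx
    rwa [lie_pi_single] at this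
  have hJ : J = ⊤ := (LieAlgebra.IsSimple.eq_bot_or_eq_top J).resolve_left fun h => by
    rw [h] at hbJ
    exact hb hbJ
  exact (hJ ▸ LieSubmodule.mem_top a : a ∈ J)

lemma pi_lieSpan_singleton_eq_top [Finite ι] {x : ∀ k, g k} (hx : ∀ k, x k ≠ 0) :
    LieSubmodule.lieSpan R (∀ k, g k) {x} = ⊤ := by
  classical
  have := Fintype.ofFinite ι
  refine eq_top_iff.2 fun y _ => ?_
  rw [← Finset.univ_sum_single y]
  exact sum_mem fun k _ =>
    pi_single_mem_lieIdeal (LieSubmodule.subset_lieSpan (Set.mem_singleton x)) (hx k) (y k)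

instance pi_hasTrivialRadical : HasTrivialRadical R (∀ k, g k) := by
  classical
  rw [hasTrivialRadical_iff_no_abelian_ideals]
  intro I hI
  refine (LieSubmodule.eq_bot_iff I).2 fun x hx => funext fun k => ?_
  by_contra hk
  refine LieAlgebra.IsSimple.non_abelian R (L := g k) ⟨fun a b => ?_⟩
  have hab : ⁅(⟨_, pi_single_mem_lieIdeal hx hk a⟩ : I), (⟨_, pi_single_mem_lieIdeal hx hk b⟩ : I)⁆
      = 0 := hI.trivial _ _
  have hab' : ⁅(Pi.single k a : ∀ k, g k), (Pi.single k b : ∀ k, g k)⁆ = 0 :=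
    congrArg Subtype.val hab
  rwa [lie_pi_single, Pi.single_eq_same, Pi.single_eq_zero_iff] at hab'

end PiSimple

/-- For a finite direct product of finite-dimensional simple Lie algebras over an
algebraically closed field of characteristic 0, every element with all components nonzero can
be completed to a generating pair. -/
theorem pi_simple_generated_by_one_and_a_half
    (F : Type) [Field F] [IsAlgClosed F] [CharZero F]
    (ι : Type) [Finite ι] [Nonempty ι] (g : ι → Type)
    [∀ k, LieRing (g k)] [∀ k, LieAlgebra F (g k)]
    [∀ k, FiniteDimensional F (g k)] [∀ k, LieAlgebra.IsSimple F (g k)] :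
    ∀ x : ∀ k, g k, (∀ k, x k ≠ 0) →
      ∃ y : ∀ k, g k, LieSubalgebra.lieSpan F (∀ k, g k) {x, y} = ⊤ := by
  intro x hx
  obtain ⟨z, _⟩ := exists_isCartanSubalgebra_engel F (∀ k, g k)
  exact pi_simple_generated_by_one_and_a_half_general (LieSubalgebra.engel F z)
    (pi_lieSpan_singleton_eq_top hx)
end

section
/- Let p > 3 be a prime, F a field of characteristic p, and m ≥ 1. Let B_m = F[X_1, …, X_m]/(X_1^p, …, X_m^p), with x_i the image of X_i and x^τ the image of (X_1 ⋯ X_m)^{p−1}. Call an F-linear derivation δ of B_m homogeneous of degree −1 if δ(x_i) lies in F·1 (the scalars) for every i. Let δ_1, …, δ_k be derivations of B_m homogeneous of degree −1. Then the following are equivalent: (i) δ_1, …, δ_k are linearly dependent over F; (ii) the composite F-linear endomorphism δ_1^{p−1} ∘ δ_2^{p−1} ∘ ⋯ ∘ δ_k^{p−1} of B_m is zero; (iii) δ_1^{p−1} δ_2^{p−1} ⋯ δ_k^{p−1} (x^τ) = 0. -/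
open MvPolynomial

set_option synthInstance.maxHeartbeats 1000000
set_option maxHeartbeats 1000000

/-- The truncated polynomial algebra `B_m = F[X_1, …, X_m]/(X_1^p, …, X_m^p)`. -/
noncomputable abbrev TruncPoly (F : Type) [Field F] (p m : ℕ) : Type :=
  MvPolynomial (Fin m) F ⧸
    Ideal.span (Set.range fun i : Fin m => (X i : MvPolynomial (Fin m) F) ^ p)

/-- The image `x_i` in `B_m` of the variable `X_i`. -/
noncomputable def xVar (F : Type) [Field F] (p m : ℕ) (i : Fin m) : TruncPoly F p m :=
  Ideal.Quotient.mk _ (X i)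

/-- The image `x^τ` in `B_m` of the top-degree monomial `(X_1 ⋯ X_m)^(p-1)`. -/
noncomputable def xTau (F : Type) [Field F] (p m : ℕ) : TruncPoly F p m :=
  Ideal.Quotient.mk _ (∏ i : Fin m, (X i : MvPolynomial (Fin m) F) ^ (p - 1))

/-- A derivation of `B_m` is homogeneous of degree `-1` if it sends every `x_i` to a scalar. -/
def IsDegNegOne (F : Type) [Field F] (p m : ℕ)
    (δ : Derivation F (TruncPoly F p m) (TruncPoly F p m)) : Prop :=
  ∀ i : Fin m, ∃ c : F, δ (xVar F p m i) = algebraMap F (TruncPoly F p m) c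

/-!
Homogeneous derivations of degree `-1` commute and have vanishing `p`-th power, because these
identities only need to be checked on the generators. If one of them is a combination of the others,
then multiplying it by the `(p-1)`-st powers of the others gives zero, hence the composite vanishes.

If they are independent, they extend to a system of dual coordinates: the span of the `x_i` has a
basis `z` with `δ_i (z_j) = 1` for `i = j` and `0` otherwise. The product of the `x_i^(p-1)` has
the largest degree that survives when all `p`-th powers vanish, so up to a scalar it is the product
of the `z_s^(p-1)`. Each `δ_i^(p-1)` replaces the factor `z_i^(p-1)` by `(p-1)!`, so the composite
sends it to a nonzero multiple of the product of the remaining `z_s^(p-1)`.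
-/

universe u v

section NilpotentMonomials

variable {R S : Type*} [CommSemiring R] [CommSemiring S] [Algebra R S]

lemma pow_char_eq_zero_of_mem_span {p : ℕ} [ExpChar S p] {s : Set S} (hs : ∀ x ∈ s, x ^ p = 0)
    {v : S} (hv : v ∈ Submodule.span R s) : v ^ p = 0 := by
  induction hv using Submodule.span_induction with
  | mem x hx => exact hs x hx
  | zero => exact zero_pow (expChar_ne_zero S p)
  | add x y _ _ hx hy => rw [add_pow_expChar, hx, hy, add_zero]
  | smul r x _ hx => rw [smul_pow, hx, smul_zero]

variable {κ ι : Type*} [Fintype κ] [Fintype ι] {n : ℕ}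

lemma exponent_eq_of_degree_eq_card_mul {d : κ →₀ ℕ} (hd : d.degree = Fintype.card κ * n)
    (hle : ∀ j, d j ≤ n) (j : κ) : d j = n := by
  have hsum : ∑ j, d j = ∑ _j : κ, n := by
    simpa [Finsupp.degree_eq_sum] using hd
  exact (Finset.sum_eq_sum_iff_of_le fun j _ => hle j).1 hsum j (Finset.mem_univ j)

/-- The exponents of a monomial of degree `n * card κ` are either all equal to `n`, or one of them
exceeds `n`. -/
lemma aeval_eq_coeff_smul_prod_pow {P : MvPolynomial κ R}
    (hP : P.IsHomogeneous (Fintype.card κ * n)) {y : κ → S} (hy : ∀ j, y j ^ (n + 1) = 0) :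
    aeval y P = P.coeff (Finsupp.equivFunOnFinite.symm fun _ => n) • ∏ j, y j ^ n := by
  set τ : κ →₀ ℕ := Finsupp.equivFunOnFinite.symm fun _ => n
  have monomial_eq_zero : ∀ d ∈ P.support, d ≠ τ → P.coeff d • ∏ j, y j ^ d j = 0 := by
    intro d hd hne
    obtain ⟨j, hj⟩ : ∃ j, n < d j := by
      by_contra! hle
      have hdeg : d.degree = Fintype.card κ * n :=
        of_not_not fun h => mem_support_iff.1 hd (hP.coeff_eq_zero h)
      exact hne (Finsupp.ext (exponent_eq_of_degree_eq_card_mul hdeg hle))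
    have hj_zero : y j ^ d j = 0 := pow_eq_zero_of_le hj (hy j)
    rw [Finset.prod_eq_zero (Finset.mem_univ j) hj_zero, smul_zero]
  simp_rw [aeval_def, eval₂_eq', ← Algebra.smul_def]
  rw [Finset.sum_eq_single τ monomial_eq_zero]
  · simp [τ]
  · intro h
    rw [notMem_support_iff.1 h, zero_smul]

lemma exists_prod_pow_eq_smul_prod_pow (hcard : Fintype.card ι = Fintype.card κ) {y : κ → S}
    (hy : ∀ j, y j ^ (n + 1) = 0) {x : ι → S} (hx : ∀ i, x i ∈ Submodule.span R (Set.range y)) :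
    ∃ r : R, ∏ i, x i ^ n = r • ∏ j, y j ^ n := by
  choose a ha using fun i => (Submodule.mem_span_range_iff_exists_fun R).1 (hx i)
  let P : MvPolynomial κ R := ∏ i, (∑ j, C (a i j) * X j) ^ n
  have hP : P.IsHomogeneous (Fintype.card κ * n) := by
    have h : P.IsHomogeneous (∑ _i : ι, 1 * n) :=
      .prod _ _ _ fun i _ => (IsHomogeneous.sum _ _ _ fun j _ => isHomogeneous_C_mul_X _ _).pow n
    simpa [hcard] using h
  refine ⟨_, Eq.trans ?_ (aeval_eq_coeff_smul_prod_pow hP hy)⟩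
  simp [P, ← ha, Algebra.smul_def]

end NilpotentMonomials

section LinearDependence

variable {F : Type u} [Field F] {n : ℕ}

lemma prod_pow_eq_zero_of_not_linearIndependent {S κ : Type*} [CommRing S] [Algebra F S]
    [Fintype κ] (hn : n ≠ 0) {y : κ → S} (hy : ∀ j, y j ^ (n + 1) = 0)
    (hdep : ¬ LinearIndependent F y) : ∏ j, y j ^ n = 0 := by
  classical
  obtain ⟨g, hg, i, hi⟩ := Fintype.not_linearIndependent_iff.1 hdep
  let Q := ∏ l ∈ Finset.univ.erase i, y l ^ n
  have mul_eq_zero_of_ne : ∀ j, j ≠ i → y j * Q = 0 := fun j hj => by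
    have hj_mem : j ∈ Finset.univ.erase i := Finset.mem_erase.2 ⟨hj, Finset.mem_univ j⟩
    simp only [Q, ← Finset.mul_prod_erase _ (fun l => y l ^ n) hj_mem]
    rw [← mul_assoc, ← pow_succ', hy, zero_mul]
  have mul_eq_zero : y i * Q = 0 := by
    have h : ∑ j, g j • (y j * Q) = 0 := by
      simp_rw [← smul_mul_assoc, ← Finset.sum_mul, hg, zero_mul]
    rw [Fintype.sum_eq_single i fun j hj => by rw [mul_eq_zero_of_ne j hj, smul_zero]] at h
    exact (smul_eq_zero_iff_right hi).1 h
  rw [← Finset.mul_prod_erase _ _ (Finset.mem_univ i), ← Nat.succ_pred_eq_of_ne_zero hn, pow_succ,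
    Nat.succ_pred_eq_of_ne_zero hn, mul_assoc, mul_eq_zero, mul_zero]

open scoped IsMulCommutative in
lemma list_prod_pow_eq_zero_of_not_linearIndependent {S : Type*} [Ring S] [Algebra F S] {k : ℕ}
    (hn : n ≠ 0) {y : Fin k → S} (hcomm : ∀ i j, Commute (y i) (y j))
    (hy : ∀ j, y j ^ (n + 1) = 0) (hdep : ¬ LinearIndependent F y) :
    (List.ofFn fun j => y j ^ n).prod = 0 := by
  have : IsMulCommutative (Algebra.adjoin F (Set.range y)) := by
    apply Algebra.isMulCommutative_adjoin
    rintro _ ⟨i, rfl⟩ _ ⟨j, rfl⟩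
    exact hcomm i j
  let y' : Fin k → Algebra.adjoin F (Set.range y) := fun j => ⟨y j, Algebra.subset_adjoin ⟨j, rfl⟩⟩
  have hy' : ∀ j, y' j ^ (n + 1) = 0 := fun j => Subtype.ext (hy j)
  have hdep' : ¬ LinearIndependent F y' := fun h =>
    hdep (h.map' (Algebra.adjoin F (Set.range y)).val.toLinearMap
      (LinearMap.ker_eq_bot.2 Subtype.val_injective))
  have h := congrArg (Algebra.adjoin F (Set.range y)).val
    (prod_pow_eq_zero_of_not_linearIndependent hn hy' hdep')
  rwa [← List.prod_ofFn, map_list_prod, List.map_ofFn, map_zero] at h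

lemma basis_sumExtend_inl {K V η : Type*} [DivisionRing K] [AddCommGroup V] [Module K V]
    {v : η → V} (hv : LinearIndependent K v) (i : η) :
    Module.Basis.sumExtend hv (.inl i) = v i := by
  rw [Module.Basis.sumExtend, Module.Basis.reindex_apply, Module.Basis.extend_apply_self]
  rfl

lemma exists_basis_apply_eq_single_of_linearIndependent {V : Type v} {η : Type*} [AddCommGroup V]
    [Module F V] [FiniteDimensional F V] [DecidableEq η] {f : η → Module.Dual F V}
    (hf : LinearIndependent F f) :
    ∃ (κ : Type max u v) (b : Module.Basis (η ⊕ κ) F V),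
      (∀ i j, f i (b (.inl j)) = if i = j then 1 else 0) ∧ ∀ i j, f i (b (.inr j)) = 0 := by
  classical
  let B := Module.Basis.sumExtend hf
  have := Module.Finite.finite_basis B
  let b := B.dualBasis.map (Module.evalEquiv F V).symm
  have hb : ∀ i s, f i (b s) = if Sum.inl i = s then 1 else 0 := fun i s => by
    rw [← basis_sumExtend_inl hf]
    simp [b, B, Finsupp.single_apply]
  exact ⟨_, b, fun i j => by simp [hb], fun i j => by simp [hb]⟩

end LinearDependence

section DerivationPowers

variable {R A : Type*} [CommSemiring R] [CommSemiring A] [Algebra R A]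

lemma derivation_pow_apply_mul (D : Derivation R A A) (n : ℕ) (a b : A) :
    ((D : Module.End R A) ^ n) (a * b) =
      ∑ ij ∈ Finset.HasAntidiagonal.antidiagonal n,
        n.choose ij.1 • (((D : Module.End R A) ^ ij.1) a * ((D : Module.End R A) ^ ij.2) b) := by
  induction n with
  | zero => simp
  | succ n ih =>
    rw [Finset.sum_antidiagonal_choose_succ_nsmul
      (M := A) fun i j => ((D : Module.End R A) ^ i) a * ((D : Module.End R A) ^ j) b]
    simp only [pow_succ', Module.End.mul_apply, ih, map_sum, map_nsmul, Derivation.coeFn_coe,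
      Derivation.leibniz, smul_eq_mul, smul_add, Finset.sum_add_distrib]
    refine congrArg₂ _ rfl (Finset.sum_congr rfl fun ⟨i, j⟩ hij => ?_)
    rw [n.choose_symm_of_eq_add (Finset.HasAntidiagonal.mem_antidiagonal.1 hij).symm, mul_comm]

lemma derivation_pow_apply_pow_mul {D : Derivation R A A} {z a : A} (hz : D z = 1) (ha : D a = 0)
    (n : ℕ) : ((D : Module.End R A) ^ n) (z ^ n * a) = n.factorial • a := by
  induction n with
  | zero => simp
  | succ n ih =>
    have h : D (z ^ (n + 1) * a) = (n + 1) • (z ^ n * a) := by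
      rw [Derivation.leibniz, Derivation.leibniz_pow, hz, ha, smul_zero, zero_add,
        Nat.add_sub_cancel, smul_eq_mul, smul_eq_mul, mul_one, mul_smul_comm, mul_comm a]
    rw [pow_succ, Module.End.mul_apply, Derivation.coeFn_coe, h, map_nsmul, ih, smul_smul,
      Nat.factorial_succ]

lemma derivation_pow_char_apply_mul (p : ℕ) [Fact p.Prime] [CharP A p] (D : Derivation R A A)
    (a b : A) :
    ((D : Module.End R A) ^ p) (a * b) =
      a * ((D : Module.End R A) ^ p) b + b * ((D : Module.End R A) ^ p) a := by
  have hp : p.Prime := Fact.out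
  rw [derivation_pow_apply_mul, Finset.sum_eq_add_of_mem (0, p) (p, 0) (by simp) (by simp)
    (by simp [hp.ne_zero.symm])]
  · simp [mul_comm]
  · rintro ⟨i, j⟩ hij ⟨h₁, h₂⟩
    rw [Finset.HasAntidiagonal.mem_antidiagonal] at hij
    have hdvd : p ∣ p.choose i := hp.dvd_choose_self (by grind) (by grind)
    rw [nsmul_eq_mul, (CharP.cast_eq_zero_iff A p _).2 hdvd, zero_mul]

/-- The composite `δ₁ⁿ ∘ ⋯ ∘ δₖⁿ`, with the last derivation applied first. -/
abbrev powComposite {k : ℕ} (δ : Fin k → Derivation R A A) (n : ℕ) : Module.End R A :=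
  (List.ofFn fun j => (δ j : Module.End R A) ^ n).prod

lemma powComposite_apply_prod_pow_mul {k : ℕ} {δ : Fin k → Derivation R A A}
    {z : Fin k → A} (hz : ∀ i j, δ i (z j) = if i = j then 1 else 0) {a : A}
    (ha : ∀ i, δ i a = 0) (n : ℕ) :
    powComposite δ n ((∏ j, z j ^ n) * a) = n.factorial ^ k • a := by
  induction k generalizing a with
  | zero => simp [powComposite]
  | succ k ih =>
    have hz₀ : ∀ i : Fin k, δ i.succ (z 0 ^ n * a) = 0 := fun i => by
      simp [Derivation.leibniz_pow, hz, ha]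
    rw [Fin.prod_univ_succ, mul_comm (z 0 ^ n), mul_assoc, powComposite, List.ofFn_succ,
      List.prod_cons, Module.End.mul_apply, ih (fun i j => by simp [hz]) hz₀, map_nsmul,
      derivation_pow_apply_pow_mul (by simp [hz]) (ha 0), smul_smul, pow_succ]

end DerivationPowers

section DerivationsOfGeneratedAlgebras

variable {R A : Type*} [CommRing R] [CommRing A] [Algebra R A]

/-- The `p`-th power of a derivation, again a derivation in characteristic `p`: the `p`-operation
of the restricted Lie algebra of derivations. -/
def derivationPowChar (p : ℕ) [Fact p.Prime] [CharP A p] (D : Derivation R A A) :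
    Derivation R A A :=
  .mk' ((D : Module.End R A) ^ p) (derivation_pow_char_apply_mul p D)

variable {s : Set A}

lemma derivation_pow_char_eq_zero_of_adjoin_eq_top {p : ℕ} [Fact p.Prime] [CharP A p]
    (hs : Algebra.adjoin R s = ⊤) {D : Derivation R A A}
    (hD : ∀ a ∈ s, ((D : Module.End R A) ^ p) a = 0) : (D : Module.End R A) ^ p = 0 := by
  have h : derivationPowChar p D = 0 := Derivation.ext_of_adjoin_eq_top s hs hD
  exact congrArg Derivation.toLinearMap h

lemma derivation_commute_of_adjoin_eq_top (hs : Algebra.adjoin R s = ⊤) {D E : Derivation R A A}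
    (hDE : ∀ a ∈ s, D (E a) = E (D a)) : Commute (D : Module.End R A) (E : Module.End R A) := by
  have h : ⁅D, E⁆ = 0 := Derivation.ext_of_adjoin_eq_top s hs fun a ha => by
    simp [Derivation.commutator_apply, hDE a ha]
  refine LinearMap.ext fun a => ?_
  have h := Derivation.congr_fun h a
  exact sub_eq_zero.1 h

lemma linearIndependent_dual_of_derivation_apply {V κ : Type*} [AddCommGroup V] [Module R V]
    {ℓ : V →ₗ[R] A} (hℓ : Algebra.adjoin R (Set.range ℓ) = ⊤) {δ : κ → Derivation R A A}
    {f : κ → Module.Dual R V} (hf : ∀ j v, δ j (ℓ v) = algebraMap R A (f j v))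
    (hδ : LinearIndependent R δ) : LinearIndependent R f := by
  let res : Derivation R A A →ₗ[R] V →ₗ[R] A :=
    { toFun D := D.toLinearMap ∘ₗ ℓ
      map_add' _ _ := rfl
      map_smul' _ _ := rfl }
  have res_injective : Function.Injective res := fun D E h =>
    Derivation.ext_of_adjoin_eq_top _ hℓ (Set.forall_mem_range.2 (LinearMap.congr_fun h))
  have hres : LinearMap.compRight R (Algebra.linearMap R A) ∘ f = res ∘ δ := by
    ext j v
    exact (hf j v).symm
  refine .of_comp (LinearMap.compRight R (Algebra.linearMap R A)) ?_
  rw [hres]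
  exact hδ.map' res (LinearMap.ker_eq_bot.2 res_injective)

end DerivationsOfGeneratedAlgebras

section DegreeNegOne

variable {F : Type u} [Field F] {A : Type*} [CommRing A] [Algebra F A]
variable {ι : Type v} [Fintype ι] {x : ι → A}

lemma powComposite_eq_zero_of_not_linearIndependent {p : ℕ} [Fact p.Prime] [CharP A p]
    {s : Set A} (hs : Algebra.adjoin F s = ⊤) {k : ℕ} {δ : Fin k → Derivation F A A}
    (hδ : ∀ j, ∀ a ∈ s, ∃ c : F, δ j a = algebraMap F A c) (hdep : ¬ LinearIndependent F δ) :
    powComposite δ (p - 1) = 0 := by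
  have hp : p.Prime := Fact.out
  have apply_apply : ∀ i j, ∀ a ∈ s, δ i (δ j a) = 0 := fun i j a ha => by
    obtain ⟨c, hc⟩ := hδ j a ha
    rw [hc, Derivation.map_algebraMap]
  have pow_char_eq_zero : ∀ j, (δ j : Module.End F A) ^ (p - 1 + 1) = 0 := fun j => by
    rw [Nat.sub_add_cancel hp.one_le]
    refine derivation_pow_char_eq_zero_of_adjoin_eq_top hs fun a ha => ?_
    have h : ((δ j : Module.End F A) ^ 2) a = 0 := apply_apply j j a ha
    rw [← Nat.sub_add_cancel hp.two_le, pow_add, Module.End.mul_apply, h, map_zero]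
  have commute : ∀ i j, Commute (δ i : Module.End F A) (δ j : Module.End F A) := fun i j =>
    derivation_commute_of_adjoin_eq_top hs fun a ha => by
      rw [apply_apply i j a ha, apply_apply j i a ha]
  have toLinearMap_dep : ¬ LinearIndependent F fun j => (δ j : Module.End F A) := fun h =>
    let toEnd : Derivation F A A →ₗ[F] Module.End F A :=
      { toFun := Derivation.toLinearMap
        map_add' _ _ := rfl
        map_smul' _ _ := rfl }
    hdep (.of_comp toEnd h)
  exact list_prod_pow_eq_zero_of_not_linearIndependent hp.pred_pos.ne' commute pow_char_eq_zero
    toLinearMap_dep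

lemma exists_dual_apply_linearCombination {D : Derivation F A A}
    (hD : ∀ i, ∃ c : F, D (x i) = algebraMap F A c) :
    ∃ f : Module.Dual F (ι → F),
      ∀ v, D (Fintype.linearCombination F x v) = algebraMap F A (f v) := by
  choose c hc using hD
  refine ⟨Fintype.linearCombination F c, fun v => ?_⟩
  simp [Fintype.linearCombination_apply, hc, Algebra.smul_def]

lemma exists_adapted_generators (hx : Algebra.adjoin F (Set.range x) = ⊤) {k : ℕ}
    {δ : Fin k → Derivation F A A} (hδ : ∀ j i, ∃ c : F, δ j (x i) = algebraMap F A c)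
    (hli : LinearIndependent F δ) :
    ∃ (κ : Type max u v) (_ : Fintype κ) (z : Fin k ⊕ κ → A),
      Fintype.card ι = Fintype.card (Fin k ⊕ κ) ∧
      Submodule.span F (Set.range z) = Submodule.span F (Set.range x) ∧
      (∀ i j, δ i (z (.inl j)) = if i = j then 1 else 0) ∧ ∀ i j, δ i (z (.inr j)) = 0 := by
  classical
  let ℓ := Fintype.linearCombination F x
  have hℓ : Algebra.adjoin F (Set.range ℓ) = ⊤ := by
    rw [← LinearMap.coe_range, Fintype.range_linearCombination, Algebra.adjoin_span, hx]
  choose f hf using fun j => exists_dual_apply_linearCombination (hδ j)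
  obtain ⟨κ, b, hb_inl, hb_inr⟩ := exists_basis_apply_eq_single_of_linearIndependent
    (linearIndependent_dual_of_derivation_apply hℓ hf hli)
  have : Finite (Fin k ⊕ κ) := Module.Finite.finite_basis b
  have : Finite κ := .of_injective (Sum.inr : κ → Fin k ⊕ κ) Sum.inr_injective
  have := Fintype.ofFinite κ
  refine ⟨κ, this, ℓ ∘ b, ?_, ?_, fun i j => ?_, fun i j => ?_⟩
  · rw [← Module.finrank_eq_card_basis b, Module.finrank_fintype_fun_eq_card]
  · rw [Set.range_comp, ← Submodule.map_span, b.span_eq, Submodule.map_top,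
      Fintype.range_linearCombination]
  · rw [Function.comp_apply, hf, hb_inl, apply_ite (algebraMap F A), map_one, map_zero]
  · rw [Function.comp_apply, hf, hb_inr, map_zero]

lemma powComposite_apply_ne_zero_of_linearIndependent {p : ℕ} [Fact p.Prime] [CharP A p]
    (hx : Algebra.adjoin F (Set.range x) = ⊤) (hxp : ∀ i, x i ^ p = 0)
    (hx_top : ∏ i, x i ^ (p - 1) ≠ 0) {k : ℕ} {δ : Fin k → Derivation F A A}
    (hδ : ∀ j i, ∃ c : F, δ j (x i) = algebraMap F A c) (hli : LinearIndependent F δ) :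
    powComposite δ (p - 1) (∏ i, x i ^ (p - 1)) ≠ 0 := by
  have hp : p.Prime := Fact.out
  obtain ⟨κ, _, z, hcard, hspan, hz_inl, hz_inr⟩ := exists_adapted_generators hx hδ hli
  have hzp : ∀ s, z s ^ (p - 1 + 1) = 0 := fun s => by
    rw [Nat.sub_add_cancel hp.one_le]
    exact pow_char_eq_zero_of_mem_span (Set.forall_mem_range.2 hxp)
      (hspan ▸ Submodule.subset_span (Set.mem_range_self s))
  obtain ⟨r, hr⟩ := exists_prod_pow_eq_smul_prod_pow hcard hzp
    fun i => hspan ▸ Submodule.subset_span (Set.mem_range_self i)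
  rw [Fintype.prod_sum_type] at hr
  set w := ∏ j, z (.inr j) ^ (p - 1)
  have hw : ∀ i, δ i w = 0 := fun i =>
    Finset.prod_induction _ (δ i · = 0) (fun a b ha hb => by simp [ha, hb]) (by simp)
      fun j _ => by simp [Derivation.leibniz_pow, hz_inr]
  intro h
  rw [hr, map_smul, powComposite_apply_prod_pow_mul hz_inl hw, nsmul_eq_mul,
    Nat.cast_pow, ← mul_smul_comm] at h
  have factorial_isUnit : IsUnit ((p - 1).factorial : A) := by
    rw [IsUnit.natCast_factorial_iff_of_charP p]
    exact Nat.sub_one_lt hp.ne_zero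
  have hrw : r • w = 0 := (factorial_isUnit.pow k).mul_right_eq_zero.1 h
  exact hx_top (by rw [hr, ← mul_smul_comm, hrw, mul_zero])

theorem derivations_linearDependent_iff_composite_eq_zero_general {p : ℕ} (hp : p.Prime) [CharP F p]
    (hx : Algebra.adjoin F (Set.range x) = ⊤) (hxp : ∀ i, x i ^ p = 0)
    (hx_top : ∏ i, x i ^ (p - 1) ≠ 0) {k : ℕ} {δ : Fin k → Derivation F A A}
    (hδ : ∀ j i, ∃ c : F, δ j (x i) = algebraMap F A c) :
    (¬ LinearIndependent F δ ↔ powComposite δ (p - 1) = 0) ∧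
      (powComposite δ (p - 1) = 0 ↔ powComposite δ (p - 1) (∏ i, x i ^ (p - 1)) = 0) := by
  have : Fact p.Prime := ⟨hp⟩
  have : Nontrivial A := nontrivial_of_ne _ _ hx_top
  have : CharP A p := charP_of_injective_algebraMap' F p
  have eq_zero_of_dep : ¬ LinearIndependent F δ → powComposite δ (p - 1) = 0 :=
    powComposite_eq_zero_of_not_linearIndependent hx fun j => Set.forall_mem_range.2 (hδ j)
  have dep_of_apply_eq_zero (h : powComposite δ (p - 1) (∏ i, x i ^ (p - 1)) = 0) :
      ¬ LinearIndependent F δ := fun hli =>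
    powComposite_apply_ne_zero_of_linearIndependent hx hxp hx_top hδ hli h
  have apply_eq_zero (h : powComposite δ (p - 1) = 0) :
      powComposite δ (p - 1) (∏ i, x i ^ (p - 1)) = 0 := by rw [h, LinearMap.zero_apply]
  exact ⟨⟨eq_zero_of_dep, dep_of_apply_eq_zero ∘ apply_eq_zero⟩,
    ⟨apply_eq_zero, eq_zero_of_dep ∘ dep_of_apply_eq_zero⟩⟩

end DegreeNegOne

section TruncPoly

variable (F : Type) [Field F] (p m : ℕ)

lemma adjoin_range_xVar : Algebra.adjoin F (Set.range (xVar F p m)) = ⊤ := by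
  let π := Ideal.Quotient.mkₐ F
    (Ideal.span (Set.range fun i : Fin m => (X i : MvPolynomial (Fin m) F) ^ p))
  have h : Set.range (xVar F p m) = π '' Set.range X := Set.range_comp π X
  rw [h, ← AlgHom.map_adjoin, adjoin_range_X, Algebra.map_top,
    (AlgHom.range_eq_top _).2 (Ideal.Quotient.mkₐ_surjective F _)]

lemma xVar_pow_eq_zero (i : Fin m) : xVar F p m i ^ p = 0 := by
  rw [xVar, ← map_pow]
  exact Ideal.Quotient.eq_zero_iff_mem.2 (Ideal.subset_span ⟨i, rfl⟩)

lemma xTau_eq_prod_xVar_pow : xTau F p m = ∏ i, xVar F p m i ^ (p - 1) := by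
  simp [xTau, xVar]

variable {p} in
lemma xTau_ne_zero (hp : 0 < p) : xTau F p m ≠ 0 := by
  let τ : Fin m →₀ ℕ := Finsupp.equivFunOnFinite.symm fun _ => p - 1
  have hτ : ∏ i, (X i : MvPolynomial (Fin m) F) ^ (p - 1) = monomial τ 1 := by
    simp [monomial_eq, Finsupp.prod_fintype, τ]
  have hI : Set.range (fun i : Fin m => (X i : MvPolynomial (Fin m) F) ^ p) =
      (fun s => monomial s 1) '' Set.range fun i => Finsupp.single i p := by
    simp [← Set.range_comp, Function.comp_def, X_pow_eq_monomial]
  rw [xTau, hτ, Ne, Ideal.Quotient.eq_zero_iff_mem, hI, mem_ideal_span_monomial_image]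
  simp [τ, hp]

end TruncPoly

/-- For derivations `δ_1, …, δ_k` of `B_m` homogeneous of degree `-1`, the
following are equivalent: (i) they are linearly dependent over `F`; (ii) the composite
endomorphism `δ_1^(p-1) ∘ ⋯ ∘ δ_k^(p-1)` is zero; (iii) that composite kills `x^τ`. -/
theorem derivations_linearDependent_iff_composite_eq_zero
    (p : ℕ) (hp : p.Prime) (hp3 : 3 < p) (F : Type) [Field F] [CharP F p]
    (m : ℕ) (hm : 1 ≤ m) (k : ℕ)
    (δ : Fin k → Derivation F (TruncPoly F p m) (TruncPoly F p m))
    (hδ : ∀ j, IsDegNegOne F p m (δ j)) :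
    (¬ LinearIndependent F δ ↔
        (List.ofFn fun j : Fin k =>
          ((δ j).toLinearMap : Module.End F (TruncPoly F p m)) ^ (p - 1)).prod = 0) ∧
      ((List.ofFn fun j : Fin k =>
          ((δ j).toLinearMap : Module.End F (TruncPoly F p m)) ^ (p - 1)).prod = 0 ↔
        (List.ofFn fun j : Fin k =>
          ((δ j).toLinearMap : Module.End F (TruncPoly F p m)) ^ (p - 1)).prod
            (xTau F p m) = 0) := by
  rw [xTau_eq_prod_xVar_pow]
  exact derivations_linearDependent_iff_composite_eq_zero_general hp (adjoin_range_xVar F p m)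
    (xVar_pow_eq_zero F p m) (xTau_eq_prod_xVar_pow F p m ▸ xTau_ne_zero F m hp.pos) hδ
end

section
/- Let p > 3 be a prime, F an algebraically closed field of characteristic p, and m ≥ 1. Let B_m = F[X_1, …, X_m]/(X_1^p, …, X_m^p) be the truncated polynomial algebra. Then the Lie algebra W(m,1) = Der_F(B_m) of all F-linear derivations of B_m, with bracket the commutator ⁅δ,η⁆ = δ∘η − η∘δ, is a simple Lie algebra: it is not abelian and has no ideals other than 0 and itself. -/
open MvPolynomial

set_option synthInstance.maxHeartbeats 1000000
set_option maxHeartbeats 1000000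

/-!
In the coordinates `x_i`, with partial derivatives `∂_i`, every derivation is `∑ i, f_i ∂_i`. Let
`I` be a nonzero ideal. The operators `ad ∂_i` commute and are locally nilpotent, so they kill a
common nonzero `D ∈ I`; the coefficients of `D` are then constants, and the brackets `⁅D, x_j ∂_k⁆`
show that every `∂_k` lies in `I`.

Let now `g` be a monomial, with `x_k ∂_k g = c_k g`. If `c_k ≠ -1` for some `k`, then `g ∂_j ∈ I`,
because `⁅∂_k, (x_k g) ∂_j⁆ = (c_k + 1) g ∂_j`; this applies to the monomials `x_k`. If every `c_k`
is `-1`, then `⁅x_k ∂_k, g ∂_j⁆ = (-1 - δ_jk) g ∂_j`, and `k` can be chosen with `δ_jk ≠ -1` unless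
there is a single coordinate and the characteristic is `2`.
-/

theorem exists_mem_ne_zero_forall_apply_eq_zero {ι R M : Type*} [Finite ι] [Semiring R]
    [AddCommMonoid M] [Module R M] (f : ι → Module.End R M)
    (hcomm : ∀ i j, Function.Commute (f i) (f j)) (hnil : ∀ i v, ∃ n, (f i)^[n] v = 0)
    {W : Submodule R M} (hW : ∀ i, Set.MapsTo (f i) W W) (hne : W ≠ ⊥) :
    ∃ v ∈ W, v ≠ 0 ∧ ∀ i, f i v = 0 := by
  classical
  cases nonempty_fintype ι
  suffices ∀ s : Finset ι, ∃ v ∈ W, v ≠ 0 ∧ ∀ i ∈ s, f i v = 0 by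
    simpa using this Finset.univ
  intro s
  induction s using Finset.induction_on with
  | empty => simpa using W.exists_mem_ne_zero_of_ne_bot hne
  | insert i s _ ih =>
    obtain ⟨v, hvW, hv, hker⟩ := ih
    obtain ⟨n, hn, hn_succ⟩ : ∃ n, (f i)^[n] v ≠ 0 ∧ (f i)^[n + 1] v = 0 :=
      Nat.exists_not_and_succ_of_not_zero_of_exists (p := fun n ↦ (f i)^[n] v = 0) hv (hnil i v)
    refine ⟨(f i)^[n] v, (hW i).iterate n hvW, hn, (Finset.forall_mem_insert _ _ _).2 ⟨?_, ?_⟩⟩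
    · rwa [← Function.iterate_succ_apply' (f i)]
    · intro j hj
      rw [(hcomm j i).iterate_right n v, hker j hj, iterate_map_zero]

theorem iterate_derivation_mul_eq_zero {R A : Type*} [CommSemiring R] [CommSemiring A]
    [Algebra R A] (D : Derivation R A A) :
    ∀ (m n : ℕ) {a b : A}, D^[m] a = 0 → D^[n] b = 0 → D^[m + n] (a * b) = 0
  | 0, n, a, b, ha, _ => by
    rw [Function.iterate_zero_apply] at ha
    rw [ha, zero_mul, iterate_map_zero]
  | m, 0, a, b, _, hb => by
    rw [Function.iterate_zero_apply] at hb
    rw [hb, mul_zero, iterate_map_zero]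
  | m + 1, n + 1, a, b, ha, hb => by
    have hleft : D^[m + 1 + n] (b * D a) = 0 := by
      rw [mul_comm, add_right_comm, add_assoc]
      exact iterate_derivation_mul_eq_zero D m (n + 1) ha hb
    have hright : D^[m + 1 + n] (a * D b) = 0 :=
      iterate_derivation_mul_eq_zero D (m + 1) n ha hb
    rw [← add_assoc, Function.iterate_succ_apply, D.leibniz, smul_eq_mul, smul_eq_mul,
      iterate_map_add, hleft, hright, add_zero]

theorem iterate_map_eq_zero_of_le {M F : Type*} [Zero M] [FunLike F M M] [ZeroHomClass F M M]
    (f : F) {m n : ℕ} {v : M} (hmn : m ≤ n) (hv : f^[m] v = 0) : f^[n] v = 0 := by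
  rw [← Nat.sub_add_cancel hmn, Function.iterate_add_apply, hv, iterate_map_zero]

theorem exists_single_one_ne_neg_one {ι R : Type*} [DecidableEq ι] [Ring R] [Nontrivial R]
    (h : (2 : R) ≠ 0 ∨ Nontrivial ι) (j : ι) : ∃ k, (Pi.single j 1 : ι → R) k ≠ -1 := by
  obtain h2 | hι := h
  · refine ⟨j, fun hneg ↦ h2 ?_⟩
    rwa [Pi.single_eq_same, eq_neg_iff_add_eq_zero, one_add_one_eq_two] at hneg
  · obtain ⟨k, hk⟩ := exists_ne j
    exact ⟨k, by simp [hk]⟩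

/-- A system of coordinates on an `R`-algebra `A`: generators `coord i` together with derivations
`pderiv i` dual to them. It abstracts the variables and the partial derivatives of a polynomial
algebra or of a truncated one. -/
structure CoordinateSystem (R A ι : Type*) [CommRing R] [CommRing A] [Algebra R A]
    [DecidableEq ι] where
  coord : ι → A
  adjoin_range_coord : Algebra.adjoin R (Set.range coord) = ⊤
  pderiv : ι → Derivation R A A
  pderiv_coord : ∀ i j, pderiv i (coord j) = (Pi.single i 1 : ι → A) j

namespace CoordinateSystem

section CommRing

variable {R A ι : Type*} [CommRing R] [CommRing A] [Algebra R A] [DecidableEq ι]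
  (S : CoordinateSystem R A ι)

theorem derivation_ext {D E : Derivation R A A} (h : ∀ i, D (S.coord i) = E (S.coord i)) :
    D = E :=
  Derivation.ext_of_adjoin_eq_top _ S.adjoin_range_coord (Set.forall_mem_range.2 h)

theorem sum_smul_pderiv [Fintype ι] (D : Derivation R A A) :
    ∑ i, D (S.coord i) • S.pderiv i = D := by
  refine S.derivation_ext fun j ↦ ?_
  have happly : (∑ i, D (S.coord i) • S.pderiv i) (S.coord j) =
      ∑ i, (D (S.coord i) • S.pderiv i) (S.coord j) := by
    simp only [← Derivation.coeFnAddMonoidHom_apply, map_sum, Finset.sum_apply]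
  rw [happly]
  simp [S.pderiv_coord, Pi.single_apply]

theorem lie_pderiv_apply_coord (i j : ι) (D : Derivation R A A) :
    ⁅S.pderiv i, D⁆ (S.coord j) = S.pderiv i (D (S.coord j)) := by
  rw [Derivation.commutator_apply, S.pderiv_coord, Pi.single_apply]
  split_ifs <;> simp

theorem lie_pderiv_pderiv (i j : ι) : ⁅S.pderiv i, S.pderiv j⁆ = 0 := by
  refine S.derivation_ext fun k ↦ ?_
  rw [S.lie_pderiv_apply_coord, S.pderiv_coord, Pi.single_apply]
  split_ifs <;> simp

theorem lie_pderiv_smul_pderiv (i j : ι) (f : A) :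
    ⁅S.pderiv i, f • S.pderiv j⁆ = S.pderiv i f • S.pderiv j := by
  rw [LieRinehartRing.leibniz_smul_right, S.lie_pderiv_pderiv, smul_zero, zero_add,
    Derivation.bracket_eq_fun]

theorem lie_coord_smul_pderiv_smul_pderiv {g : A} {c : R} {k : ι}
    (hg : S.coord k * S.pderiv k g = c • g) (j : ι) :
    ⁅S.coord k • S.pderiv k, g • S.pderiv j⁆ =
      (c - (Pi.single j 1 : ι → R) k) • g • S.pderiv j := by
  have hlie : ⁅S.coord k • S.pderiv k, S.pderiv j⁆ =
      -((Pi.single j 1 : ι → R) k • S.pderiv j) := by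
    rw [← lie_skew, S.lie_pderiv_smul_pderiv, S.pderiv_coord]
    obtain rfl | hkj := eq_or_ne k j
    · simp
    · simp [hkj]
  rw [LieRinehartRing.leibniz_smul_right, hlie, Derivation.bracket_eq_fun, Derivation.smul_apply,
    smul_eq_mul, hg, smul_neg, smul_comm g, sub_smul, smul_assoc, neg_add_eq_sub]

theorem exists_iterate_pderiv_eq_zero (i : ι) (a : A) : ∃ n, (S.pderiv i)^[n] a = 0 := by
  have ha : a ∈ Algebra.adjoin R (Set.range S.coord) := S.adjoin_range_coord ▸ Algebra.mem_top
  induction ha using Algebra.adjoin_induction with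
  | mem _ hx =>
    obtain ⟨j, rfl⟩ := hx
    refine ⟨2, ?_⟩
    rw [Function.iterate_succ_apply, S.pderiv_coord, Pi.single_apply]
    split_ifs <;> simp
  | algebraMap r => exact ⟨1, (S.pderiv i).map_algebraMap r⟩
  | add a b _ _ ha hb =>
    obtain ⟨m, hm⟩ := ha
    obtain ⟨n, hn⟩ := hb
    refine ⟨max m n, ?_⟩
    rw [iterate_map_add, iterate_map_eq_zero_of_le _ (le_max_left m n) hm,
      iterate_map_eq_zero_of_le _ (le_max_right m n) hn, add_zero]
  | mul a b _ _ ha hb =>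
    obtain ⟨m, hm⟩ := ha
    obtain ⟨n, hn⟩ := hb
    exact ⟨m + n, iterate_derivation_mul_eq_zero _ m n hm hn⟩

theorem iterate_ad_pderiv_apply_coord (i j : ι) (n : ℕ) (D : Derivation R A A) :
    ((LieAlgebra.ad R _ (S.pderiv i))^[n] D) (S.coord j) =
      (S.pderiv i)^[n] (D (S.coord j)) := by
  induction n with
  | zero => rfl
  | succ n ih =>
    rw [Function.iterate_succ_apply', Function.iterate_succ_apply', LieAlgebra.ad_apply,
      S.lie_pderiv_apply_coord, ih]

theorem exists_iterate_ad_pderiv_eq_zero [Finite ι] (i : ι) (D : Derivation R A A) :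
    ∃ n, (LieAlgebra.ad R _ (S.pderiv i))^[n] D = 0 := by
  cases nonempty_fintype ι
  choose n hn using fun j ↦ S.exists_iterate_pderiv_eq_zero i (D (S.coord j))
  refine ⟨Finset.univ.sup n, S.derivation_ext fun j ↦ ?_⟩
  rw [S.iterate_ad_pderiv_apply_coord, Derivation.zero_apply]
  exact iterate_map_eq_zero_of_le _ (Finset.le_sup (Finset.mem_univ j)) (hn j)

theorem exists_mem_ne_zero_forall_lie_pderiv_eq_zero [Finite ι]
    {I : LieIdeal R (Derivation R A A)} (hI : I ≠ ⊥) :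
    ∃ D ∈ I, D ≠ 0 ∧ ∀ i, ⁅S.pderiv i, D⁆ = 0 := by
  refine exists_mem_ne_zero_forall_apply_eq_zero (W := I.toSubmodule)
    (fun i ↦ LieAlgebra.ad R _ (S.pderiv i)) (fun i j D ↦ ?_)
    S.exists_iterate_ad_pderiv_eq_zero (fun i _ hD ↦ lie_mem_right R _ I _ _ hD) (by simpa)
  simp only [LieAlgebra.ad_apply]
  rw [leibniz_lie, S.lie_pderiv_pderiv, zero_lie, zero_add]

theorem coord_mul_pderiv_coord (j k : ι) :
    S.coord k * S.pderiv k (S.coord j) = (Pi.single j 1 : ι → R) k • S.coord j := by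
  obtain rfl | hkj := eq_or_ne k j
  · simp [S.pderiv_coord]
  · simp [S.pderiv_coord, hkj, hkj.symm]

theorem exists_coord_mul_pderiv_eq_smul {g : A} (hg : g ∈ Submonoid.closure (Set.range S.coord))
    (k : ι) : ∃ c : R, S.coord k * S.pderiv k g = c • g := by
  induction hg using Submonoid.closure_induction with
  | mem _ hx =>
    obtain ⟨j, rfl⟩ := hx
    exact ⟨_, S.coord_mul_pderiv_coord j k⟩
  | one => exact ⟨0, by simp⟩
  | mul a b _ _ ha hb =>
    obtain ⟨c, hc⟩ := ha
    obtain ⟨d, hd⟩ := hb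
    refine ⟨c + d, ?_⟩
    calc S.coord k * S.pderiv k (a * b)
        = a * (S.coord k * S.pderiv k b) + b * (S.coord k * S.pderiv k a) := by
          rw [Derivation.leibniz, smul_eq_mul, smul_eq_mul]
          ring
      _ = (c + d) • (a * b) := by
          rw [hc, hd, mul_smul_comm, mul_smul_comm, mul_comm b, add_smul, add_comm]

theorem span_closure_range_coord :
    Submodule.span R (Submonoid.closure (Set.range S.coord) : Set A) = ⊤ := by
  rw [← Algebra.adjoin_eq_span, S.adjoin_range_coord, Algebra.top_toSubmodule]

theorem pderiv_ne_zero [Nontrivial A] (i : ι) : S.pderiv i ≠ 0 := by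
  intro hzero
  simpa [S.pderiv_coord] using DFunLike.congr_fun hzero (S.coord i)

end CommRing

section Field

variable {K A ι : Type*} [Field K] [CommRing A] [Algebra K A] [DecidableEq ι]
  (S : CoordinateSystem K A ι) {I : LieIdeal K (Derivation K A A)}

theorem pderiv_mem_of_ne_bot [Finite ι]
    (hconst : ∀ a, (∀ i, S.pderiv i a = 0) → a ∈ (⊥ : Subalgebra K A)) (hI : I ≠ ⊥) (k : ι) :
    S.pderiv k ∈ I := by
  obtain ⟨D, hDI, hD, hlie⟩ := S.exists_mem_ne_zero_forall_lie_pderiv_eq_zero hI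
  have hcoeff (j : ι) : ∃ c : K, algebraMap K A c = D (S.coord j) := by
    refine Algebra.mem_bot.1 (hconst _ fun i ↦ ?_)
    rw [← S.lie_pderiv_apply_coord, hlie, Derivation.zero_apply]
  choose c hc using hcoeff
  obtain ⟨j, hj⟩ : ∃ j, c j ≠ 0 := by
    by_contra! hzero
    exact hD (S.derivation_ext fun j ↦ by simp [← hc, hzero])
  have hbracket : ⁅D, S.coord j • S.pderiv k⁆ = c j • S.pderiv k := by
    rw [LieRinehartRing.leibniz_smul_right, ← lie_skew, hlie, neg_zero, smul_zero, zero_add,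
      Derivation.bracket_eq_fun, ← hc, algebraMap_smul]
  exact (I.toSubmodule.smul_mem_iff hj).1 (hbracket ▸ lie_mem_left K _ I _ _ hDI)

theorem smul_pderiv_mem_of_ne_neg_one {g : A} {c : K} {k : ι} (hk : S.pderiv k ∈ I)
    (hg : S.coord k * S.pderiv k g = c • g) (hc : c ≠ -1) (j : ι) : g • S.pderiv j ∈ I := by
  have hbracket : ⁅S.pderiv k, (S.coord k * g) • S.pderiv j⁆ = (c + 1) • g • S.pderiv j := by
    rw [S.lie_pderiv_smul_pderiv, Derivation.leibniz, S.pderiv_coord, Pi.single_eq_same,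
      smul_eq_mul, hg, smul_eq_mul, mul_one, ← smul_assoc, add_smul c, one_smul K]
  have hc' : c + 1 ≠ 0 := fun h ↦ hc (eq_neg_of_add_eq_zero_left h)
  exact (I.toSubmodule.smul_mem_iff hc').1 (hbracket ▸ lie_mem_left K _ I _ _ hk)

theorem smul_pderiv_mem_of_ne_single {g : A} {c : K} {j k : ι}
    (hk : S.coord k • S.pderiv k ∈ I) (hg : S.coord k * S.pderiv k g = c • g)
    (hc : c ≠ (Pi.single j 1 : ι → K) k) : g • S.pderiv j ∈ I :=
  (I.toSubmodule.smul_mem_iff (sub_ne_zero.2 hc)).1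
    (S.lie_coord_smul_pderiv_smul_pderiv hg j ▸ lie_mem_left K _ I _ _ hk)

theorem smul_pderiv_mem_of_mem_closure (h : ∀ j : ι, ∃ k, (Pi.single j 1 : ι → K) k ≠ -1)
    (hI : ∀ k, S.pderiv k ∈ I) {g : A} (hg : g ∈ Submonoid.closure (Set.range S.coord)) (j : ι) :
    g • S.pderiv j ∈ I := by
  choose c hc using S.exists_coord_mul_pderiv_eq_smul hg
  by_cases hall : ∀ k, c k = -1
  · obtain ⟨k, hjk⟩ := h j
    have hk : S.coord k • S.pderiv k ∈ I := by
      obtain ⟨l, hl⟩ := h k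
      exact S.smul_pderiv_mem_of_ne_neg_one (hI l) (S.coord_mul_pderiv_coord k l) hl k
    exact S.smul_pderiv_mem_of_ne_single hk (hc k) (hall k ▸ hjk.symm)
  · obtain ⟨k, hk⟩ := not_forall.1 hall
    exact S.smul_pderiv_mem_of_ne_neg_one (hI k) (hc k) hk j

theorem eq_top_of_forall_pderiv_mem [Finite ι]
    (h : ∀ j : ι, ∃ k, (Pi.single j 1 : ι → K) k ≠ -1) (hI : ∀ k, S.pderiv k ∈ I) :
    I = ⊤ := by
  cases nonempty_fintype ι
  have hsmul (j : ι) (f : A) : f • S.pderiv j ∈ I := by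
    have hf : f ∈ Submodule.span K (Submonoid.closure (Set.range S.coord) : Set A) :=
      S.span_closure_range_coord ▸ Submodule.mem_top
    induction hf using Submodule.span_induction with
    | mem g hg => exact S.smul_pderiv_mem_of_mem_closure h hI hg j
    | zero => rw [zero_smul]; exact I.zero_mem
    | add f g _ _ hf hg => rw [add_smul]; exact I.add_mem hf hg
    | smul c f _ hf => rw [smul_assoc]; exact I.smul_mem c hf
  refine eq_top_iff.2 fun D _ ↦ ?_
  rw [← S.sum_smul_pderiv D]
  exact sum_mem fun j _ ↦ hsmul j _

theorem isSimple_derivation [Nontrivial A] [Finite ι] [Nonempty ι]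
    (hconst : ∀ a, (∀ i, S.pderiv i a = 0) → a ∈ (⊥ : Subalgebra K A))
    (h : (2 : K) ≠ 0 ∨ Nontrivial ι) : LieAlgebra.IsSimple K (Derivation K A A) where
  eq_bot_or_eq_top _ := or_iff_not_imp_left.2 fun hI ↦
    S.eq_top_of_forall_pderiv_mem (exists_single_one_ne_neg_one h)
      (S.pderiv_mem_of_ne_bot hconst hI)
  non_abelian habelian := by
    let i : ι := Classical.arbitrary ι
    refine S.pderiv_ne_zero i ?_
    calc S.pderiv i
        = ⁅S.pderiv i, S.coord i • S.pderiv i⁆ := by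
          rw [S.lie_pderiv_smul_pderiv, S.pderiv_coord, Pi.single_eq_same, one_smul]
      _ = 0 := habelian.trivial _ _

end Field

end CoordinateSystem

/-- The ideal `(X_i ^ p)` of the polynomial ring, whose quotient is the truncated polynomial
algebra on an arbitrary set `σ` of variables. -/
noncomputable abbrev truncIdeal (σ R : Type*) [CommSemiring R] (p : ℕ) :
    Ideal (MvPolynomial σ R) :=
  Ideal.span (Set.range fun i : σ ↦ (X i : MvPolynomial σ R) ^ p)

section Truncated

variable {σ R : Type*} {p : ℕ}

theorem mem_truncIdeal_iff [CommSemiring R] {g : MvPolynomial σ R} :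
    g ∈ truncIdeal σ R p ↔ ∀ s ∈ g.support, ∃ i, p ≤ s i := by
  have hrange : (Set.range fun i : σ ↦ (X i : MvPolynomial σ R) ^ p) =
      (fun s ↦ monomial s 1) '' Set.range fun i ↦ Finsupp.single i p := by
    simp only [← Set.range_comp, Function.comp_def, X_pow_eq_monomial]
  rw [truncIdeal, hrange, mem_ideal_span_monomial_image]
  simp

theorem truncIdeal_ne_top [CommSemiring R] [Nontrivial R] (hp : p ≠ 0) :
    truncIdeal σ R p ≠ ⊤ := by
  simp [Ideal.ne_top_iff_one, mem_truncIdeal_iff, hp]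

theorem pderiv_mem_truncIdeal [CommSemiring R] [CharP R p] (i : σ) {g : MvPolynomial σ R}
    (hg : g ∈ truncIdeal σ R p) : pderiv i g ∈ truncIdeal σ R p := by
  induction hg using Submodule.span_induction with
  | mem x hx =>
    obtain ⟨j, rfl⟩ := hx
    simp
  | zero => simp
  | add f g _ _ hf hg => simpa only [map_add] using add_mem hf hg
  | smul a g hg hdg =>
    rw [smul_eq_mul, pderiv_mul]
    exact add_mem (Ideal.mul_mem_left _ _ hg) (Ideal.mul_mem_left _ _ hdg)

theorem sub_C_coeff_zero_mem_truncIdeal [CommRing R] [NoZeroDivisors R] [CharP R p]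
    {g : MvPolynomial σ R} (hg : ∀ i, pderiv i g ∈ truncIdeal σ R p) :
    g - C (coeff 0 g) ∈ truncIdeal σ R p := by
  classical
  rw [mem_truncIdeal_iff]
  intro s hs
  by_contra! hlt
  have hs0 : s ≠ 0 := by
    rintro rfl
    simp at hs
  obtain ⟨i, hi⟩ : ∃ i, s i ≠ 0 := Finsupp.ne_iff.1 hs0
  have hgs : coeff s g ≠ 0 := by
    simpa [coeff_C, hs0.symm] using hs
  have hsi : (s i : R) ≠ 0 := by
    rw [Ne, CharP.cast_eq_zero_iff R p]
    exact Nat.not_dvd_of_pos_of_lt (Nat.pos_of_ne_zero hi) (hlt i)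
  obtain ⟨t, rfl⟩ : ∃ t, s = t + Finsupp.single i 1 :=
    ⟨_, (Finsupp.sub_add_single_one_cancel hi).symm⟩
  have hcoeff : coeff t (pderiv i g) ≠ 0 := by
    rw [coeff_pderiv]
    exact mul_ne_zero hgs (by simpa using hsi)
  obtain ⟨k, hk⟩ := mem_truncIdeal_iff.1 (hg i) t (mem_support_iff.2 hcoeff)
  exact (hk.trans (by simp)).not_gt (hlt k)

variable [CommRing R]

theorem mkₐ_pderiv_eq_zero [CharP R p] (i : σ) (g : MvPolynomial σ R)
    (hg : Ideal.Quotient.mkₐ R (truncIdeal σ R p) g = 0) :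
    Ideal.Quotient.mkₐ R (truncIdeal σ R p) (pderiv i g) = 0 :=
  Ideal.Quotient.eq_zero_iff_mem.2 <|
    pderiv_mem_truncIdeal i (Ideal.Quotient.eq_zero_iff_mem.1 hg)

/-- The partial derivative `∂ / ∂X_i` of the truncated polynomial algebra; it descends from the
polynomial ring because `p = 0` in `R`. -/
noncomputable def truncPDeriv [CharP R p] (i : σ) :
    Derivation R (MvPolynomial σ R ⧸ truncIdeal σ R p) (MvPolynomial σ R ⧸ truncIdeal σ R p) :=
  Derivation.liftOfSurjective (Ideal.Quotient.mkₐ_surjective R (truncIdeal σ R p))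
    (mkₐ_pderiv_eq_zero i)

theorem truncPDeriv_mk [CharP R p] (i : σ) (g : MvPolynomial σ R) :
    truncPDeriv i (Ideal.Quotient.mk (truncIdeal σ R p) g) =
      Ideal.Quotient.mk (truncIdeal σ R p) (pderiv i g) :=
  Derivation.liftOfSurjective_apply (Ideal.Quotient.mkₐ_surjective R (truncIdeal σ R p))
    (mkₐ_pderiv_eq_zero i) g

variable (σ R p) in
/-- The standard coordinates of the truncated polynomial algebra: the classes of the variables,
with the partial derivatives. -/
noncomputable def truncCoordinates [DecidableEq σ] [CharP R p] :
    CoordinateSystem R (MvPolynomial σ R ⧸ truncIdeal σ R p) σ where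
  coord i := Ideal.Quotient.mkₐ R (truncIdeal σ R p) (X i)
  adjoin_range_coord := by
    rw [Set.range_comp' (Ideal.Quotient.mkₐ R (truncIdeal σ R p)) X, ← AlgHom.map_adjoin,
      adjoin_range_X, Algebra.map_top, AlgHom.range_eq_top]
    exact Ideal.Quotient.mkₐ_surjective R _
  pderiv := truncPDeriv
  pderiv_coord i j := by
    rw [Ideal.Quotient.mkₐ_eq_mk, truncPDeriv_mk, pderiv_X, Pi.single_apply, Pi.single_apply]
    split_ifs <;> simp

theorem mem_bot_of_forall_truncPDeriv_eq_zero [NoZeroDivisors R] [CharP R p]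
    {a : MvPolynomial σ R ⧸ truncIdeal σ R p} (ha : ∀ i, truncPDeriv i a = 0) :
    a ∈ (⊥ : Subalgebra R (MvPolynomial σ R ⧸ truncIdeal σ R p)) := by
  obtain ⟨g, rfl⟩ := Ideal.Quotient.mk_surjective a
  have hg (i : σ) : pderiv i g ∈ truncIdeal σ R p := by
    rw [← Ideal.Quotient.eq_zero_iff_mem, ← truncPDeriv_mk, ha]
  exact Algebra.mem_bot.2
    ⟨coeff 0 g, (Ideal.Quotient.eq.2 (sub_C_coeff_zero_mem_truncIdeal hg)).symm⟩

end Truncated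

theorem wittAlgebra_isSimple_general {F σ : Type*} [Field F] [Finite σ] [Nonempty σ] {p : ℕ}
    [CharP F p] (hp : p ≠ 0) (h : p ≠ 2 ∨ Nontrivial σ) :
    LieAlgebra.IsSimple F (Derivation F (MvPolynomial σ F ⧸ truncIdeal σ F p)
      (MvPolynomial σ F ⧸ truncIdeal σ F p)) := by
  classical
  have : Nontrivial (MvPolynomial σ F ⧸ truncIdeal σ F p) :=
    Ideal.Quotient.nontrivial_iff.2 (truncIdeal_ne_top hp)
  have htwo : p ≠ 2 → (2 : F) ≠ 0 := fun h2 ↦ Ring.two_ne_zero (ringChar.eq F p ▸ h2)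
  exact (truncCoordinates σ F p).isSimple_derivation
    (fun _ ↦ mem_bot_of_forall_truncPDeriv_eq_zero) (h.imp_left htwo)

/-- The Witt algebra `W(m,1) = Der_F(B_m)`, with the commutator bracket, is a
simple Lie algebra over an algebraically closed field of characteristic `p > 3`. -/
theorem wittAlgebra_isSimple
    (p : ℕ) (hp : p.Prime) (hp3 : 3 < p)
    (F : Type) [Field F] [IsAlgClosed F] [CharP F p] (m : ℕ) (hm : 1 ≤ m) :
    LieAlgebra.IsSimple F (Derivation F (TruncPoly F p m) (TruncPoly F p m)) := by
  have : Nonempty (Fin m) := ⟨⟨0, hm⟩⟩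
  exact wittAlgebra_isSimple_general hp.ne_zero (Or.inl (by omega))
end

section
/- Let p > 3 be a prime, F an algebraically closed field of characteristic p, and m ≥ 1. Let B_m = F[X_1, …, X_m]/(X_1^p, …, X_m^p). Then the Witt algebra W(m,1) = Der_F(B_m) is generated by 2 elements: there exist derivations x, y ∈ Der_F(B_m) such that the smallest Lie subalgebra of Der_F(B_m) containing x and y is Der_F(B_m) itself. -/
/-!
Write `∂ i` for the partial derivatives of `B_m` and `x i` for the class of `X_i`. The generators
are the Euler derivation `H = ∑ i, l i • x i • ∂ i` and
`y = ∂ 0 + x ^ (p - 1, …, p - 1) • ∂ 0 + ∑ k ≠ 0, x 0 ^ (p - 1) • ∂ k`.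
Each summand of `y` is an eigenvector of `ad H`, with eigenvalues `-l 0`, `-l 0 - ∑ i, l i` and
`-l 0 - l k` for `k ≠ 0`. Any `m` distinct nonzero scalars can be prescribed for `∑ i, l i` and the
`l k` with `k ≠ 0`; the eigenvalues are then distinct, so every summand of `y` lies in the
subalgebra `L` generated by `H` and `y`.

Applying `ad (∂ 0)` repeatedly to `x 0 ^ (p - 1) • ∂ k` gives `x 0 • ∂ k ∈ L` and `∂ k ∈ L`.
Applying the `ad (∂ i)` to `x ^ (p - 1, …, p - 1) • ∂ 0` then gives `f • ∂ 0 ∈ L` for all `f`, and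
`⁅x 0 • ∂ k, f • ∂ 0⁆ = (x 0 * ∂ k f) • ∂ 0 - f • ∂ k` gives `f • ∂ k ∈ L`.
-/

open MvPolynomial

set_option synthInstance.maxHeartbeats 1000000
set_option maxHeartbeats 1000000

theorem mem_of_sum_mem_of_apply_eq_smul {K V ι : Type*} [Field K] [AddCommGroup V] [Module K V]
    {T : Module.End K V} {L : Submodule K V} (hT : L ≤ L.comap T) {s : Finset ι} {μ : ι → K}
    (hμ : Set.InjOn μ s) {v : ι → V} (hv : ∀ i ∈ s, T (v i) = μ i • v i)
    (hsum : ∑ i ∈ s, v i ∈ L) {j : ι} (hj : j ∈ s) : v j ∈ L := by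
  classical
  -- The Lagrange polynomial of `μ j`, evaluated at `T`, projects the sum onto `v j`.
  have hproj : Polynomial.aeval T (Lagrange.basis s μ j) (∑ i ∈ s, v i) = v j := by
    rw [map_sum, Finset.sum_eq_single_of_mem j hj fun i hi hij ↦ ?_]
    · rw [Module.End.aeval_apply_of_mem_apply_eq_smul (hv j hj), Lagrange.eval_basis_self hμ hj,
        one_smul]
    · rw [Module.End.aeval_apply_of_mem_apply_eq_smul (hv i hi),
        Lagrange.eval_basis_of_ne hij.symm hi, zero_smul]
  exact hproj ▸ Polynomial.aeval_apply_smul_mem_of_le_comap hsum _ T hT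

theorem derivation_sum_apply {R A M ι : Type*} [CommSemiring R] [CommSemiring A] [AddCommMonoid M]
    [Algebra R A] [Module A M] [Module R M] (s : Finset ι) (D : ι → Derivation R A M) (a : A) :
    (∑ i ∈ s, D i) a = ∑ i ∈ s, D i a := by
  rw [← Derivation.coeFnAddMonoidHom_apply, map_sum, Finset.sum_apply]
  rfl

/-- A coordinate system of the `R`-algebra `B`: generators `x i` of `B` together with derivations
`d i` of `B` to which the partial derivatives `∂ / ∂ X_i` descend along the map `X_i ↦ x i`. -/
structure IsCoordinateSystem {R B ι : Type*} [CommRing R] [CommRing B] [Algebra R B]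
    (x : ι → B) (d : ι → Derivation R B B) : Prop where
  aeval_surjective : Function.Surjective (aeval x : MvPolynomial ι R →ₐ[R] B)
  apply_aeval (i : ι) (f : MvPolynomial ι R) : d i (aeval x f) = aeval x (pderiv i f)

/-- The Euler derivation `∑ i, l i • x i • d i` with weights `l`. -/
def eulerDerivation {R B ι : Type*} [CommRing R] [CommRing B] [Algebra R B] [Fintype ι]
    (x : ι → B) (d : ι → Derivation R B B) (l : ι → R) : Derivation R B B :=
  ∑ i, l i • x i • d i

namespace IsCoordinateSystem

section CommRing

variable {R B ι : Type*} [CommRing R] [CommRing B] [Algebra R B]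
  {x : ι → B} {d : ι → Derivation R B B} (h : IsCoordinateSystem x d)

include h

theorem apply_self (i : ι) : d i (x i) = 1 := by
  simpa using h.apply_aeval i (X i)

theorem apply_of_ne {i j : ι} (hij : i ≠ j) : d i (x j) = 0 := by
  simpa [pderiv_X_of_ne hij.symm] using h.apply_aeval i (X j)

theorem derivation_ext {D E : Derivation R B B} (hDE : ∀ i, D (x i) = E (x i)) : D = E := by
  refine Derivation.ext_of_adjoin_eq_top (Set.range x) ?_ (Set.forall_mem_range.2 hDE)
  rw [Algebra.adjoin_range_eq_range_aeval]
  exact (AlgHom.range_eq_top _).2 h.aeval_surjective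

theorem lie_eq_zero (i j : ι) : ⁅d i, d j⁆ = 0 := by
  classical
  refine h.derivation_ext fun k ↦ ?_
  have apply_eq (a : ι) : d a (x k) = if a = k then 1 else 0 := by
    split_ifs with hak
    · exact hak ▸ h.apply_self a
    · exact h.apply_of_ne hak
  simp only [Derivation.commutator_apply, apply_eq]
  split_ifs <;> simp

theorem lie_smul (i j : ι) (f : B) : ⁅d i, f • d j⁆ = d i f • d j := by
  simp [h.lie_eq_zero]

theorem smul_lie_smul (i j : ι) (f g : B) :
    ⁅f • d j, g • d i⁆ = (f * d j g) • d i - (g * d i f) • d j := by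
  rw [LieRinehartRing.leibniz_smul_right, ← lie_skew, h.lie_smul, smul_neg, smul_smul]
  simp [neg_add_eq_sub]

theorem eq_sum_apply_smul [Fintype ι] (D : Derivation R B B) : D = ∑ i, D (x i) • d i := by
  refine h.derivation_ext fun k ↦ ?_
  rw [derivation_sum_apply, Finset.sum_eq_single_of_mem k (Finset.mem_univ k) fun i _ hik ↦ ?_]
  · simp [h.apply_self]
  · simp [h.apply_of_ne hik]

theorem lieSubalgebra_eq_top [Finite ι] {L : LieSubalgebra R (Derivation R B B)}
    (hL : ∀ i (f : B), f • d i ∈ L) : L = ⊤ := by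
  have := Fintype.ofFinite ι
  refine eq_top_iff.2 fun D _ ↦ ?_
  rw [h.eq_sum_apply_smul D]
  exact sum_mem fun i _ ↦ hL i _

theorem smul_mem_of_forall_smul_mem {L : LieSubalgebra R (Derivation R B B)} {i j : ι}
    (hi : ∀ f : B, f • d i ∈ L) (hj : x i • d j ∈ L) (f : B) : f • d j ∈ L := by
  have hlie : ⁅x i • d j, f • d i⁆ ∈ L := L.lie_mem hj (hi f)
  rw [h.smul_lie_smul, h.apply_self, mul_one] at hlie
  exact (L.toSubmodule.sub_mem_iff_right (hi _)).1 hlie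

variable [Fintype ι] (l : ι → R)

theorem eulerDerivation_apply_monomial (s : ι →₀ ℕ) :
    eulerDerivation x d l (aeval x (monomial s (1 : R))) =
      Finsupp.weight l s • aeval x (monomial s (1 : R)) := by
  have hterm (i : ι) : x i * d i (aeval x (monomial s (1 : R))) =
      s i • aeval x (monomial s (1 : R)) := by
    rw [h.apply_aeval, ← aeval_X (R := R) x i, ← map_mul, X_mul_pderiv_monomial, map_nsmul]
  rw [eulerDerivation, derivation_sum_apply, Finsupp.weight_apply,
    Finsupp.sum_fintype _ _ (by simp), Finset.sum_smul]
  refine Finset.sum_congr rfl fun i _ ↦ ?_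
  rw [Derivation.smul_apply, Derivation.smul_apply, smul_eq_mul, hterm, smul_comm, smul_assoc]

theorem eulerDerivation_lie (i : ι) : ⁅eulerDerivation x d l, d i⁆ = -l i • d i := by
  have hterm (j : ι) : ⁅d i, l j • x j • d j⁆ = l j • d i (x j) • d j := by
    rw [LieAlgebra.lie_smul, h.lie_smul]
  rw [← lie_skew, eulerDerivation, lie_sum,
    Finset.sum_eq_single_of_mem i (Finset.mem_univ i) fun j _ hji ↦ ?_]
  · simp [hterm, h.apply_self]
  · simp [hterm, h.apply_of_ne hji.symm]

theorem eulerDerivation_lie_monomial_smul (s : ι →₀ ℕ) (i : ι) :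
    ⁅eulerDerivation x d l, aeval x (monomial s (1 : R)) • d i⁆ =
      (Finsupp.weight l s - l i) • aeval x (monomial s (1 : R)) • d i := by
  rw [LieRinehartRing.leibniz_smul_right, h.eulerDerivation_lie, Derivation.bracket_eq_fun,
    h.eulerDerivation_apply_monomial, smul_comm, smul_assoc, sub_smul, neg_smul, neg_add_eq_sub]

end CommRing

section Field

variable {F B ι : Type*} [Field F] [CommRing B] [Algebra F B]
  {x : ι → B} {d : ι → Derivation F B B} (h : IsCoordinateSystem x d)
  {p : ℕ} [CharP F p] {L : LieSubalgebra F (Derivation F B B)}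

include h

theorem monomial_smul_mem_of_add_single {i k : ι} (hi : d i ∈ L) {t : ι →₀ ℕ} {n : ℕ}
    (hn : t i + n < p) (hL : aeval x (monomial (t + Finsupp.single i n) (1 : F)) • d k ∈ L) :
    aeval x (monomial t (1 : F)) • d k ∈ L := by
  induction n with
  | zero => simpa using hL
  | succ n ih =>
    refine ih (by lia) ?_
    have hne : ((t i + n + 1 : ℕ) : F) ≠ 0 := by
      rw [Ne, CharP.cast_eq_zero_iff F p]
      exact Nat.not_dvd_of_pos_of_lt (by lia) (by lia)
    have hlie : ⁅d i, aeval x (monomial (t + Finsupp.single i (n + 1)) (1 : F)) • d k⁆ =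
        ((t i + n + 1 : ℕ) : F) •
          aeval x (monomial (t + Finsupp.single i n) (1 : F)) • d k := by
      rw [h.lie_smul, h.apply_aeval, pderiv_monomial, ← smul_assoc, ← map_smul, smul_monomial,
        Finsupp.single_add, ← add_assoc, add_tsub_cancel_right]
      simp [add_assoc]
    exact (L.toSubmodule.smul_mem_iff hne).1 (hlie ▸ L.lie_mem hi hL)

theorem monomial_smul_mem_of_le (hd : ∀ i, d i ∈ L) {k : ι} {s t : ι →₀ ℕ} (hts : t ≤ s)
    (hs : ∀ i, s i < p) (hL : aeval x (monomial s (1 : F)) • d k ∈ L) :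
    aeval x (monomial t (1 : F)) • d k ∈ L := by
  obtain ⟨u, rfl⟩ := exists_add_of_le hts
  clear hts
  induction u using Finsupp.induction generalizing t with
  | zero => simpa using hL
  | single_add i n u hi _ ih =>
    have hi' : u i = 0 := by simpa using hi
    refine h.monomial_smul_mem_of_add_single (hd i) (n := n) ?_ (ih ?_ ?_)
    · simpa [hi'] using hs i
    · simpa [add_assoc] using hs
    · simpa [add_assoc] using hL

theorem smul_mem_of_top_monomial_smul_mem [Finite ι] (hx : ∀ i, x i ^ p = 0)
    (hd : ∀ i, d i ∈ L) {k : ι} {s : ι →₀ ℕ} (hs : ∀ i, s i + 1 = p)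
    (hL : aeval x (monomial s (1 : F)) • d k ∈ L) (f : B) : f • d k ∈ L := by
  have := Fintype.ofFinite ι
  have hmonomial (t : ι →₀ ℕ) : aeval x (monomial t (1 : F)) • d k ∈ L := by
    by_cases hts : t ≤ s
    · exact h.monomial_smul_mem_of_le hd hts (fun i ↦ (hs i).le) hL
    · obtain ⟨i, hi⟩ : ∃ i, s i < t i := by simpa [Finsupp.le_def] using hts
      have hzero : aeval x (monomial t (1 : F)) = 0 := by
        rw [aeval_monomial, Finsupp.prod_fintype _ _ (by simp),
          Finset.prod_eq_zero (Finset.mem_univ i), mul_zero]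
        exact pow_eq_zero_of_le (hs i ▸ hi) (hx i)
      simp [hzero]
  obtain ⟨q, rfl⟩ := h.aeval_surjective f
  induction q using MvPolynomial.induction_on' with
  | monomial t c =>
    rw [← mul_one c, ← smul_eq_mul, ← smul_monomial, map_smul, smul_assoc]
    exact L.smul_mem c (hmonomial t)
  | add q r hq hr =>
    rw [map_add, add_smul]
    exact L.add_mem hq hr

end Field

end IsCoordinateSystem

section Generators

variable {F B ι : Type*} [Field F] [CommRing B] [Algebra F B] [DecidableEq ι]

section Finite

variable [Finite ι]

/-- The exponents of the monomials `f k` for which `d i₀ + ∑ k, f k • d k` is the second generator: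
`(p - 1, …, p - 1)` for `k = i₀`, and `p - 1` at `i₀` only for every other `k`. -/
noncomputable def generatorExponent (p : ℕ) (i₀ k : ι) : ι →₀ ℕ :=
  if k = i₀ then Finsupp.equivFunOnFinite.symm fun _ ↦ p - 1 else Finsupp.single i₀ (p - 1)

theorem generatorExponent_self_apply (p : ℕ) (i₀ i : ι) :
    generatorExponent p i₀ i₀ i = p - 1 := by
  simp [generatorExponent]

theorem generatorExponent_of_ne (p : ℕ) {i₀ k : ι} (hk : k ≠ i₀) :
    generatorExponent p i₀ k = Finsupp.single i₀ (p - 1) :=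
  if_neg hk

variable {p : ℕ} [CharP F p] {x : ι → B} {d : ι → Derivation F B B}

theorem IsCoordinateSystem.lieSubalgebra_eq_top_of_generators_mem (h : IsCoordinateSystem x d)
    (hp : 1 < p) (hx : ∀ i, x i ^ p = 0) {L : LieSubalgebra F (Derivation F B B)} {i₀ : ι}
    (hd₀ : d i₀ ∈ L)
    (hL : ∀ k, aeval x (monomial (generatorExponent p i₀ k) (1 : F)) • d k ∈ L) : L = ⊤ := by
  have hpow_mem {k : ι} (hk : k ≠ i₀) {n : ℕ} (hn : n < p) : x i₀ ^ n • d k ∈ L := by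
    have hmem := h.monomial_smul_mem_of_add_single (t := Finsupp.single i₀ n) (n := p - 1 - n)
      (k := k) hd₀ (by simp; lia) ?_
    · simpa [aeval_monomial] using hmem
    · rw [← Finsupp.single_add, Nat.add_sub_of_le (by lia), ← generatorExponent_of_ne p hk]
      exact hL k
  have hd (k : ι) : d k ∈ L := by
    obtain rfl | hk := eq_or_ne k i₀
    · exact hd₀
    · simpa using hpow_mem hk (n := 0) (by lia)
  have hsmul₀ : ∀ f : B, f • d i₀ ∈ L :=
    h.smul_mem_of_top_monomial_smul_mem hx hd
      (fun i ↦ by rw [generatorExponent_self_apply]; lia) (hL i₀)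
  refine h.lieSubalgebra_eq_top fun k f ↦ ?_
  obtain rfl | hk := eq_or_ne k i₀
  · exact hsmul₀ f
  · exact h.smul_mem_of_forall_smul_mem hsmul₀ (by simpa using hpow_mem hk hp) f

end Finite

variable [Fintype ι] {p : ℕ} [CharP F p] {x : ι → B} {d : ι → Derivation F B B}

theorem weight_generatorExponent_sub (hp : 1 < p) {w l : ι → F} {i₀ : ι}
    (hsum : ∑ i, l i = w i₀) (hl : ∀ k ≠ i₀, l k = w k) (k : ι) :
    Finsupp.weight l (generatorExponent p i₀ k) - l k = -l i₀ - w k := by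
  have hcast : ((p - 1 : ℕ) : F) = -1 := by simp [Nat.cast_sub hp.le]
  obtain rfl | hk := eq_or_ne k i₀
  · rw [Finsupp.weight_apply, Finsupp.sum_fintype _ _ (by simp)]
    simp only [generatorExponent_self_apply, ← Nat.cast_smul_eq_nsmul F, hcast, neg_smul, one_smul,
      Finset.sum_neg_distrib, hsum]
    ring
  · rw [generatorExponent_of_ne p hk, Finsupp.weight_single, ← Nat.cast_smul_eq_nsmul F, hcast,
      hl k hk, neg_smul, one_smul]

theorem IsCoordinateSystem.lieSubalgebra_eq_top_of_euler_mem (h : IsCoordinateSystem x d)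
    (hp : 1 < p) (hx : ∀ i, x i ^ p = 0) {w l : ι → F} (hw : Function.Injective w)
    (hw₀ : ∀ i, w i ≠ 0) {i₀ : ι} (hsum : ∑ i, l i = w i₀) (hl : ∀ k ≠ i₀, l k = w k)
    {L : LieSubalgebra F (Derivation F B B)} (hEuler : eulerDerivation x d l ∈ L)
    (hL : d i₀ + ∑ k, aeval x (monomial (generatorExponent p i₀ k) (1 : F)) • d k ∈ L) :
    L = ⊤ := by
  let v : Option ι → Derivation F B B := fun o ↦
    o.elim (d i₀) fun k ↦ aeval x (monomial (generatorExponent p i₀ k) (1 : F)) • d k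
  let μ : Option ι → F := fun o ↦ o.elim (-l i₀) fun k ↦ -l i₀ - w k
  have hμ : Function.Injective μ := by
    rintro (_ | i) (_ | j) hij
    · rfl
    · exact absurd (by simpa [μ, sub_eq_add_neg] using hij) (hw₀ j)
    · exact absurd (by simpa [μ, sub_eq_add_neg] using hij) (hw₀ i)
    · simpa [μ, hw.eq_iff] using hij
  have hv (o : Option ι) : LieAlgebra.ad F _ (eulerDerivation x d l) (v o) = μ o • v o := by
    cases o with
    | none => exact h.eulerDerivation_lie l i₀
    | some k =>
      exact (h.eulerDerivation_lie_monomial_smul l _ k).trans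
        (congrArg (· • _) (weight_generatorExponent_sub hp hsum hl k))
  have hvsum : ∑ o, v o ∈ L := by simpa [v, Fintype.sum_option] using hL
  have hvL (o : Option ι) : v o ∈ L :=
    mem_of_sum_mem_of_apply_eq_smul (L := L.toSubmodule)
      (T := LieAlgebra.ad F _ (eulerDerivation x d l)) (fun _ hD ↦ L.lie_mem hEuler hD) hμ.injOn
      (fun o _ ↦ hv o) hvsum (Finset.mem_univ o)
  exact h.lieSubalgebra_eq_top_of_generators_mem hp hx (hvL none) fun k ↦ hvL (some k)

end Generators

theorem exists_sum_eq_and_forall_ne_eq {G ι : Type*} [AddCommGroup G] [Fintype ι] (w : ι → G)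
    (i₀ : ι) : ∃ l : ι → G, ∑ i, l i = w i₀ ∧ ∀ k ≠ i₀, l k = w k := by
  classical
  refine ⟨Function.update w i₀ (w i₀ - ∑ k ∈ Finset.univ \ {i₀}, w k), ?_,
    fun k hk ↦ Function.update_of_ne hk _ _⟩
  rw [Finset.sum_update_of_mem (Finset.mem_univ i₀), sub_add_cancel]

theorem IsCoordinateSystem.exists_lieSpan_pair_eq_top {F B ι : Type*} [Field F] [CommRing B]
    [Algebra F B] [Finite ι] {x : ι → B} {d : ι → Derivation F B B} (h : IsCoordinateSystem x d)
    {p : ℕ} [CharP F p] (hp : 1 < p) (hx : ∀ i, x i ^ p = 0) {w : ι → F}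
    (hw : Function.Injective w) (hw₀ : ∀ i, w i ≠ 0) :
    ∃ D E : Derivation F B B, LieSubalgebra.lieSpan F (Derivation F B B) {D, E} = ⊤ := by
  classical
  have := Fintype.ofFinite ι
  cases isEmpty_or_nonempty ι with
  | inl _ => exact ⟨0, 0, h.lieSubalgebra_eq_top isEmptyElim⟩
  | inr hι =>
    obtain ⟨i₀⟩ := hι
    obtain ⟨l, hsum, hl⟩ := exists_sum_eq_and_forall_ne_eq w i₀
    exact ⟨eulerDerivation x d l,
      d i₀ + ∑ k, aeval x (monomial (generatorExponent p i₀ k) (1 : F)) • d k,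
      h.lieSubalgebra_eq_top_of_euler_mem hp hx hw hw₀ hsum hl
        (LieSubalgebra.subset_lieSpan (by simp)) (LieSubalgebra.subset_lieSpan (by simp))⟩

theorem derivation_mem_span_of_mem {R A : Type*} [CommSemiring R] [CommSemiring A] [Algebra R A]
    {D : Derivation R A A} {s : Set A} (hs : ∀ a ∈ s, D a ∈ Ideal.span s) {a : A}
    (ha : a ∈ Ideal.span s) : D a ∈ Ideal.span s := by
  induction ha using Submodule.span_induction with
  | mem a ha => exact hs a ha
  | zero => simp
  | add a b _ _ ha hb => simpa using add_mem ha hb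
  | smul c a ha hDa =>
    rw [smul_eq_mul, Derivation.leibniz]
    exact add_mem (Ideal.mul_mem_left _ _ hDa) (Ideal.mul_mem_right _ _ ha)

theorem exists_isCoordinateSystem_quotient {R ι : Type*} [CommRing R]
    {I : Ideal (MvPolynomial ι R)} (hI : ∀ i, ∀ f ∈ I, pderiv i f ∈ I) :
    ∃ d, IsCoordinateSystem (R := R) (fun i ↦ Ideal.Quotient.mkₐ R I (X i)) d := by
  have haeval : aeval (fun i ↦ Ideal.Quotient.mkₐ R I (X i)) = Ideal.Quotient.mkₐ R I := by
    ext i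
    simp
  have hsurj := Ideal.Quotient.mkₐ_surjective R I
  have hker (i : ι) (f : MvPolynomial ι R) (hf : Ideal.Quotient.mkₐ R I f = 0) :
      Ideal.Quotient.mkₐ R I (pderiv i f) = 0 :=
    Ideal.Quotient.eq_zero_iff_mem.2 (hI i f (Ideal.Quotient.eq_zero_iff_mem.1 hf))
  refine ⟨fun i ↦ Derivation.liftOfSurjective hsurj (hker i), by rwa [haeval], fun i f ↦ ?_⟩
  rw [haeval]
  exact Derivation.liftOfSurjective_apply hsurj (hker i) f

theorem wittAlgebra_generated_by_two_elements_general (p : ℕ) (hp : p.Prime)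
    (F : Type) [Field F] [CharP F p] (m : ℕ) (hm : m < ENat.card F) :
    ∃ x y : Derivation F (TruncPoly F p m) (TruncPoly F p m),
      LieSubalgebra.lieSpan F (Derivation F (TruncPoly F p m) (TruncPoly F p m)) {x, y} = ⊤ := by
  obtain ⟨w, hw⟩ := Fin.Embedding.exists_embedding_disjoint_range_of_add_le_ENat_card
    (α := F) (s := {0}) (n := m) (by simpa [add_comm] using Order.add_one_le_of_lt hm)
  have hpderiv (i j : Fin m) : pderiv i (X j ^ p : MvPolynomial (Fin m) F) = 0 := by
    simp [CharP.cast_eq_zero]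
  obtain ⟨d, hd⟩ := exists_isCoordinateSystem_quotient fun i _ hf ↦
    derivation_mem_span_of_mem (D := pderiv i)
      (s := Set.range fun j : Fin m ↦ (X j : MvPolynomial (Fin m) F) ^ p)
      (Set.forall_mem_range.2 fun j ↦ hpderiv i j ▸ zero_mem _) hf
  refine hd.exists_lieSpan_pair_eq_top hp.one_lt (fun i ↦ ?_) w.injective
    fun i hi ↦ Set.disjoint_singleton_left.1 hw ⟨i, hi⟩
  rw [← map_pow]
  exact Ideal.Quotient.eq_zero_iff_mem.2 (Ideal.subset_span ⟨i, rfl⟩)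

/-- The Witt algebra `W(m,1) = Der_F(B_m)` over an algebraically closed field of
characteristic `p > 3` is generated by 2 elements. -/
theorem wittAlgebra_generated_by_two_elements
    (p : ℕ) (hp : p.Prime) (hp3 : 3 < p)
    (F : Type) [Field F] [IsAlgClosed F] [CharP F p] (m : ℕ) (hm : 1 ≤ m) :
    ∃ x y : Derivation F (TruncPoly F p m) (TruncPoly F p m),
      LieSubalgebra.lieSpan F (Derivation F (TruncPoly F p m) (TruncPoly F p m)) {x, y} = ⊤ :=
  have : Infinite F := IsAlgClosed.instInfinite
  wittAlgebra_generated_by_two_elements_general p hp F m (by simp)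
end

section
/- Let p > 3 be a prime, F an algebraically closed field of characteristic p, and m ≥ 1. Let B_m = F[X_1, …, X_m]/(X_1^p, …, X_m^p), with x_i the image of X_i and x^τ the image of (X_1 ⋯ X_m)^{p−1}, and let W = Der_F(B_m) be the Witt algebra. Let x ∈ W be a homogeneous derivation of maximal degree, i.e., x = x^τ · d for some derivation d ∈ W with d(x_i) ∈ F·1 for every i (here x^τ · d denotes the derivation b ↦ x^τ · d(b)). Let y ∈ W be arbitrary and let L be the smallest Lie subalgebra of W containing x and y. Then the derived subalgebra [L,L], the F-linear span of all brackets ⁅a,b⁆ with a, b ∈ L, has dimension at most p^m over F. -/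
open MvPolynomial

set_option synthInstance.maxHeartbeats 1000000
set_option maxHeartbeats 1000000

/-!
Write `u = x ^ τ`, a socle element of the local algebra `B_m`: a multiple `u • d` only depends on
the values of `d x_i` at the augmentation.

Suppose first that `u` is a cyclic vector for `y`. Then `1, y, y ^ 2, …, y ^ (p ^ m - 1)` are
linearly independent, hence so are the derivations `y ^ (p ^ i)` with `i < m`. They commute with
`y`, and a derivation commuting with `y` and killed by `u` vanishes, as its annihilator is stable
under `y`. Counting dimensions, `u • d = u • D` for some combination `D` of these powers. All
elements of `L` then have the form `s • y + b • D`, so `[L, L]` lies in `B_m • D`, which has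
dimension at most `p ^ m`.

Cyclicity means that some `y ^ n u` has nonzero augmentation, a Zariski-open condition on `y`. It
holds for the derivation `y₀` that acts on monomials like an odometer in base `p`, hence for all but
finitely many points of the line through `y₀` and an arbitrary `y`. Brackets of the generators vary
polynomially along this line, so the dimension of `[L, L]` is lower semicontinuous and the bound
extends to `y`.
-/

section PolynomialFamilies

variable {F W W₁ W₂ : Type*}

section Basic

variable [CommSemiring F] [AddCommMonoid W] [Module F W] [AddCommMonoid W₁] [Module F W₁]
  [AddCommMonoid W₂] [Module F W₂]

variable (F W) in
/-- The `W`-valued polynomial functions `t ↦ ∑ i, t ^ i • a i` of one scalar parameter. -/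
def polynomialFamilies : Submodule F (F → W) :=
  Submodule.span F {f | ∃ (i : ℕ) (a : W), f = fun t => t ^ i • a}

lemma pow_smul_mem_polynomialFamilies (i : ℕ) (a : W) :
    (fun t : F => t ^ i • a) ∈ polynomialFamilies F W :=
  Submodule.subset_span ⟨i, a, rfl⟩

lemma const_mem_polynomialFamilies (a : W) : (fun _ : F => a) ∈ polynomialFamilies F W := by
  simpa using pow_smul_mem_polynomialFamilies (F := F) 0 a

lemma add_smul_mem_polynomialFamilies (a b : W) :
    (fun t : F => a + t • b) ∈ polynomialFamilies F W := by
  simpa only [pow_one] using! add_mem (const_mem_polynomialFamilies (F := F) a)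
    (pow_smul_mem_polynomialFamilies (F := F) 1 b)

lemma bilin_mem_polynomialFamilies (β : W →ₗ[F] W₁ →ₗ[F] W₂) {f : F → W} {g : F → W₁}
    (hf : f ∈ polynomialFamilies F W) (hg : g ∈ polynomialFamilies F W₁) :
    (fun t => β (f t) (g t)) ∈ polynomialFamilies F W₂ := by
  induction hf, hg using Submodule.span_induction₂ with
  | mem_mem f g hf hg =>
    obtain ⟨i, a, rfl⟩ := hf
    obtain ⟨j, b, rfl⟩ := hg
    convert pow_smul_mem_polynomialFamilies (F := F) (j + i) (β a b) using 2 with t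
    simp [pow_add, mul_smul]
  | zero_left => simpa using const_mem_polynomialFamilies (0 : W₂)
  | zero_right => simpa using const_mem_polynomialFamilies (0 : W₂)
  | add_left f f' g _ _ _ h h' =>
    simp only [Pi.add_apply, map_add, LinearMap.add_apply]
    exact add_mem h h'
  | add_right f g g' _ _ _ h h' =>
    simp only [Pi.add_apply, map_add]
    exact add_mem h h'
  | smul_left c f g _ _ h =>
    simp only [Pi.smul_apply, map_smul, LinearMap.smul_apply]
    exact Submodule.smul_mem _ c h
  | smul_right c f g _ _ h =>
    simp only [Pi.smul_apply, map_smul]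
    exact Submodule.smul_mem _ c h

lemma pow_apply_mem_polynomialFamilies {f : F → Module.End F W}
    (hf : f ∈ polynomialFamilies F (Module.End F W)) (w : W) (n : ℕ) :
    (fun t => (f t ^ n) w) ∈ polynomialFamilies F W := by
  induction n with
  | zero => exact const_mem_polynomialFamilies w
  | succ n ih => simpa only [pow_succ'] using! bilin_mem_polynomialFamilies .id hf ih

lemma exists_polynomial_eval_eq (φ : W →ₗ[F] F) {f : F → W} (hf : f ∈ polynomialFamilies F W) :
    ∃ q : Polynomial F, ∀ t, φ (f t) = q.eval t := by
  induction hf using Submodule.span_induction with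
  | mem f hf =>
    obtain ⟨i, a, rfl⟩ := hf
    exact ⟨Polynomial.C (φ a) * Polynomial.X ^ i, fun t => by simp [mul_comm (φ a)]⟩
  | zero => exact ⟨0, fun t => by simp⟩
  | add f g _ _ h h' =>
    obtain ⟨q, hq⟩ := h
    obtain ⟨r, hr⟩ := h'
    exact ⟨q + r, fun t => by simp [hq, hr]⟩
  | smul c f _ h =>
    obtain ⟨q, hq⟩ := h
    exact ⟨Polynomial.C c * q, fun t => by simp [hq]⟩

/-- The polynomial families that stay in a varying submodule `M t`: the polynomial sections of the
family of submodules `M`. -/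
def polynomialSections (M : F → Submodule F W) : Submodule F (F → W) :=
  polynomialFamilies F W ⊓ Submodule.pi Set.univ M

lemma mem_polynomialSections {M : F → Submodule F W} {f : F → W} :
    f ∈ polynomialSections M ↔ f ∈ polynomialFamilies F W ∧ ∀ t, f t ∈ M t := by
  simp [polynomialSections]

end Basic

section Semicontinuity

variable [Field F] [AddCommGroup W] [Module F W]

lemma exists_linearIndependent_of_eval_ne_zero {ι : Type*} [Finite ι] {f : ι → F → W}
    (hf : ∀ i, f i ∈ polynomialFamilies F W) {t₀ : F}
    (h₀ : LinearIndependent F fun i => f i t₀) :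
    ∃ q : Polynomial F, q.eval t₀ ≠ 0 ∧
      ∀ t, q.eval t ≠ 0 → LinearIndependent F fun i => f i t := by
  classical
  have := Fintype.ofFinite ι
  obtain ⟨g, hg⟩ := LinearMap.exists_leftInverse_of_injective _
    (LinearMap.ker_eq_bot.2 h₀)
  have hg₀ (i : ι) : g (f i t₀) = Finsupp.single i 1 := by
    simpa using LinearMap.congr_fun hg (Finsupp.single i 1)
  choose Q hQ using fun i j => exists_polynomial_eval_eq (Finsupp.lapply j ∘ₗ g) (hf i)
  have hdet (t : F) :
      (Matrix.of Q).det.eval t = (Matrix.of fun i j => g (f i t) j).det := by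
    rw [← Polynomial.coe_evalRingHom, RingHom.map_det]
    congr 1
    ext i j
    simp [← hQ]
  refine ⟨(Matrix.of Q).det, ?_, fun t ht => ?_⟩
  · have : (Matrix.of fun i j => g (f i t₀) j) = (1 : Matrix ι ι F) := by
      ext i j
      simp [hg₀, Matrix.one_apply, Finsupp.single_apply]
    simp [hdet, this]
  · rw [hdet] at ht
    exact .of_comp ((Finsupp.linearEquivFunOnFinite F F ι).toLinearMap ∘ₗ g)
      (Matrix.linearIndependent_rows_of_det_ne_zero ht)

-- Lower semicontinuity: a minor that is nonzero at `t₀` is nonzero at all but finitely many `t`.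
theorem rank_le_of_forall_eval_ne_zero [Infinite F] {n : ℕ} {M : F → Submodule F W}
    {q : Polynomial F} (hq : q ≠ 0)
    (hM : ∀ t, q.eval t ≠ 0 → Module.rank F (M t) ≤ (n : Cardinal)) {t₀ : F}
    (h₀ : M t₀ ≤ (polynomialSections M).map (LinearMap.proj t₀)) :
    Module.rank F (M t₀) ≤ (n : Cardinal) := by
  by_contra! hlt
  have hle : ((n + 1 : ℕ) : Cardinal) ≤ Module.rank F (M t₀) := by
    simpa only [Cardinal.succ_natCast, Nat.cast_succ] using Order.succ_le_of_lt hlt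
  obtain ⟨v, hv⟩ := Module.le_rank_iff.1 hle
  choose f hf hfv using fun i => h₀ (v i).2
  simp only [SetLike.mem_coe, mem_polynomialSections, LinearMap.proj_apply] at hf hfv
  have hv' : LinearIndependent F fun i => f i t₀ := by
    simpa only [hfv] using! hv.map' _ (M t₀).ker_subtype
  obtain ⟨r, hr₀, hr⟩ := exists_linearIndependent_of_eval_ne_zero (fun i => (hf i).1) hv'
  have hr_ne : r ≠ 0 := by
    rintro rfl
    simp at hr₀
  obtain ⟨t, ht⟩ := Polynomial.exists_eval_ne_zero_of_natDegree_lt_card (q * r)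
    (mul_ne_zero hq hr_ne) (Cardinal.natCast_lt_aleph0.trans_le (Cardinal.aleph0_le_mk F))
  rw [Polynomial.eval_mul] at ht
  have hind : LinearIndependent F fun i => (⟨f i t, (hf i).2 t⟩ : M t) :=
    .of_comp (M t).subtype (hr t (right_ne_zero_of_mul ht))
  have hrank := (Module.le_rank_iff.2 ⟨_, hind⟩).trans (hM t (left_ne_zero_of_mul ht))
  exact n.lt_irrefl (by exact_mod_cast hrank)

end Semicontinuity

end PolynomialFamilies

section DerivedSubmodule

variable {F W : Type*}

section Basic

variable [CommRing F] [LieRing W] [LieAlgebra F W]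

/-- The derived subalgebra `[L, L]` of a Lie subalgebra `L` of `W`, as a subspace of `W`. -/
def derivedSubmodule (L : LieSubalgebra F W) : Submodule F W :=
  Submodule.span F {z | ∃ a ∈ L, ∃ b ∈ L, ⁅a, b⁆ = z}

lemma lie_mem_derivedSubmodule {L : LieSubalgebra F W} {a b : W} (ha : a ∈ L) (hb : b ∈ L) :
    ⁅a, b⁆ ∈ derivedSubmodule L :=
  Submodule.subset_span ⟨a, ha, b, hb, rfl⟩

lemma derivedSubmodule_le {L : LieSubalgebra F W} {N : Submodule F W}
    (h : ∀ a ∈ L, ∀ b ∈ L, ⁅a, b⁆ ∈ N) : derivedSubmodule L ≤ N := by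
  rw [derivedSubmodule, Submodule.span_le]
  rintro _ ⟨a, ha, b, hb, rfl⟩
  exact h a ha b hb

lemma lie_mem_polynomialFamilies {f g : F → W} (hf : f ∈ polynomialFamilies F W)
    (hg : g ∈ polynomialFamilies F W) : (fun t => ⁅f t, g t⁆) ∈ polynomialFamilies F W :=
  bilin_mem_polynomialFamilies (LieModule.toEnd F W W : W →ₗ[F] Module.End F W) hf hg

variable {G : Set (F → W)}

lemma lieSpan_le_map_polynomialSections (hG : G ⊆ polynomialFamilies F W) (t₀ : F) :
    (LieSubalgebra.lieSpan F W (Function.eval t₀ '' G)).toSubmodule ≤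
      (polynomialSections fun t =>
        (LieSubalgebra.lieSpan F W (Function.eval t '' G)).toSubmodule).map
          (LinearMap.proj t₀) := by
  set S := polynomialSections fun t =>
    (LieSubalgebra.lieSpan F W (Function.eval t '' G)).toSubmodule
  let K : LieSubalgebra F W :=
    { S.map (LinearMap.proj t₀) with
      lie_mem' := by
        rintro _ _ ⟨f, hf, rfl⟩ ⟨f', hf', rfl⟩
        rw [SetLike.mem_coe, mem_polynomialSections] at hf hf'
        exact ⟨fun t => ⁅f t, f' t⁆, mem_polynomialSections.2
          ⟨lie_mem_polynomialFamilies hf.1 hf'.1,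
            fun t => LieSubalgebra.lie_mem _ (hf.2 t) (hf'.2 t)⟩, rfl⟩ }
  change LieSubalgebra.lieSpan F W (Function.eval t₀ '' G) ≤ K
  rw [LieSubalgebra.lieSpan_le]
  rintro _ ⟨g, hg, rfl⟩
  exact ⟨g, mem_polynomialSections.2
    ⟨hG hg, fun t => LieSubalgebra.subset_lieSpan ⟨g, hg, rfl⟩⟩, rfl⟩

lemma derivedSubmodule_lieSpan_le_map_polynomialSections
    (hG : G ⊆ polynomialFamilies F W) (t₀ : F) :
    derivedSubmodule (LieSubalgebra.lieSpan F W (Function.eval t₀ '' G)) ≤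
      (polynomialSections fun t =>
        derivedSubmodule (LieSubalgebra.lieSpan F W (Function.eval t '' G))).map
          (LinearMap.proj t₀) := by
  refine derivedSubmodule_le fun a ha b hb => ?_
  obtain ⟨f, hf, rfl⟩ := lieSpan_le_map_polynomialSections hG t₀ ha
  obtain ⟨f', hf', rfl⟩ := lieSpan_le_map_polynomialSections hG t₀ hb
  rw [SetLike.mem_coe, mem_polynomialSections] at hf hf'
  exact ⟨fun t => ⁅f t, f' t⁆, mem_polynomialSections.2
    ⟨lie_mem_polynomialFamilies hf.1 hf'.1, fun t => lie_mem_derivedSubmodule (hf.2 t) (hf'.2 t)⟩,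
    rfl⟩

end Basic

theorem rank_derivedSubmodule_lieSpan_le_of_forall_eval_ne_zero [Field F] [Infinite F] [LieRing W]
    [LieAlgebra F W] {G : Set (F → W)} (hG : G ⊆ polynomialFamilies F W) {n : ℕ}
    {q : Polynomial F} (hq : q ≠ 0)
    (h : ∀ t, q.eval t ≠ 0 → Module.rank F
      (derivedSubmodule (LieSubalgebra.lieSpan F W (Function.eval t '' G))) ≤ (n : Cardinal))
    (t₀ : F) :
    Module.rank F (derivedSubmodule (LieSubalgebra.lieSpan F W (Function.eval t₀ '' G))) ≤
      (n : Cardinal) :=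
  rank_le_of_forall_eval_ne_zero hq h (derivedSubmodule_lieSpan_le_map_polynomialSections hG t₀)

theorem rank_derivedSubmodule_lieSpan_pair_le_of_line [Field F] [Infinite F] [LieRing W]
    [LieAlgebra F W] {x y₀ y : W} {n : ℕ} {q : Polynomial F} (hq : q ≠ 0)
    (h : ∀ t, q.eval t ≠ 0 → Module.rank F
      (derivedSubmodule (LieSubalgebra.lieSpan F W {x, y₀ + t • (y - y₀)})) ≤ (n : Cardinal)) :
    Module.rank F (derivedSubmodule (LieSubalgebra.lieSpan F W {x, y})) ≤ (n : Cardinal) := by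
  let G : Set (F → W) := {fun _ => x, fun t => y₀ + t • (y - y₀)}
  have hG : G ⊆ polynomialFamilies F W :=
    Set.pair_subset (const_mem_polynomialFamilies x) (add_smul_mem_polynomialFamilies y₀ (y - y₀))
  have hGt (t : F) : Function.eval t '' G = {x, y₀ + t • (y - y₀)} := Set.image_pair ..
  have hrank := rank_derivedSubmodule_lieSpan_le_of_forall_eval_ne_zero (n := n) hG hq
    (fun t ht => (hGt t).symm ▸ h t ht) 1
  rwa [hGt, one_smul, add_sub_cancel] at hrank

end DerivedSubmodule

section RestrictedPow

variable {R A : Type*} [CommRing R] [CommRing A] [Algebra R A]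

lemma mulLeft_sub_mulRight_pow_mul (y : Derivation R A A) (n : ℕ) (a : A) :
    ((LinearMap.mulLeft R (y : Module.End R A) - LinearMap.mulRight R (y : Module.End R A)) ^ n)
      (LinearMap.mul R A a) = LinearMap.mul R A (((y : Module.End R A) ^ n) a) := by
  have h : (LinearMap.mulLeft R (y : Module.End R A) - LinearMap.mulRight R (y : Module.End R A)) ∘ₗ
      LinearMap.mul R A = LinearMap.mul R A ∘ₗ (y : Module.End R A) := by
    ext a b
    simp [mul_comm]
  exact LinearMap.congr_fun (Module.End.commute_pow_left_of_commute h n) a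

variable (p : ℕ) [Fact p.Prime] [CharP A p]

-- In characteristic `p`, `(L - R) ^ p ^ i = L ^ p ^ i - R ^ p ^ i` for the commuting left and right
-- multiplications `L`, `R` by `y`; apply both sides to multiplication by `a`.
lemma pow_prime_pow_leibniz (y : Derivation R A A) (i : ℕ) (a b : A) :
    ((y : Module.End R A) ^ p ^ i) (a * b) =
      a * ((y : Module.End R A) ^ p ^ i) b + b * ((y : Module.End R A) ^ p ^ i) a := by
  have : CharP (Module.End R A) p :=
    charP_of_injective_ringHom (f := (Algebra.lmul R A).toRingHom) Algebra.lmul_injective p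
  have : CharP (Module.End R (Module.End R A)) p :=
    charP_of_injective_ringHom (f := (Algebra.lmul R (Module.End R A)).toRingHom)
      Algebra.lmul_injective p
  have h := mulLeft_sub_mulRight_pow_mul y (p ^ i) a
  have hsub := sub_pow_char_pow_of_commute (R := Module.End R (Module.End R A)) (p := p) (n := i)
    (LinearMap.commute_mulLeft_right (R := R) (y : Module.End R A) (y : Module.End R A))
  rw [hsub, LinearMap.pow_mulLeft, LinearMap.pow_mulRight] at h
  have hb : ((y : Module.End R A) ^ p ^ i) (a * b) - a * ((y : Module.End R A) ^ p ^ i) b =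
      ((y : Module.End R A) ^ p ^ i) a * b := LinearMap.congr_fun h b
  rw [mul_comm b, ← hb, add_sub_cancel]

/-- The `p ^ i`-th power `y ^ [p ^ i]` of a derivation in the restricted Lie algebra of derivations
of a commutative algebra of characteristic `p`: the iterate of `y`, which is again a derivation. -/
def restrictedPow (i : ℕ) (y : Derivation R A A) : Derivation R A A :=
  Derivation.mk' ((y : Module.End R A) ^ p ^ i) (pow_prime_pow_leibniz p y i)

@[simp]
lemma lie_restrictedPow_self (i : ℕ) (y : Derivation R A A) : ⁅y, restrictedPow p i y⁆ = 0 := by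
  ext a
  rw [Derivation.commutator_apply, Derivation.zero_apply, sub_eq_zero]
  exact LinearMap.congr_fun (Commute.self_pow (y : Module.End R A) (p ^ i)) a

end RestrictedPow

section Krylov

section Module

variable {R M : Type*} [CommRing R] [AddCommGroup M] [Module R M] {f : Module.End R M} {v w : M}

variable (f v) in
/-- The Krylov subspace of `v` under `f`: the smallest `f`-stable submodule containing `v`. -/
def krylov : Submodule R M :=
  Submodule.span R (Set.range fun n : ℕ => (f ^ n) v)

lemma pow_apply_mem_krylov (n : ℕ) : (f ^ n) v ∈ krylov f v :=
  Submodule.subset_span ⟨n, rfl⟩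

lemma self_mem_krylov : v ∈ krylov f v :=
  pow_apply_mem_krylov 0

lemma apply_mem_krylov (hw : w ∈ krylov f v) : f w ∈ krylov f v := by
  suffices krylov f v ≤ (krylov f v).comap f from this hw
  refine Submodule.span_le.2 ?_
  rintro _ ⟨n, rfl⟩
  simpa only [pow_succ'] using! pow_apply_mem_krylov (f := f) (v := v) (n + 1)

lemma krylov_le {N : Submodule R M} (hv : v ∈ N) (hf : ∀ w ∈ N, f w ∈ N) : krylov f v ≤ N := by
  refine Submodule.span_le.2 ?_
  rintro _ ⟨n, rfl⟩
  exact Module.End.pow_apply_mem_of_forall_mem _ hf _ hv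

lemma finrank_le_natDegree_minpoly_of_krylov_eq_top {F V : Type*} [Field F] [AddCommGroup V]
    [Module F V] [Module.Finite F V] {f : Module.End F V} {v : V} (h : krylov f v = ⊤) :
    Module.finrank F V ≤ (minpoly F f).natDegree := by
  classical
  have hf : IsIntegral F f := .of_finite F f
  let s : Finset (Module.End F V) := (Finset.range (minpoly F f).natDegree).image (f ^ ·)
  have htop : (Submodule.span F (s : Set (Module.End F V))).map (LinearMap.applyₗ v) = ⊤ := by
    rw [eq_top_iff, ← h, Submodule.span_range_natDegree_eq_adjoin (minpoly.monic hf)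
      (minpoly.aeval F f), krylov, Submodule.span_le]
    rintro _ ⟨n, rfl⟩
    exact ⟨f ^ n, pow_mem (Algebra.self_mem_adjoin_singleton F f) n, rfl⟩
  calc Module.finrank F V
      = Module.finrank F ((Submodule.span F (s : Set (Module.End F V))).map
          (LinearMap.applyₗ v)) := by rw [htop, finrank_top]
    _ ≤ Module.finrank F (Submodule.span F (s : Set (Module.End F V))) :=
        Submodule.finrank_map_le _ _
    _ ≤ s.card := finrank_span_finset_le_card s
    _ ≤ (minpoly F f).natDegree := by simpa using Finset.card_image_le (s := Finset.range _)

end Module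

section Derivation

variable {R A : Type*} [CommRing R] [CommRing A] [Algebra R A] {y : Derivation R A A} {u : A}

lemma mul_mem_krylov (hu : ∀ b, b * u ∈ krylov (y : Module.End R A) u) (b : A) {c : A}
    (hc : c ∈ krylov (y : Module.End R A) u) : b * c ∈ krylov (y : Module.End R A) u := by
  let N : Submodule R A := ⨅ b, (krylov (y : Module.End R A) u).comap (LinearMap.mulLeft R b)
  have hN {c : A} : c ∈ N ↔ ∀ b, b * c ∈ krylov (y : Module.End R A) u := by simp [N]
  refine hN.1 (krylov_le (hN.2 hu) (fun c hc => hN.2 fun b => ?_) hc) b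
  have h : b * y c = y (b * c) - y b * c := by
    rw [y.leibniz, smul_eq_mul, smul_eq_mul]
    ring
  rw [hN] at hc
  simpa only [Derivation.coeFn_coe, h] using sub_mem (apply_mem_krylov (hc b)) (hc (y b))

lemma krylov_eq_top_of_isUnit_mem (hu : ∀ b, b * u ∈ krylov (y : Module.End R A) u) {c : A}
    (hc : IsUnit c) (hmem : c ∈ krylov (y : Module.End R A) u) :
    krylov (y : Module.End R A) u = ⊤ := by
  refine eq_top_iff.2 fun b _ => ?_
  obtain ⟨c', hc'⟩ := hc.exists_left_inv
  simpa only [mul_assoc, hc', mul_one] using mul_mem_krylov hu (b * c') hmem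

lemma eq_zero_of_lie_eq_zero_of_smul_eq_zero {D : Derivation R A A} (hD : ⁅y, D⁆ = 0)
    (huD : u • D = 0) (htop : krylov (y : Module.End R A) u = ⊤) : D = 0 := by
  have hann : krylov (y : Module.End R A) u ≤
      (LinearMap.ker (LinearMap.toSpanSingleton A (Derivation R A A) D)).restrictScalars R := by
    refine krylov_le huD fun c (hc : c • D = 0) => ?_
    have hlie : ⁅y, c • D⁆ = y c • D + c • ⁅y, D⁆ := by
      ext b
      simp only [Derivation.commutator_apply, Derivation.smul_apply, Derivation.add_apply,
        Derivation.leibniz, smul_eq_mul]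
      ring
    simpa [hc, hD] using hlie.symm
  have h1 : (1 : A) • D = 0 := hann (htop ▸ Submodule.mem_top)
  rwa [one_smul] at h1

lemma linearIndependent_restrictedPow {F B : Type*} [Field F] [CommRing B] [Algebra F B]
    [Module.Finite F B] {p m : ℕ} [Fact p.Prime] [CharP B p] {y : Derivation F B B} {u : B}
    (htop : krylov (y : Module.End F B) u = ⊤) (hm : p ^ m ≤ Module.finrank F B) :
    LinearIndependent F fun i : Fin m => restrictedPow p i y := by
  have hp : 1 < p := (Fact.out : p.Prime).one_lt
  let e (i : Fin m) : Fin (minpoly F (y : Module.End F B)).natDegree :=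
    ⟨p ^ (i : ℕ), (Nat.pow_lt_pow_right hp i.2).trans_le
      (hm.trans (finrank_le_natDegree_minpoly_of_krylov_eq_top htop))⟩
  have he : Function.Injective e := fun i j h =>
    Fin.ext (Nat.pow_right_injective hp (congrArg Fin.val h))
  exact .of_comp (LieModule.toEnd F (Derivation F B B) B : Derivation F B B →ₗ[F] Module.End F B)
    ((linearIndependent_pow (y : Module.End F B)).comp e he)

end Derivation

end Krylov

section CommutingMultiples

variable {R A : Type*} [CommRing R] [CommRing A] [Algebra R A] {y D : Derivation R A A}

lemma lie_smul_add_smul_of_lie_eq_zero (hD : ⁅y, D⁆ = 0) (s s' : R) (b b' : A) :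
    ⁅s • y + b • D, s' • y + b' • D⁆ = (s • y b' - s' • y b + b * D b' - b' * D b) • D := by
  ext c
  have hc : y (D c) = D (y c) := by
    rw [← sub_eq_zero, ← Derivation.commutator_apply, hD, Derivation.zero_apply]
  simp only [Derivation.commutator_apply, Derivation.add_apply, Derivation.smul_apply, map_add,
    Derivation.leibniz, smul_eq_mul, hc, Algebra.smul_def, Derivation.map_algebraMap]
  ring

lemma exists_smul_add_smul_of_mem_lieSpan_pair (hD : ⁅y, D⁆ = 0) {u : A} {z : Derivation R A A}
    (hz : z ∈ LieSubalgebra.lieSpan R (Derivation R A A) {u • D, y}) :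
    ∃ (s : R) (b : A), s • y + b • D = z := by
  induction hz using LieSubalgebra.lieSpan_induction with
  | mem z hz =>
    rcases hz with rfl | rfl
    · exact ⟨0, u, by simp⟩
    · exact ⟨1, 0, by simp⟩
  | zero => exact ⟨0, 0, by simp⟩
  | add z z' _ _ h h' =>
    obtain ⟨s, b, rfl⟩ := h
    obtain ⟨s', b', rfl⟩ := h'
    exact ⟨s + s', b + b', by rw [add_smul, add_smul, add_add_add_comm]⟩
  | smul r z _ h =>
    obtain ⟨s, b, rfl⟩ := h
    exact ⟨r * s, r • b, by rw [smul_add, mul_smul, smul_assoc]⟩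
  | lie z z' _ _ h h' =>
    obtain ⟨s, b, rfl⟩ := h
    obtain ⟨s', b', rfl⟩ := h'
    exact ⟨0, _, by rw [lie_smul_add_smul_of_lie_eq_zero hD, zero_smul, zero_add]⟩

lemma derivedSubmodule_lieSpan_pair_le_of_lie_eq_zero (hD : ⁅y, D⁆ = 0) (u : A) :
    derivedSubmodule (LieSubalgebra.lieSpan R (Derivation R A A) {u • D, y}) ≤
      ((LinearMap.toSpanSingleton A (Derivation R A A) D).restrictScalars R).range := by
  refine derivedSubmodule_le fun a ha b hb => ?_
  obtain ⟨s, b, rfl⟩ := exists_smul_add_smul_of_mem_lieSpan_pair hD ha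
  obtain ⟨s', b', rfl⟩ := exists_smul_add_smul_of_mem_lieSpan_pair hD hb
  exact ⟨_, (lie_smul_add_smul_of_lie_eq_zero hD s s' b b').symm⟩

end CommutingMultiples

section Socle

variable {F B : Type*} [Field F] [CommRing B] [Algebra F B] {ε : B →ₐ[F] F} {u : B}
  {y : Derivation F B B}

lemma krylov_eq_top_iff_exists_apply_ne_zero [IsLocalHom ε] (hu : ∀ b, b * u = ε b • u) :
    krylov (y : Module.End F B) u = ⊤ ↔ ∃ n, ε (((y : Module.End F B) ^ n) u) ≠ 0 := by
  refine ⟨fun htop => ?_, fun ⟨n, hn⟩ => ?_⟩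
  · by_contra! hzero
    have hle : krylov (y : Module.End F B) u ≤ LinearMap.ker ε.toLinearMap := by
      refine Submodule.span_le.2 ?_
      rintro _ ⟨n, rfl⟩
      exact hzero n
    have h1 : ε 1 = 0 := hle (htop ▸ Submodule.mem_top)
    simp at h1
  · exact krylov_eq_top_of_isUnit_mem
      (fun b => hu b ▸ Submodule.smul_mem _ _ self_mem_krylov)
      (isUnit_of_map_unit ε _ hn.isUnit) (pow_apply_mem_krylov n)

lemma smul_eq_smul_of_forall_apply_eq (hu : ∀ b, b * u = ε b • u) {s : Set B}
    (hs : Algebra.adjoin F s = ⊤) {D D' : Derivation F B B} (h : ∀ b ∈ s, ε (D b) = ε (D' b)) :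
    u • D = u • D' := by
  refine Derivation.ext_of_adjoin_eq_top s hs fun b hb => ?_
  simp only [Derivation.smul_apply, smul_eq_mul, mul_comm u, hu, h b hb]

variable {p m : ℕ} [Fact p.Prime] [CharP B p] [Module.Finite F B] {x : Fin m → B}

-- The combinations of the `m` restricted powers of `y` commute with `y`, so their values at the
-- augmentation embed into `F ^ m`; by dimension, every value is attained.
lemma exists_lie_eq_zero_smul_eq (hu : ∀ b, b * u = ε b • u)
    (hx : Algebra.adjoin F (Set.range x) = ⊤) (hm : p ^ m ≤ Module.finrank F B)
    (htop : krylov (y : Module.End F B) u = ⊤) (d : Derivation F B B) :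
    ∃ D : Derivation F B B, ⁅y, D⁆ = 0 ∧ u • D = u • d := by
  let S : (Fin m → F) →ₗ[F] Derivation F B B :=
    Fintype.linearCombination F fun i : Fin m => restrictedPow p i y
  let ev : Derivation F B B →ₗ[F] Fin m → F := LinearMap.pi fun j =>
    ε.toLinearMap ∘ₗ
      (LieModule.toEnd F (Derivation F B B) B : Derivation F B B →ₗ[F] Module.End F B).flip (x j)
  have hev {D D' : Derivation F B B} (h : ev D = ev D') : u • D = u • D' := by
    refine smul_eq_smul_of_forall_apply_eq hu hx ?_
    rintro _ ⟨j, rfl⟩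
    exact congrFun h j
  have hcomm (c : Fin m → F) : ⁅y, S c⁆ = 0 := by
    simp [S, Fintype.linearCombination_apply, lie_sum]
  have hinj : Function.Injective (ev ∘ₗ S) := by
    refine (injective_iff_map_eq_zero _).2 fun c hc => ?_
    have hSc : u • S c = 0 := by simpa using hev (D' := 0) (by simpa using hc)
    refine (linearIndependent_restrictedPow htop hm).fintypeLinearCombination_injective ?_
    rw [map_zero]
    exact eq_zero_of_lie_eq_zero_of_smul_eq_zero (hcomm c) hSc htop
  obtain ⟨c, hc⟩ := LinearMap.injective_iff_surjective.1 hinj (ev d)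
  exact ⟨S c, hcomm c, hev hc⟩

theorem rank_derivedSubmodule_lieSpan_pair_le_of_krylov_eq_top (hu : ∀ b, b * u = ε b • u)
    (hx : Algebra.adjoin F (Set.range x) = ⊤) (hm : p ^ m ≤ Module.finrank F B)
    (htop : krylov (y : Module.End F B) u = ⊤) (d : Derivation F B B) :
    Module.rank F (derivedSubmodule (LieSubalgebra.lieSpan F (Derivation F B B) {u • d, y})) ≤
      Module.rank F B := by
  obtain ⟨D, hD, hDd⟩ := exists_lie_eq_zero_smul_eq hu hx hm htop d
  rw [← hDd]
  exact (Submodule.rank_mono (derivedSubmodule_lieSpan_pair_le_of_lie_eq_zero hD u)).trans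
    (rank_range_le _)

end Socle

section Perturbation

theorem rank_derivedSubmodule_lieSpan_pair_le {F B : Type*} [Field F] [Infinite F] [CommRing B]
    [Algebra F B] [Module.Finite F B] {ε : B →ₐ[F] F} [IsLocalHom ε] {u : B}
    (hu : ∀ b, b * u = ε b • u) {p m : ℕ} [Fact p.Prime] [CharP B p] {x : Fin m → B}
    (hx : Algebra.adjoin F (Set.range x) = ⊤) (hm : p ^ m ≤ Module.finrank F B)
    {y₀ : Derivation F B B} (htop : krylov (y₀ : Module.End F B) u = ⊤) (d y : Derivation F B B) :
    Module.rank F (derivedSubmodule (LieSubalgebra.lieSpan F (Derivation F B B) {u • d, y})) ≤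
      (Module.finrank F B : Cardinal) := by
  let z (t : F) : Derivation F B B := y₀ + t • (y - y₀)
  obtain ⟨n, hn⟩ := (krylov_eq_top_iff_exists_apply_ne_zero hu).1 htop
  have hz : (fun t => (z t : Module.End F B)) ∈ polynomialFamilies F (Module.End F B) :=
    add_smul_mem_polynomialFamilies (y₀ : Module.End F B) (y - y₀ : Derivation F B B)
  obtain ⟨q, hq⟩ :=
    exists_polynomial_eval_eq ε.toLinearMap (pow_apply_mem_polynomialFamilies hz u n)
  have hq_ne : q ≠ 0 := by
    rintro rfl
    exact hn (by simpa [z] using hq 0)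
  refine rank_derivedSubmodule_lieSpan_pair_le_of_line (y₀ := y₀) hq_ne fun t ht => ?_
  rw [Module.finrank_eq_rank]
  exact rank_derivedSubmodule_lieSpan_pair_le_of_krylov_eq_top hu hx hm
    ((krylov_eq_top_iff_exists_apply_ne_zero hu).2 ⟨n, (hq t).trans_ne ht⟩) d

end Perturbation

section Odometer

variable {F B : Type*} [Field F] [CommRing B] [Algebra F B] {y : Derivation F B B} {n : ℕ}

lemma derivation_pow_succ_mul {v w g c : B} (hv : y v = w) (hvn : v ^ (n + 1) = 0)
    (hg : y g = w * v ^ n * c) (k : ℕ) :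
    y (v ^ (k + 1) * g) = ((k + 1 : ℕ) : F) • (w * (v ^ k * g)) := by
  have hvk : v ^ (k + 1) * v ^ n = 0 := by
    rw [← pow_add, add_right_comm, add_assoc, pow_add, hvn, mul_zero]
  rw [y.leibniz, y.leibniz_pow, hv, hg]
  simp only [smul_eq_mul, nsmul_eq_mul, add_tsub_cancel_right]
  rw [Algebra.smul_def, map_natCast]
  linear_combination w * c * hvk

lemma mem_of_mul_pow_mem {N : Submodule F B} (hN : ∀ b ∈ N, y b ∈ N) {v w : B} (hv : y v = w)
    (hvn : v ^ (n + 1) = 0) (hn : (n.factorial : F) ≠ 0)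
    (hw : ∀ g, w ∣ y g → w * g ∈ N → g ∈ N) {g : B} (hg : w * v ^ n ∣ y g)
    (hmem : w * v ^ n * g ∈ N) : g ∈ N := by
  obtain ⟨c, hc⟩ := hg
  have hdvd (k : ℕ) : w ∣ y (v ^ k * g) := by
    rw [y.leibniz, y.leibniz_pow, hv, hc]
    exact dvd_add ⟨v ^ k * (v ^ n * c), by simp only [smul_eq_mul]; ring⟩
      ⟨g * (k • v ^ (k - 1)), by simp only [smul_eq_mul, nsmul_eq_mul]; ring⟩
  suffices v ^ 0 * g ∈ N by simpa using this
  refine Nat.decreasingInduction (motive := fun k _ => v ^ k * g ∈ N) (fun k hk ih => ?_)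
    (hw _ (hdvd n) (by rwa [← mul_assoc])) n.zero_le
  have hk₀ : ((k + 1 : ℕ) : F) ≠ 0 := fun h =>
    hn (zero_dvd_iff.1 (h ▸ Nat.cast_dvd_cast (Nat.dvd_factorial k.succ_pos hk)))
  have hy := hN _ ih
  rw [derivation_pow_succ_mul hv hvn hc, Submodule.smul_mem_iff _ hk₀] at hy
  exact hw _ (hdvd k) hy

/-- The derivation sending `x i` to the product of the `x j ^ n` with `j < i`. On monomials with
exponents at most `n` it acts, up to scalars, like subtracting one from a number in base `n + 1`. -/
def IsOdometer {m : ℕ} (n : ℕ) (x : Fin m → B) (y : Derivation F B B) : Prop :=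
  ∀ i, y (x i) = Fin.partialProd (fun j => x j ^ n) i.castSucc

variable {m : ℕ} {x : Fin m → B}

lemma IsOdometer.one_mem_krylov (hy : IsOdometer n x y) (hx : ∀ i, x i ^ (n + 1) = 0)
    (hn : (n.factorial : F) ≠ 0) :
    1 ∈ krylov (y : Module.End F B) (Fin.partialProd (fun j => x j ^ n) (Fin.last m)) := by
  set N := krylov (y : Module.End F B) (Fin.partialProd (fun j => x j ^ n) (Fin.last m))
  have hdescend (i : Fin (m + 1)) : ∀ g, Fin.partialProd (fun j => x j ^ n) i ∣ y g →
      Fin.partialProd (fun j => x j ^ n) i * g ∈ N → g ∈ N := by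
    induction i using Fin.induction with
    | zero => simp
    | succ i ih =>
      intro g hg hmem
      rw [Fin.partialProd_succ] at hg hmem
      exact mem_of_mul_pow_mem (fun b => apply_mem_krylov) (hy i) (hx i) hn ih hg hmem
  refine hdescend (Fin.last m) 1 (by simp) ?_
  rw [mul_one]
  exact self_mem_krylov

end Odometer

section Augmentation

variable {R A : Type*} [CommRing R] [CommRing A] [Algebra R A] {ε : A →ₐ[R] R} {s : Set A}

lemma sub_algebraMap_apply_mem_of_adjoin_eq_top (hs : Algebra.adjoin R s = ⊤)
    (hε : ∀ a ∈ s, ε a = 0) {I : Ideal A} (hI : s ⊆ I) (a : A) :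
    a - algebraMap R A (ε a) ∈ I := by
  have h : Ideal.Quotient.mkₐ R I = (Algebra.ofId R (A ⧸ I)).comp ε :=
    AlgHom.ext_of_adjoin_eq_top hs fun b hb => by
      simpa [hε b hb] using Ideal.Quotient.eq_zero_iff_mem.2 (hI hb)
  exact Ideal.Quotient.eq.1 (AlgHom.congr_fun h a)

lemma isLocalHom_of_forall_isNilpotent (hs : Algebra.adjoin R s = ⊤) (hε : ∀ a ∈ s, ε a = 0)
    (hnil : ∀ a ∈ s, IsNilpotent a) : IsLocalHom ε where
  map_nonunit a ha := by
    have h : IsNilpotent (a - algebraMap R A (ε a)) :=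
      sub_algebraMap_apply_mem_of_adjoin_eq_top (I := nilradical A) hs hε hnil a
    simpa using h.isUnit_add_left_of_commute (ha.map (algebraMap R A)) (.all _ _)

lemma mul_eq_apply_smul_of_forall_mul_eq_zero (hs : Algebra.adjoin R s = ⊤)
    (hε : ∀ a ∈ s, ε a = 0) {u : A} (hu : ∀ a ∈ s, a * u = 0) (a : A) : a * u = ε a • u := by
  have h := sub_algebraMap_apply_mem_of_adjoin_eq_top (I := Ideal.torsionOf A A u) hs hε hu a
  rwa [Ideal.mem_torsionOf_iff, smul_eq_mul, sub_mul, sub_eq_zero, ← Algebra.smul_def] at h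

end Augmentation

section Quotients

lemma exists_derivation_quotient_span {R A : Type*} [CommRing R] [CommRing A] [Algebra R A]
    {S : Set A} (D : Derivation R A A) (hD : ∀ a ∈ S, D a ∈ Ideal.span S) :
    ∃ D' : Derivation R (A ⧸ Ideal.span S) (A ⧸ Ideal.span S),
      ∀ a, D' (Ideal.Quotient.mk _ a) = Ideal.Quotient.mk _ (D a) := by
  have hspan {a : A} (ha : a ∈ Ideal.span S) : D a ∈ Ideal.span S := by
    induction ha using Submodule.span_induction with
    | mem a ha => exact hD a ha
    | zero => simp
    | add a b _ _ ha hb => simpa using add_mem ha hb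
    | smul r a ha h =>
      rw [smul_eq_mul, Derivation.leibniz]
      exact add_mem (Ideal.mul_mem_left _ _ h) (Ideal.mul_mem_right _ _ ha)
  have hlift (a : A) (ha : Ideal.Quotient.mkₐ R (Ideal.span S) a = 0) :
      Ideal.Quotient.mkₐ R (Ideal.span S) (D a) = 0 :=
    Ideal.Quotient.eq_zero_iff_mem.2 (hspan (Ideal.Quotient.eq_zero_iff_mem.1 ha))
  exact ⟨Derivation.liftOfSurjective (Ideal.Quotient.mkₐ_surjective R _) hlift,
    Derivation.liftOfSurjective_apply (Ideal.Quotient.mkₐ_surjective R _) hlift⟩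

variable {σ R : Type*} [CommRing R]

lemma isCompl_restrictSupport_compl (s : Set (σ →₀ ℕ)) :
    IsCompl (restrictSupport R s) (restrictSupport R sᶜ) := by
  simpa only [restrictSupport_eq_span, coe_basisMonomials] using
    (basisMonomials σ R).linearIndependent.isCompl_span_image (basisMonomials σ R).span_eq
      isCompl_compl

lemma span_monomial_eq_restrictSupport (S : Set (σ →₀ ℕ)) :
    (Ideal.span ((fun s => monomial s (1 : R)) '' S)).restrictScalars R =
      restrictSupport R {a | ∃ s ∈ S, s ≤ a} := by
  ext f
  exact mem_ideal_span_monomial_image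

lemma finrank_quotient_span_monomial [Nontrivial R] (S : Set (σ →₀ ℕ)) :
    Module.finrank R (MvPolynomial σ R ⧸ Ideal.span ((fun s => monomial s (1 : R)) '' S)) =
      Nat.card {a : σ →₀ ℕ // ∀ s ∈ S, ¬s ≤ a} := by
  let T : Set (σ →₀ ℕ) := {a | ∃ s ∈ S, s ≤ a}
  let e := (Submodule.Quotient.restrictScalarsEquiv R
      (Ideal.span ((fun s => monomial s (1 : R)) '' S))).symm ≪≫ₗ
    Submodule.quotEquivOfEq _ _ (span_monomial_eq_restrictSupport S) ≪≫ₗ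
    Submodule.quotientEquivOfIsCompl _ _ (isCompl_restrictSupport_compl T)
  rw [e.finrank_eq, Module.finrank_eq_nat_card_basis (basisRestrictSupport R Tᶜ)]
  simp [T, Set.coe_eq_subtype]

end Quotients

namespace TruncPoly

variable {F : Type} [Field F] {p m : ℕ}

lemma finrank_eq : Module.finrank F (TruncPoly F p m) = p ^ m := by
  have hrange : (Set.range fun i : Fin m => (X i : MvPolynomial (Fin m) F) ^ p) =
      (fun s => monomial s (1 : F)) '' Set.range fun i : Fin m => Finsupp.single i p := by
    rw [← Set.range_comp]
    exact congrArg Set.range (funext fun i => X_pow_eq_monomial)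
  let e : {a : Fin m →₀ ℕ // ∀ s ∈ Set.range fun i : Fin m => Finsupp.single i p, ¬s ≤ a} ≃
      (Fin m → Fin p) :=
    (Finsupp.equivFunOnFinite.subtypeEquiv fun a => by simp).trans
      (Equiv.subtypePiEquivPi.trans (.piCongrRight fun _ => Fin.equivSubtype.symm))
  change Module.finrank F (MvPolynomial (Fin m) F ⧸ Ideal.span (Set.range _)) = _
  rw [hrange, finrank_quotient_span_monomial, Nat.card_congr e]
  simp

lemma exists_derivation_xVar_eq [CharP F p] (v : Fin m → TruncPoly F p m) :
    ∃ D : Derivation F (TruncPoly F p m) (TruncPoly F p m), ∀ i, D (xVar F p m i) = v i := by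
  choose w hw using fun i => Ideal.Quotient.mk_surjective (v i)
  obtain ⟨D, hD⟩ := exists_derivation_quotient_span (mkDerivation F w)
    (S := Set.range fun i : Fin m => (X i : MvPolynomial (Fin m) F) ^ p) <| by
      rintro _ ⟨i, rfl⟩
      simp [Derivation.leibniz_pow, nsmul_eq_mul]
  exact ⟨D, fun i => (hD (X i)).trans (by rw [mkDerivation_X, hw])⟩

instance moduleFinite [NeZero p] : Module.Finite F (TruncPoly F p m) :=
  Module.finite_of_finrank_pos (finrank_eq.trans_gt (by simp [NeZero.pos p]))

lemma adjoin_range_xVar : Algebra.adjoin F (Set.range (xVar F p m)) = ⊤ := by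
  have hrange : Set.range (xVar F p m) = Ideal.Quotient.mkₐ F _ '' Set.range X := by
    rw [← Set.range_comp]
    rfl
  rw [hrange, ← AlgHom.map_adjoin, adjoin_range_X, Algebra.map_top, AlgHom.range_eq_top]
  exact Ideal.Quotient.mkₐ_surjective F _

lemma xVar_pow_eq_zero (i : Fin m) : xVar F p m i ^ p = 0 :=
  Ideal.Quotient.eq_zero_iff_mem.2 (Ideal.subset_span ⟨i, rfl⟩)

lemma xTau_eq_prod : xTau F p m = ∏ i, xVar F p m i ^ (p - 1) := by
  simp [xTau, xVar]

lemma xTau_eq_partialProd :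
    xTau F p m = Fin.partialProd (fun i => xVar F p m i ^ (p - 1)) (Fin.last m) := by
  simp [xTau_eq_prod, Fin.partialProd, List.prod_ofFn, List.take_of_length_le]

lemma xVar_mul_xTau [NeZero p] (i : Fin m) : xVar F p m i * xTau F p m = 0 := by
  rw [xTau_eq_prod, ← Finset.mul_prod_erase _ _ (Finset.mem_univ i), ← mul_assoc,
    mul_pow_sub_one (NeZero.ne p), xVar_pow_eq_zero, zero_mul]

section Augmentation

variable [NeZero p]

/-- The augmentation `B_m → F`, the constant coefficient. -/
noncomputable def augmentation : TruncPoly F p m →ₐ[F] F :=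
  Ideal.Quotient.liftₐ _ (aeval fun _ => 0) fun f hf => by
    suffices Ideal.span _ ≤ RingHom.ker (aeval fun _ : Fin m => (0 : F)) from this hf
    rw [Ideal.span_le]
    rintro _ ⟨i, rfl⟩
    simp [NeZero.ne p]

lemma augmentation_xVar (i : Fin m) : augmentation (xVar F p m i) = 0 :=
  (Ideal.Quotient.lift_mk ..).trans (aeval_X _ i)

instance isLocalHom_augmentation :
    IsLocalHom (augmentation : TruncPoly F p m →ₐ[F] F) :=
  isLocalHom_of_forall_isNilpotent adjoin_range_xVar
    (Set.forall_mem_range.2 augmentation_xVar)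
    (Set.forall_mem_range.2 fun i => ⟨p, xVar_pow_eq_zero i⟩)

lemma mul_xTau (b : TruncPoly F p m) : b * xTau F p m = augmentation b • xTau F p m :=
  mul_eq_apply_smul_of_forall_mul_eq_zero adjoin_range_xVar
    (Set.forall_mem_range.2 augmentation_xVar) (Set.forall_mem_range.2 xVar_mul_xTau) b

instance charP [CharP F p] : CharP (TruncPoly F p m) p :=
  have : Nontrivial (TruncPoly F p m) := (augmentation (F := F)).toRingHom.domain_nontrivial
  charP_of_injective_algebraMap (algebraMap F (TruncPoly F p m)).injective p

end Augmentation

lemma krylov_xTau_eq_top [Fact p.Prime] [CharP F p]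
    {y : Derivation F (TruncPoly F p m) (TruncPoly F p m)}
    (hy : IsOdometer (p - 1) (xVar F p m) y) :
    krylov (y : Module.End F (TruncPoly F p m)) (xTau F p m) = ⊤ := by
  have hp : p.Prime := Fact.out
  have hfact : ((p - 1).factorial : F) ≠ 0 := by
    rw [Ne, CharP.cast_eq_zero_iff F p, hp.dvd_factorial]
    exact (Nat.sub_one_lt hp.ne_zero).not_ge
  have hone : 1 ∈ krylov (y : Module.End F (TruncPoly F p m)) (xTau F p m) := by
    rw [xTau_eq_partialProd]
    refine hy.one_mem_krylov (fun i => ?_) hfact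
    rw [Nat.sub_one_add_one hp.ne_zero, xVar_pow_eq_zero]
  exact krylov_eq_top_of_isUnit_mem
    (fun b => mul_xTau b ▸ Submodule.smul_mem _ _ self_mem_krylov) isUnit_one hone

end TruncPoly

theorem derived_of_two_generated_le_general
    (p : ℕ) (hp : p.Prime) (F : Type) [Field F] [Infinite F] [CharP F p] (m : ℕ)
    (d x : Derivation F (TruncPoly F p m) (TruncPoly F p m)) (hx : x = xTau F p m • d)
    (y : Derivation F (TruncPoly F p m) (TruncPoly F p m))
    (L : LieSubalgebra F (Derivation F (TruncPoly F p m) (TruncPoly F p m)))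
    (hL : L = LieSubalgebra.lieSpan F _ {x, y}) :
    Module.rank F
      (Submodule.span F
        {z : Derivation F (TruncPoly F p m) (TruncPoly F p m) |
          ∃ a ∈ L, ∃ b ∈ L, ⁅a, b⁆ = z}) ≤ ((p ^ m : ℕ) : Cardinal) := by
  subst hx hL
  have : Fact p.Prime := ⟨hp⟩
  obtain ⟨y₀, hy₀⟩ := TruncPoly.exists_derivation_xVar_eq fun i : Fin m =>
    Fin.partialProd (fun j => xVar F p m j ^ (p - 1)) i.castSucc
  rw [← TruncPoly.finrank_eq (F := F) (p := p) (m := m)]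
  exact rank_derivedSubmodule_lieSpan_pair_le TruncPoly.mul_xTau TruncPoly.adjoin_range_xVar
    TruncPoly.finrank_eq.ge (TruncPoly.krylov_xTau_eq_top hy₀) d y

/-- If `x = x^τ · d` is a homogeneous derivation of maximal degree in the Witt
algebra `W(m,1) = Der_F(B_m)` and `y` is arbitrary, then the derived subalgebra of the Lie
subalgebra generated by `x` and `y` has dimension at most `p^m`. -/
theorem derived_of_two_generated_le
    (p : ℕ) (hp : p.Prime) (hp3 : 3 < p)
    (F : Type) [Field F] [IsAlgClosed F] [CharP F p] (m : ℕ) (hm : 1 ≤ m)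
    (d : Derivation F (TruncPoly F p m) (TruncPoly F p m)) (hd : IsDegNegOne F p m d)
    (x : Derivation F (TruncPoly F p m) (TruncPoly F p m)) (hx : x = xTau F p m • d)
    (y : Derivation F (TruncPoly F p m) (TruncPoly F p m))
    (L : LieSubalgebra F (Derivation F (TruncPoly F p m) (TruncPoly F p m)))
    (hL : L = LieSubalgebra.lieSpan F _ {x, y}) :
    Module.rank F
      (Submodule.span F
        {z : Derivation F (TruncPoly F p m) (TruncPoly F p m) |
          ∃ a ∈ L, ∃ b ∈ L, ⁅a, b⁆ = z}) ≤ ((p ^ m : ℕ) : Cardinal) := by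
  have : Infinite F := IsAlgClosed.instInfinite
  exact derived_of_two_generated_le_general p hp F m d x hx y L hL
end
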